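/- arXiv:2512.14371 — 2 statements merged into one kernel-verified Lean document; each statement's English description precedes it below -/
import Mathlib

section
/- Let κ be an infinite cardinal and let θ be either max{κ, 𝔠} or λ^{ν(λ,κ)} for some infinite cardinal λ ≤ κ. Then there exists a family of 2^κ incomparable path-connected compact Hausdorff spaces, each of weight κ and cardinality θ; moreover, when θ = 𝔠 the family can be chosen so that all of its members are first countable. Furthermore, for every infinite cardinal μ ≤ κ there exists a family of 2^κ incomparable connected compact Hausdorff spaces, each of weight κ and cardinality κ^μ. -/
/-!
The basic rigid objects are *bundles*: finitely many arcs joining two poles. A bundle of at least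
three arcs embeds only into bundles with at least as many arcs (`bundle_mono`). For a well-order `W`
with a largest element and a multiplicity function `m : W → ℕ`, the bundles of `m w` arcs, `w ∈ W`,
are strung together along the compact space of initial segments of `W`, and to make the result path
connected each initial segment is joined to an additional point, the apex, by a segment (a spoke).
This is the compactum `Chain m`.

Embeddings are controlled by *cyclic* sets, that is, nondegenerate connected sets without cut
points. The bundles are cyclic, and every cyclic subset of a chain that avoids the apex is contained
in a single bundle (`cyc_sub_link`). Moreover the apex is the only point in infinitely many of the
cyclic sets formed by a bundle and the spokes at its poles, so that embeddings between infinite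
chains fix it (`apex_fixed`). Hence bundles are mapped into bundles; by induction along `W` and
continuity, bundles are mapped into those of the same index, and multiplicities do not decrease
(`rigid`). Coding the pairs consisting of a set and its complement by multiplicities `3` and `4`
gives `2 ^ #W` chains none of which can be mapped continuously and injectively into another one
(`exists_family`).

The cardinality is adjusted by *resolutions*, which attach a compactum `D j` to each of the points
`p j` of a base, in such a way that the result is again compact; a cyclic subset of a resolution
lies in the base or in one of the attached spaces (`cyc_res`). All the cardinals `θ` in the theorem
have the form `max κ (l ^ ν)` with infinite `l, ν ≤ κ`.

* In general (`exists_large`), a fan with `l ^ ν` spokes is attached to the apex of a chain over a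
  well-order of cardinality `κ`. A fan has no cyclic subsets, so that an embedding between two such
  spaces maps the first chain into the second one.
* If `θ = 𝔠` (`exists_small`), then `κ ≤ 𝔠`, and for a fixed countable well-order pairwise
  non-embeddable, metrizable chains are attached to `κ` points of an interval; the members of the
  family are obtained by choosing at each of these points one out of two chains. The interval has no
  cyclic subsets, and therefore attached chains are mapped into attached chains.

The weight is at most `κ` because the spaces are subspaces of a power of `ℝ` with `κ` factors, and
at least `κ` because they contain `κ` disjoint nonempty open sets.
-/

universe u

open Cardinal Topology

/-- The weight of a topological space: the least cardinality of a basis for its topology. -/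
noncomputable def wt (X : Type u) [TopologicalSpace X] : Cardinal.{u} :=
  sInf { c : Cardinal.{u} | ∃ B : Set (Set X), TopologicalSpace.IsTopologicalBasis B ∧ #B = c }

/-- `nuC l k` is the smallest cardinal `m` with `l ^ m > k`. -/
noncomputable def nuC (l k : Cardinal.{u}) : Cardinal.{u} :=
  sInf { m : Cardinal.{u} | k < l ^ m }

/-- A family of spaces is incomparable if no member embeds into another member. -/
def IncompFamily {ι : Type u} (X : ι → TopCat.{u}) : Prop :=
  ∀ i j : ι, i ≠ j → ∀ f : ↥(X i) → ↥(X j), ¬ IsEmbedding f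

/-! ### Cyclic sets -/

/-- A set is *cyclic* if it is a nondegenerate connected set without cut points. -/
def Cyc {α : Type*} [TopologicalSpace α] (C : Set α) : Prop :=
  C.Nontrivial ∧ IsPreconnected C ∧ ∀ z, IsPreconnected (C \ {z})

theorem Cyc.image {α β : Type*} [TopologicalSpace α] [TopologicalSpace β] {C : Set α}
    (h : Cyc C) {f : α → β} (hf : ContinuousOn f C) (hi : Set.InjOn f C) : Cyc (f '' C) := by
  refine ⟨h.1.image_of_injOn hi, h.2.1.image f hf, fun z => ?_⟩
  by_cases hz : z ∈ f '' C
  · obtain ⟨x, hx, rfl⟩ := hz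
    have : f '' C \ {f x} = f '' (C \ {x}) := by
      ext y
      constructor
      · rintro ⟨⟨x', hx', rfl⟩, hne⟩
        exact ⟨x', ⟨hx', fun h => hne (by rw [Set.mem_singleton_iff.1 h]; rfl)⟩, rfl⟩
      · rintro ⟨x', ⟨hx', hne⟩, rfl⟩
        exact ⟨⟨x', hx', rfl⟩, fun h => hne (hi hx' hx h)⟩
    rw [this]
    exact (h.2.2 x).image f (hf.mono Set.sdiff_subset)
  · rw [Set.sdiff_singleton_eq_self hz]
    exact h.2.1.image f hf

/-- A cyclic set minus a point cannot be split by two open sets. -/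
theorem Cyc.split {α : Type*} [TopologicalSpace α] {C : Set α} (h : Cyc C) (z : α)
    {U V : Set α} (hU : IsOpen U) (hV : IsOpen V)
    (hcov : ∀ x ∈ C, x ≠ z → x ∈ U ∨ x ∈ V) (hd : ∀ x ∈ C, x ∈ U → x ∈ V → False)
    {x y : α} (hx : x ∈ C) (hxz : x ≠ z) (hxU : x ∈ U) (hy : y ∈ C) (hyz : y ≠ z)
    (hyV : y ∈ V) : False := by
  obtain ⟨p, ⟨hp, -⟩, hpU, hpV⟩ := h.2.2 z U V hU hV (fun x hx => hcov x hx.1 hx.2)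
    ⟨x, ⟨hx, hxz⟩, hxU⟩ ⟨y, ⟨hy, hyz⟩, hyV⟩
  exact hd p hp hpU hpV

theorem not_cyc_real (C : Set ℝ) : ¬ Cyc C := by
  intro h
  have key : ∀ x ∈ C, ∀ y ∈ C, x < y → False := by
    intro x hx y hy hxy
    have := (h.2.2 ((x + y) / 2)).Icc_subset (a := x) (b := y)
      ⟨hx, by simp only [Set.mem_singleton_iff]; intro h; linarith⟩
      ⟨hy, by simp only [Set.mem_singleton_iff]; intro h; linarith⟩
    exact (this (show (x + y) / 2 ∈ Set.Icc x y from ⟨by linarith, by linarith⟩)).2 rfl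
  obtain ⟨x, hx, y, hy, hne⟩ := h.1
  rcases lt_or_gt_of_ne hne with hlt | hlt
  · exact key x hx y hy hlt
  · exact key y hy x hx hlt

/-- A cyclic set admits no continuous injection into the line. -/
theorem not_cyc_of_injOn {α : Type*} [TopologicalSpace α] {C : Set α} {f : α → ℝ}
    (hf : ContinuousOn f C) (hi : Set.InjOn f C) : ¬ Cyc C :=
  fun h => not_cyc_real _ (h.image hf hi)

/-- A union of arcs with common endpoints `a ≠ b` is cyclic as soon as no further point lies on
all the arcs. -/
theorem cyc_of_arcs {ι Y : Type*} [TopologicalSpace Y] [Nonempty ι] (α : ι → ℝ → Y) (a b : Y)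
    (hc : ∀ k, Continuous (α k)) (hi : ∀ k, Set.InjOn (α k) (Set.Icc 0 1))
    (h0 : ∀ k, α k 0 = a) (h1 : ∀ k, α k 1 = b) (hab : a ≠ b)
    (hz : ∀ z, z ≠ a → z ≠ b → ∃ k, z ∉ α k '' Set.Icc 0 1) :
    Cyc (⋃ k, α k '' Set.Icc 0 1) := by
  have ha : ∀ k, a ∈ α k '' Set.Icc 0 1 := fun k => ⟨0, by simp, h0 k⟩
  have hb : ∀ k, b ∈ α k '' Set.Icc 0 1 := fun k => ⟨1, by simp, h1 k⟩
  obtain ⟨k₀⟩ := ‹Nonempty ι›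
  have hpc : ∀ k (I : Set ℝ), IsPreconnected I → IsPreconnected (α k '' I) :=
    fun k I hI => hI.image _ (hc k).continuousOn
  have hC : IsPreconnected (⋃ k, α k '' Set.Icc 0 1) :=
    isPreconnected_iUnion ⟨a, Set.mem_iInter.2 ha⟩ fun k => hpc k _ isPreconnected_Icc
  refine ⟨⟨a, Set.mem_iUnion.2 ⟨k₀, ha k₀⟩, b, Set.mem_iUnion.2 ⟨k₀, hb k₀⟩, hab⟩, hC,
    fun z => ?_⟩
  by_cases hza : z = a
  · have : (⋃ k, α k '' Set.Icc 0 1) \ {z} = ⋃ k, α k '' Set.Ioc 0 1 := by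
      subst hza
      ext y
      simp only [Set.mem_sdiff, Set.mem_iUnion, Set.mem_singleton_iff]
      constructor
      · rintro ⟨⟨k, s, hs, rfl⟩, hne⟩
        refine ⟨k, s, ⟨lt_of_le_of_ne hs.1 ?_, hs.2⟩, rfl⟩
        rintro rfl
        exact hne (h0 k)
      · rintro ⟨k, s, hs, rfl⟩
        refine ⟨⟨k, s, ⟨hs.1.le, hs.2⟩, rfl⟩, fun h => hs.1.ne' ?_⟩
        exact hi k ⟨hs.1.le, hs.2⟩ (by simp) (h.trans (h0 k).symm)
    rw [this]
    exact isPreconnected_iUnion ⟨b, Set.mem_iInter.2 fun k => ⟨1, by simp, h1 k⟩⟩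
      fun k => hpc k _ isPreconnected_Ioc
  by_cases hzb : z = b
  · have : (⋃ k, α k '' Set.Icc 0 1) \ {z} = ⋃ k, α k '' Set.Ico 0 1 := by
      subst hzb
      ext y
      simp only [Set.mem_sdiff, Set.mem_iUnion, Set.mem_singleton_iff]
      constructor
      · rintro ⟨⟨k, s, hs, rfl⟩, hne⟩
        refine ⟨k, s, ⟨hs.1, lt_of_le_of_ne hs.2 ?_⟩, rfl⟩
        rintro rfl
        exact hne (h1 k)
      · rintro ⟨k, s, hs, rfl⟩
        refine ⟨⟨k, s, ⟨hs.1, hs.2.le⟩, rfl⟩, fun h => hs.2.ne ?_⟩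
        exact hi k ⟨hs.1, hs.2.le⟩ (by simp) (h.trans (h1 k).symm)
    rw [this]
    exact isPreconnected_iUnion ⟨a, Set.mem_iInter.2 fun k => ⟨0, by simp, h0 k⟩⟩
      fun k => hpc k _ isPreconnected_Ico
  obtain ⟨k₁, hk₁⟩ := hz z hza hzb
  refine isPreconnected_of_forall a ?_
  rintro y ⟨hy, hyz⟩
  obtain ⟨j, s, hs, rfl⟩ := Set.mem_iUnion.1 hy
  by_cases hzs : z ∈ α j '' Set.Icc 0 s
  · -- the arc reaches `z` before `y`: go to `b` and come back to `a` along an arc missing `z`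
    obtain ⟨r, hr, rfl⟩ := hzs
    have hrs : r < s := lt_of_le_of_ne hr.2 (fun h => hyz (by rw [h]; rfl))
    refine ⟨α j '' Set.Icc s 1 ∪ α k₁ '' Set.Icc 0 1, ?_, Or.inr (ha k₁),
      Or.inl ⟨s, ⟨le_rfl, hs.2⟩, rfl⟩, ?_⟩
    · rintro y (⟨q, hq, rfl⟩ | hy')
      · have hq' : q ∈ Set.Icc (0 : ℝ) 1 := ⟨hs.1.trans hq.1, hq.2⟩
        refine ⟨Set.mem_iUnion.2 ⟨j, q, hq', rfl⟩, fun h => ?_⟩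
        have := hi j hq' ⟨hr.1, hr.2.trans hs.2⟩ h
        linarith [hq.1]
      · exact ⟨Set.mem_iUnion.2 ⟨k₁, hy'⟩, fun h => hk₁ (by rwa [← Set.mem_singleton_iff.1 h])⟩
    · exact IsPreconnected.union b ⟨1, ⟨hs.2, le_rfl⟩, h1 j⟩ (hb k₁) (hpc j _ isPreconnected_Icc)
        (hpc k₁ _ isPreconnected_Icc)
  · refine ⟨α j '' Set.Icc 0 s, ?_, ⟨0, ⟨le_rfl, hs.1⟩, h0 j⟩, ⟨s, ⟨hs.1, le_rfl⟩, rfl⟩,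
      hpc j _ isPreconnected_Icc⟩
    rintro y ⟨q, hq, rfl⟩
    refine ⟨Set.mem_iUnion.2 ⟨j, q, ⟨hq.1, hq.2.trans hs.2⟩, rfl⟩, fun h => hzs ?_⟩
    exact ⟨q, hq, h⟩

/-! ### Bundles of arcs -/

/-- The point with first coordinate `t` of the segment joining the two poles `gam 0` and `gam 1` of
a bundle. -/
def gam (t : ℝ) : ℝ × ℝ := (t, 0)

/-- The bundle of arcs `y = k s (1 - s)`, `k ∈ K`, joining the poles `gam 0` and `gam 1`. -/
def bundle (K : Set ℕ) : Set (ℝ × ℝ) :=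
  {p | (0 ≤ p.1 ∧ p.1 ≤ 1) ∧ ∃ k ∈ K, p.2 = k * (p.1 * (1 - p.1))}

/-- The `k`-th arc of a bundle. -/
def arc (k : ℕ) (s : ℝ) : ℝ × ℝ := (s, k * (s * (1 - s)))

theorem continuous_arc (k : ℕ) : Continuous (arc k) := by unfold arc; fun_prop

theorem continuous_gam : Continuous gam := by unfold gam; fun_prop

theorem gam_inj {s t : ℝ} (h : gam s = gam t) : s = t := congrArg Prod.fst h

theorem arc_zero (k : ℕ) : arc k 0 = gam 0 := by simp [arc, gam]

theorem arc_one (k : ℕ) : arc k 1 = gam 1 := by simp [arc, gam]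

theorem bundle_eq (K : Set ℕ) : bundle K = ⋃ k : K, arc k '' Set.Icc 0 1 := by
  ext ⟨s, y⟩
  simp only [bundle, Set.mem_ofPred_eq, Set.mem_iUnion, Set.mem_image, arc, Prod.mk.injEq]
  constructor
  · rintro ⟨hs, k, hk, rfl⟩
    exact ⟨⟨k, hk⟩, s, hs, rfl, rfl⟩
  · rintro ⟨⟨k, hk⟩, s, hs, rfl, rfl⟩
    exact ⟨hs, k, hk, rfl⟩

theorem gam_mem_bundle {K : Set ℕ} (hK : 0 ∈ K) {t : ℝ} (h0 : 0 ≤ t) (h1 : t ≤ 1) :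
    gam t ∈ bundle K := ⟨⟨h0, h1⟩, 0, hK, by simp [gam]⟩

theorem bundle_eq_zero {K : Set ℕ} {p : ℝ × ℝ} (hp : p ∈ bundle K) (h : p.1 = 0) :
    p = gam 0 := by
  obtain ⟨-, k, -, hk⟩ := hp
  ext <;> simp_all [gam]

theorem bundle_eq_one {K : Set ℕ} {p : ℝ × ℝ} (hp : p ∈ bundle K) (h : p.1 = 1) :
    p = gam 1 := by
  obtain ⟨-, k, -, hk⟩ := hp
  ext <;> simp_all [gam]

theorem bundle_inner {K : Set ℕ} {p : ℝ × ℝ} (hp : p ∈ bundle K) (h0 : p ≠ gam 0)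
    (h1 : p ≠ gam 1) : 0 < p.1 ∧ p.1 < 1 :=
  ⟨lt_of_le_of_ne hp.1.1 fun h => h0 (bundle_eq_zero hp h.symm),
    lt_of_le_of_ne hp.1.2 fun h => h1 (bundle_eq_one hp h)⟩

theorem isCompact_bundle {K : Set ℕ} (hK : K.Finite) : IsCompact (bundle K) := by
  have := hK.to_subtype
  rw [bundle_eq]
  exact isCompact_iUnion fun k => isCompact_Icc.image (continuous_arc k)

theorem arc_inj {k l : ℕ} {s : ℝ} (h0 : 0 < s) (h1 : s < 1)
    (h : (k : ℝ) * (s * (1 - s)) = l * (s * (1 - s))) : k = l := by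
  have : s * (1 - s) ≠ 0 := (mul_pos h0 (by linarith)).ne'
  exact_mod_cast mul_right_cancel₀ this h

theorem cyc_bundle {K : Set ℕ} (hK : K.Nontrivial) : Cyc (bundle K) := by
  obtain ⟨k, hk, l, hl, hkl⟩ := hK
  have : Nonempty K := ⟨⟨k, hk⟩⟩
  rw [bundle_eq]
  refine cyc_of_arcs (fun k : K => arc k) (gam 0) (gam 1) (fun k => continuous_arc k)
    (fun k x _ y _ h => congrArg Prod.fst h) (fun k => arc_zero k) (fun k => arc_one k)
    (fun h => zero_ne_one (gam_inj h)) fun z h0 h1 => ?_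
  by_contra! hcon
  obtain ⟨s, hs, hsz⟩ := hcon ⟨k, hk⟩
  obtain ⟨r, hr, hrz⟩ := hcon ⟨l, hl⟩
  have e1 : s = z.1 := congrArg Prod.fst hsz
  have e2 : r = z.1 := congrArg Prod.fst hrz
  have hin := bundle_inner (K := {k}) (p := z) ⟨e1 ▸ hs, k, rfl, by rw [← hsz]; rfl⟩ h0 h1
  refine hkl (arc_inj hin.1 hin.2 ?_)
  have f1 : (k : ℝ) * (s * (1 - s)) = z.2 := congrArg Prod.snd hsz
  have f2 : (l : ℝ) * (r * (1 - r)) = z.2 := congrArg Prod.snd hrz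
  rw [← e1, f1, ← f2, e2, e1]

/-- A connected set of inner points of a bundle lies on one arc. -/
theorem inner_preconnected {K : Set ℕ} {S : Set (ℝ × ℝ)} (hS : IsPreconnected S)
    (hne : S.Nonempty) (hSK : S ⊆ bundle K) (hin : ∀ p ∈ S, 0 < p.1 ∧ p.1 < 1) :
    ∃ k ∈ K, S ⊆ bundle {k} := by
  obtain ⟨p, hp⟩ := hne
  obtain ⟨hp1, k, hk, hpk⟩ := hSK hp
  refine ⟨k, hk, fun q hq => ⟨(hSK hq).1, k, rfl, ?_⟩⟩
  obtain ⟨hq1, l, hl, hql⟩ := hSK hq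
  -- the slope `y / (s (1 - s))` is continuous on inner points with values in `ℕ`
  let φ : ℝ × ℝ → ℝ := fun p => p.2 / (p.1 * (1 - p.1))
  have hpos : ∀ p ∈ S, p.1 * (1 - p.1) ≠ 0 := fun p hp =>
    (mul_pos (hin p hp).1 (by linarith [(hin p hp).2])).ne'
  have hφ : ContinuousOn φ S := by
    refine ContinuousOn.div (by fun_prop) (by fun_prop) hpos
  have him : φ '' S ⊆ Set.range ((↑) : ℕ → ℝ) := by
    rintro _ ⟨r, hr, rfl⟩
    obtain ⟨-, j, -, hj⟩ := hSK hr
    exact ⟨j, by simp only [φ]; rw [hj, mul_div_assoc, div_self (hpos r hr), mul_one]⟩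
  have hsub : (φ '' S).Subsingleton := by
    have hpre := (hS.image φ hφ)
    have key : ∀ x ∈ φ '' S, ∀ y ∈ φ '' S, x < y → False := by
      intro x hx y hy hxy
      obtain ⟨a, rfl⟩ := him hx
      obtain ⟨b, rfl⟩ := him hy
      have hab : (a : ℝ) + 1 ≤ b := by exact_mod_cast (Nat.cast_lt.1 hxy : a < b)
      obtain ⟨c, hc⟩ := him (hpre.Icc_subset hx hy
        (show (a : ℝ) + 1 / 2 ∈ Set.Icc (a : ℝ) b from ⟨by linarith, by linarith⟩))
      have h1 : a < c := by
        have : (a : ℝ) < c := by linarith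
        exact_mod_cast this
      have h2 : c < a + 1 := by
        have : (c : ℝ) < a + 1 := by linarith
        exact_mod_cast this
      omega
    intro x hx y hy
    rcases lt_trichotomy x y with h | h | h
    · exact (key x hx y hy h).elim
    · exact h
    · exact (key y hy x hx h).elim
  have e := hsub ⟨q, hq, rfl⟩ ⟨p, hp, rfl⟩
  simp only [φ] at e
  rw [hpk, mul_div_assoc, div_self (hpos p hp), mul_one, div_eq_iff (hpos q hq)] at e
  exact e

theorem fst_injOn_bundle_singleton (k : ℕ) : Set.InjOn Prod.fst (bundle {k}) := by
  rintro ⟨x, y⟩ ⟨-, k, rfl, hk⟩ ⟨x', y'⟩ ⟨-, l, rfl, hl⟩ h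
  simp only at h hk hl
  subst h
  rw [hk, hl]

/-- A cyclic subset of a bundle contains both poles. -/
theorem poles_mem {K : Set ℕ} {C : Set (ℝ × ℝ)} (hC : Cyc C) (hCK : C ⊆ bundle K) :
    gam 0 ∈ C ∧ gam 1 ∈ C := by
  have key : ∀ e e' : ℝ × ℝ, (e = gam 0 ∧ e' = gam 1 ∨ e = gam 1 ∧ e' = gam 0) → e ∉ C →
      False := by
    intro e e' hee he
    have hin : ∀ p ∈ C \ {e'}, 0 < p.1 ∧ p.1 < 1 := by
      rintro p ⟨hp, hpe⟩
      have hpe' : p ≠ e := fun h => he (h ▸ hp)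
      rcases hee with ⟨rfl, rfl⟩ | ⟨rfl, rfl⟩
      · exact bundle_inner (hCK hp) hpe' hpe
      · exact bundle_inner (hCK hp) hpe hpe'
    have hne : (C \ {e'}).Nonempty := by
      obtain ⟨x, hx, hxe⟩ := hC.1.exists_ne e'
      exact ⟨x, hx, hxe⟩
    obtain ⟨k, -, hk⟩ := inner_preconnected (hC.2.2 e') hne
      (Set.sdiff_subset.trans hCK) hin
    have hCk : C ⊆ bundle {k} := by
      intro p hp
      by_cases hpe : p = e'
      · rcases hee with ⟨rfl, rfl⟩ | ⟨rfl, rfl⟩ <;> subst hpe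
        · exact ⟨by simp [gam], k, rfl, by simp [gam]⟩
        · exact ⟨by simp [gam], k, rfl, by simp [gam]⟩
      · exact hk ⟨hp, hpe⟩
    exact not_cyc_of_injOn continuous_fst.continuousOn
      ((fst_injOn_bundle_singleton k).mono hCk) hC
  constructor
  · by_contra h
    exact key _ _ (Or.inl ⟨rfl, rfl⟩) h
  · by_contra h
    exact key _ _ (Or.inr ⟨rfl, rfl⟩) h

/-- A bundle of at least three arcs embeds only into bundles with at least as many arcs. The poles
are characterized by belonging to all circles formed by two arcs, and so every open arc is mapped
into an open arc, different arcs being mapped into different ones. -/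
theorem bundle_mono {m m' : ℕ} (hm : 3 ≤ m) {φ : ℝ × ℝ → ℝ × ℝ}
    (hc : ContinuousOn φ (bundle (Set.Iio m))) (hi : Set.InjOn φ (bundle (Set.Iio m)))
    (hmap : Set.MapsTo φ (bundle (Set.Iio m)) (bundle (Set.Iio m'))) : m ≤ m' := by
  have hsub : ∀ K ⊆ Set.Iio m, bundle K ⊆ bundle (Set.Iio m) :=
    fun K hK p hp => ⟨hp.1, hp.2.imp fun k hk => ⟨hK hk.1, hk.2⟩⟩
  have hcyc : ∀ K ⊆ Set.Iio m, K.Nontrivial → Cyc (φ '' bundle K) := fun K hK hn =>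
    (cyc_bundle hn).image (hc.mono (hsub K hK)) (hi.mono (hsub K hK))
  have him : ∀ K ⊆ Set.Iio m, φ '' bundle K ⊆ bundle (Set.Iio m') := fun K hK =>
    (hmap.mono_left (hsub K hK)).image_subset
  -- preimages of the poles are poles: any other point is missed by some circle
  have hpole : ∀ z ∈ bundle (Set.Iio m), (φ z = gam 0 ∨ φ z = gam 1) →
      z = gam 0 ∨ z = gam 1 := by
    intro z hz hφz
    by_contra! hcon
    have hzin := bundle_inner hz hcon.1 hcon.2
    obtain ⟨hz1, k, hk, hzk⟩ := id hz
    have : ∃ a b : ℕ, a < 3 ∧ b < 3 ∧ a ≠ b ∧ a ≠ k ∧ b ≠ k := by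
      by_cases h0 : k = 0
      · exact ⟨1, 2, by omega, by omega, by omega, by omega, by omega⟩
      by_cases h1 : k = 1
      · exact ⟨0, 2, by omega, by omega, by omega, by omega, by omega⟩
      · exact ⟨0, 1, by omega, by omega, by omega, by omega, by omega⟩
    obtain ⟨a, b, ha, hb, hab, hak, hbk⟩ := this
    have hK : ({a, b} : Set ℕ) ⊆ Set.Iio m := by
      rintro x (rfl | rfl) <;> exact lt_of_lt_of_le (by assumption) hm
    have hp := poles_mem (hcyc _ hK (Set.nontrivial_pair hab)) (him _ hK)
    have : φ z ∈ φ '' bundle {a, b} := by rcases hφz with h | h <;> rw [h]; exacts [hp.1, hp.2]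
    obtain ⟨y, hy, hyz⟩ := this
    have : y = z := hi (hsub _ hK hy) hz hyz
    subst this
    obtain ⟨-, l, hl, hyl⟩ := hy
    have := arc_inj hzin.1 hzin.2 (hzk.symm.trans hyl)
    rcases hl with rfl | rfl <;> omega
  have h0m : (0 : ℕ) ∈ Set.Iio m := by simp only [Set.mem_Iio]; omega
  have hg0 : gam 0 ∈ bundle (Set.Iio m) := gam_mem_bundle h0m le_rfl zero_le_one
  have hg1 : gam 1 ∈ bundle (Set.Iio m) := gam_mem_bundle h0m zero_le_one le_rfl
  have hIio : (Set.Iio m).Nontrivial := ⟨0, h0m, 1, by simp only [Set.mem_Iio]; omega, by simp⟩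
  have hin : ∀ z ∈ bundle (Set.Iio m), 0 < z.1 → z.1 < 1 → 0 < (φ z).1 ∧ (φ z).1 < 1 := by
    intro z hz h0 h1
    have hnz : ¬ (z = gam 0 ∨ z = gam 1) := by
      rintro (rfl | rfl)
      · simp [gam] at h0
      · simp [gam] at h1
    exact bundle_inner (hmap hz) (fun h => hnz (hpole z hz (Or.inl h)))
      (fun h => hnz (hpole z hz (Or.inr h)))
  -- the poles correspond to each other
  have hpp : ∀ z, (z = gam 0 ∨ z = gam 1) → (φ z = gam 0 ∨ φ z = gam 1) := by
    have hp := poles_mem (hcyc _ le_rfl hIio) (him _ le_rfl)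
    obtain ⟨⟨y, hy, hy0⟩, ⟨y', hy', hy1⟩⟩ := hp
    have hne : y ≠ y' := by
      rintro rfl
      exact zero_ne_one (gam_inj (hy0.symm.trans hy1))
    rcases hpole y hy (Or.inl hy0) with rfl | rfl <;>
    rcases hpole y' hy' (Or.inr hy1) with rfl | rfl
    · exact (hne rfl).elim
    · rintro z (rfl | rfl)
      exacts [Or.inl hy0, Or.inr hy1]
    · rintro z (rfl | rfl)
      exacts [Or.inr hy1, Or.inl hy0]
    · exact (hne rfl).elim
  have hσ : ∀ k : Fin m, ∃ l : Fin m', φ '' bundle {(k : ℕ)} ⊆ bundle {(l : ℕ)} := by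
    intro k
    have hk : ({(k : ℕ)} : Set ℕ) ⊆ Set.Iio m := by
      rintro x rfl; exact k.2
    have hsub' : arc k '' Set.Ioo 0 1 ⊆ bundle (Set.Iio m) := by
      rintro _ ⟨s, hs, rfl⟩
      exact ⟨⟨hs.1.le, hs.2.le⟩, k, k.2, rfl⟩
    have hpre : IsPreconnected (φ '' (arc k '' Set.Ioo 0 1)) :=
      (isPreconnected_Ioo.image _ (continuous_arc k).continuousOn).image _ (hc.mono hsub')
    obtain ⟨l, hl, hlsub⟩ := inner_preconnected hpre
      ((Set.nonempty_Ioo.2 zero_lt_one).image _ |>.image _) (hmap.mono_left hsub').image_subset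
      (by
        rintro _ ⟨_, ⟨s, hs, rfl⟩, rfl⟩
        exact hin _ (hsub' ⟨s, hs, rfl⟩) hs.1 hs.2)
    refine ⟨⟨l, hl⟩, ?_⟩
    rintro _ ⟨z, hz, rfl⟩
    by_cases hzp : z = gam 0 ∨ z = gam 1
    · rcases hpp z hzp with h | h <;> rw [h]
      · exact ⟨by simp [gam], l, rfl, by simp [gam]⟩
      · exact ⟨by simp [gam], l, rfl, by simp [gam]⟩
    · push Not at hzp
      have hzi := bundle_inner hz hzp.1 hzp.2
      refine hlsub ⟨z, ⟨z.1, hzi, ?_⟩, rfl⟩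
      obtain ⟨-, k', hk', hz2⟩ := hz
      rw [Set.mem_singleton_iff] at hk'
      subst hk'
      exact Prod.ext rfl hz2.symm
  choose σ hσ using hσ
  have hinj : Function.Injective σ := by
    intro k l hkl
    by_contra hne
    have hne' : (k : ℕ) ≠ l := fun h => hne (Fin.ext h)
    have hK : ({(k : ℕ), (l : ℕ)} : Set ℕ) ⊆ Set.Iio m := by
      rintro x (rfl | rfl)
      exacts [k.2, l.2]
    have hC := hcyc _ hK (Set.nontrivial_pair hne')
    refine not_cyc_of_injOn continuous_fst.continuousOn
      ((fst_injOn_bundle_singleton (σ k)).mono ?_) hC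
    rintro _ ⟨z, ⟨hz1, j, hj, hz2⟩, rfl⟩
    rcases hj with rfl | rfl
    · exact hσ k ⟨z, ⟨hz1, _, rfl, hz2⟩, rfl⟩
    · rw [hkl]
      exact hσ l ⟨z, ⟨hz1, _, rfl, hz2⟩, rfl⟩
  simpa using Fintype.card_le_of_injective σ hinj

/-! ### Chains of bundles with a cone over the vertices -/

section Chain

/-- If the points of a cyclic set `C` of height less than `1` are partitioned by the open sets `G`
and `H`, and the height is injective on those in `G`, then there are no points in `G`. For sets
avoiding the apex, this is used to exclude the spokes one by one. -/
theorem spoke_avoid {W : Type*} {C : Set (ℝ × (W → ℝ × ℝ))} (hC : Cyc C)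
    {G H : Set (ℝ × (W → ℝ × ℝ))}
    (hG : IsOpen G) (hH : IsOpen H) (hGH : ∀ p ∈ C, p.1 < 1 → p ∈ G ∨ p ∈ H)
    (hd : ∀ p ∈ C, p.1 < 1 → p ∈ G → p ∈ H → False)
    (hu : ∀ p ∈ C, ∀ q ∈ C, p.1 < 1 → p ∈ G → q ∈ G → p.1 = q.1 → p = q)
    {p : ℝ × (W → ℝ × ℝ)} (hp : p ∈ C) (hp1 : p.1 < 1) (hpG : p ∈ G) : False := by
  -- cutting at height `r` separates the part of the spoke below `r` from all the rest
  have key : ∀ a ∈ C, ∀ b ∈ C, ∀ r : ℝ, a.1 < r → r < 1 → a ∈ G → (r < b.1 ∨ b ∈ H) → False := by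
    intro a ha b hb r har hr haG hbH
    have hUo : IsOpen {x : ℝ × (W → ℝ × ℝ) | x.1 < r ∧ x ∈ G} :=
      (isOpen_lt continuous_fst continuous_const).inter hG
    have hVo : IsOpen {x : ℝ × (W → ℝ × ℝ) | r < x.1 ∨ (x.1 < 1 ∧ x ∈ H)} :=
      (isOpen_lt continuous_const continuous_fst).union
        ((isOpen_lt continuous_fst continuous_const).inter hH)
    have hbV : b ∈ {x : ℝ × (W → ℝ × ℝ) | r < x.1 ∨ (x.1 < 1 ∧ x ∈ H)} := by
      rcases hbH with h | h
      · exact Or.inl h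
      · rcases lt_or_ge r b.1 with h' | h'
        · exact Or.inl h'
        · exact Or.inr ⟨lt_of_le_of_lt h' hr, h⟩
    have hUV : ∀ x ∈ C, x ∈ {x : ℝ × (W → ℝ × ℝ) | x.1 < r ∧ x ∈ G} →
        x ∈ {x : ℝ × (W → ℝ × ℝ) | r < x.1 ∨ (x.1 < 1 ∧ x ∈ H)} → False := by
      rintro x hx ⟨h1, h2⟩ (h3 | ⟨h3, h4⟩)
      · exact lt_asymm h1 h3
      · exact hd x hx h3 h2 h4
    by_cases hz : ∃ z ∈ C, z.1 = r ∧ z ∈ G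
    · obtain ⟨z, hz, hzr, hzG⟩ := hz
      refine hC.split z hUo hVo ?_ hUV ha ?_ ⟨har, haG⟩ hb ?_ hbV
      · intro x hx hxz
        rcases lt_trichotomy x.1 r with h | h | h
        · exact (hGH x hx (h.trans hr)).imp (fun h' => ⟨h, h'⟩) fun h' => Or.inr ⟨h.trans hr, h'⟩
        · refine Or.inr (Or.inr ⟨h ▸ hr, (hGH x hx (h ▸ hr)).resolve_left fun h' => hxz ?_⟩)
          exact hu x hx z hz (h ▸ hr) h' hzG (h.trans hzr.symm)
        · exact Or.inr (Or.inl h)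
      · rintro rfl
        exact har.ne hzr
      · rintro rfl
        exact hUV b hb |> fun _ => by
          rcases hbH with h | h
          · exact h.ne' hzr
          · exact hd b hb (hzr ▸ hr) hzG h
    · obtain ⟨x, hx, hx1, hx2⟩ := hC.2.1 _ _ hUo hVo (fun x hx => by
        rcases lt_trichotomy x.1 r with h | h | h
        · exact (hGH x hx (h.trans hr)).imp (fun h' => ⟨h, h'⟩) fun h' => Or.inr ⟨h.trans hr, h'⟩
        · exact Or.inr (Or.inr ⟨h ▸ hr, (hGH x hx (h ▸ hr)).resolve_left
            fun h' => hz ⟨x, hx, h, h'⟩⟩)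
        · exact Or.inr (Or.inl h)) ⟨a, ha, har, haG⟩ ⟨b, hb, hbV⟩
      exact hUV x hx hx1 hx2
  obtain ⟨q, hq, hqp⟩ := hC.1.exists_ne p
  rcases lt_or_ge q.1 1 with hq1 | hq1
  · rcases hGH q hq hq1 with hqG | hqH
    · rcases lt_trichotomy p.1 q.1 with h | h | h
      · exact key p hp q hq ((p.1 + q.1) / 2) (by linarith) (by linarith) hpG
          (Or.inl (by linarith))
      · exact hqp (hu q hq p hp hq1 hqG hpG h.symm)
      · exact key q hq p hp ((p.1 + q.1) / 2) (by linarith) (by linarith) hqG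
          (Or.inl (by linarith))
    · exact key p hp q hq ((p.1 + 1) / 2) (by linarith) (by linarith) hpG (Or.inr hqH)
  · exact key p hp q hq ((p.1 + 1) / 2) (by linarith) (by linarith) hpG (Or.inl (by linarith))

variable {W : Type*} [LinearOrder W]

/-- The space attached to a well-order `W` and a multiplicity function `m`.

At height `p.1 = 1` it is a chain of bundles: the bundle of index `w` has `m w` arcs and runs from
the vertex `Set.Iio w` to the vertex `Set.Iic w`, where an initial segment `A` of `W` is encoded as
the point with coordinates `gam 1` on `A` and `gam 0` off `A`. Each vertex `A` is joined to the
apex `0` by the spoke of the points of height `t` with coordinates `gam t` on `A` and `gam 0`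
off `A`. -/
def Chain (m : W → ℕ) : Set (ℝ × (W → ℝ × ℝ)) :=
  {p | (0 ≤ p.1 ∧ p.1 ≤ 1) ∧ (∀ w, p.2 w ∈ bundle (Set.Iio (m w))) ∧
    (∀ u w, u < w → p.2 w = gam 0 ∨ p.2 u = gam p.1) ∧
    (p.1 = 1 ∨ ∀ w, p.2 w = gam 0 ∨ p.2 w = gam p.1)}

/-- The bundle of index `w` together with the spokes at its two poles. -/
def cell (m : W → ℕ) (w : W) : Set (ℝ × (W → ℝ × ℝ)) :=
  {p | p ∈ Chain m ∧ (∀ u < w, p.2 u = gam p.1) ∧ ∀ u, w < u → p.2 u = gam 0}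

/-- The bundle of index `w` in the chain. -/
def link (m : W → ℕ) (w : W) : Set (ℝ × (W → ℝ × ℝ)) :=
  {p | p ∈ cell m w ∧ p.1 = 1}

/-- The parametrization of `cell m w` by the height and the coordinate of index `w`. -/
def emb (w : W) (q : ℝ × (ℝ × ℝ)) : ℝ × (W → ℝ × ℝ) :=
  (q.1, fun u => if u < w then gam q.1 else if u = w then q.2 else gam 0)

/-- The bundle on `K` at height `1`, with a further arc through the origin joining its poles. -/
def thick (K : Set ℕ) : Set (ℝ × (ℝ × ℝ)) :=
  {q | (0 ≤ q.1 ∧ q.1 ≤ 1) ∧ q.2 ∈ bundle K ∧ (q.1 = 1 ∨ q.2 = gam 0 ∨ q.2 = gam q.1)}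

theorem cyc_thick {K : Set ℕ} (hK : (0 : ℕ) ∈ K) : Cyc (thick K) := by
  let α : Option K → ℝ → ℝ × (ℝ × ℝ) := fun o s =>
    o.elim (|1 - 2 * s|, gam (max 0 (2 * s - 1))) (fun k => (1, arc k s))
  have hU : thick K = ⋃ o, α o '' Set.Icc 0 1 := by
    ext ⟨t, p⟩
    rw [Set.mem_iUnion]
    constructor
    · rintro ⟨⟨h0, h1⟩, hp, h⟩
      simp only at h0 h1 hp h
      rcases h with rfl | rfl | rfl
      · rw [bundle_eq, Set.mem_iUnion] at hp
        obtain ⟨k, s, hs, rfl⟩ := hp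
        exact ⟨some k, s, hs, rfl⟩
      · refine ⟨none, (1 - t) / 2, ⟨by linarith, by linarith⟩, ?_⟩
        refine Prod.ext ?_ ?_
        · change |1 - 2 * ((1 - t) / 2)| = t
          rw [show 1 - 2 * ((1 - t) / 2) = t by ring, abs_of_nonneg h0]
        · change gam (max 0 (2 * ((1 - t) / 2) - 1)) = gam 0
          rw [show 2 * ((1 - t) / 2) - 1 = -t by ring, max_eq_left (by linarith)]
      · refine ⟨none, (1 + t) / 2, ⟨by linarith, by linarith⟩, ?_⟩
        refine Prod.ext ?_ ?_
        · change |1 - 2 * ((1 + t) / 2)| = t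
          rw [show 1 - 2 * ((1 + t) / 2) = -t by ring, abs_neg, abs_of_nonneg h0]
        · change gam (max 0 (2 * ((1 + t) / 2) - 1)) = gam t
          rw [show 2 * ((1 + t) / 2) - 1 = t by ring, max_eq_right h0]
    · rintro ⟨o, s, hs, he⟩
      rw [← he]
      cases o with
      | none =>
        refine ⟨⟨abs_nonneg _, abs_le.2 ⟨by linarith [hs.2], by linarith [hs.1]⟩⟩,
          gam_mem_bundle hK (le_max_left _ _) (max_le zero_le_one (by linarith [hs.2])), Or.inr ?_⟩
        change gam (max 0 (2 * s - 1)) = gam 0 ∨ gam (max 0 (2 * s - 1)) = gam |1 - 2 * s|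
        rcases le_total (2 * s - 1) 0 with h | h
        · left; rw [max_eq_left h]
        · right; rw [max_eq_right h, abs_sub_comm, abs_of_nonneg h]
      | some k => exact ⟨⟨zero_le_one, le_rfl⟩, ⟨hs, k, k.2, rfl⟩, Or.inl rfl⟩
  rw [hU]
  refine cyc_of_arcs α (1, gam 0) (1, gam 1) ?_ ?_ ?_ ?_ ?_ ?_
  · rintro (_ | k)
    · exact (by fun_prop : Continuous fun s : ℝ => |1 - 2 * s|).prodMk
        (continuous_gam.comp (by fun_prop))
    · exact continuous_const.prodMk (continuous_arc k)
  · rintro (_ | k) x hx y hy h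
    · have h1 : |1 - 2 * x| = |1 - 2 * y| := congrArg Prod.fst h
      have h2 : max 0 (2 * x - 1) = max 0 (2 * y - 1) := gam_inj (congrArg Prod.snd h)
      rcases le_total (2 * x - 1) 0 with hx' | hx' <;> rcases le_total (2 * y - 1) 0 with hy' | hy'
      · rw [abs_of_nonneg (by linarith), abs_of_nonneg (by linarith)] at h1
        linarith
      · rw [max_eq_left hx', max_eq_right hy'] at h2
        rw [abs_of_nonneg (by linarith), abs_of_nonpos (by linarith)] at h1
        linarith
      · rw [max_eq_right hx', max_eq_left hy'] at h2
        rw [abs_of_nonpos (by linarith), abs_of_nonneg (by linarith)] at h1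
        linarith
      · rw [max_eq_right hx', max_eq_right hy'] at h2
        linarith
    · exact congrArg (fun q => q.2.1) h
  · rintro (_ | k)
    · change (|1 - 2 * (0 : ℝ)|, gam (max 0 (2 * 0 - 1))) = (1, gam 0)
      norm_num
    · exact Prod.ext rfl (arc_zero k)
  · rintro (_ | k)
    · change (|1 - 2 * (1 : ℝ)|, gam (max 0 (2 * 1 - 1))) = (1, gam 1)
      norm_num
    · exact Prod.ext rfl (arc_one k)
  · exact fun h => zero_ne_one (gam_inj (congrArg Prod.snd h))
  · intro z h0 h1
    by_contra! hcon
    obtain ⟨s, hs, hsz⟩ := hcon (some ⟨0, hK⟩)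
    obtain ⟨r, hr, hrz⟩ := hcon none
    have hz1 : z.1 = 1 := by rw [← hsz]; rfl
    have h2 : |1 - 2 * r| = 1 := (congrArg Prod.fst hrz).trans hz1
    have h3 : z.2 = gam (max 0 (2 * r - 1)) := by rw [← hrz]; rfl
    rcases abs_choice (1 - 2 * r) with h | h
    · have : r = 0 := by linarith
      subst this
      exact h0 (Prod.ext hz1 (by rw [h3]; norm_num))
    · have : r = 1 := by linarith
      subst this
      exact h1 (Prod.ext hz1 (by rw [h3]; norm_num))

theorem continuous_emb (w : W) : Continuous (emb w) := by
  refine continuous_fst.prodMk (continuous_pi fun u => ?_)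
  split_ifs
  · exact continuous_gam.comp continuous_fst
  · exact continuous_snd
  · exact continuous_const

theorem emb_snd_self (w : W) (q : ℝ × (ℝ × ℝ)) : (emb w q).2 w = q.2 := by simp [emb]

theorem emb_injective (w : W) : Function.Injective (emb w) := fun q q' h => by
  have h1 : (emb w q).1 = (emb w q').1 := by rw [h]
  exact Prod.ext h1 (by rw [← emb_snd_self w q, h, emb_snd_self])

theorem eq_emb {m : W → ℕ} {w : W} {p : ℝ × (W → ℝ × ℝ)} (hp : p ∈ cell m w) :
    p = emb w (p.1, p.2 w) := by
  refine Prod.ext rfl (funext fun u => ?_)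
  simp only [emb]
  split_ifs with h1 h2
  · exact hp.2.1 u h1
  · rw [h2]
  · exact hp.2.2 u (lt_of_le_of_ne (not_lt.1 h1) (Ne.symm h2))

theorem emb_mem_cell {m : W → ℕ} (hm : ∀ w, 0 < m w) {w : W} {q : ℝ × (ℝ × ℝ)}
    (hq : q ∈ thick (Set.Iio (m w))) : emb w q ∈ cell m w := by
  obtain ⟨⟨h0, h1⟩, hb, ht⟩ := hq
  refine ⟨⟨⟨h0, h1⟩, fun u => ?_, fun u v huv => ?_, ?_⟩, fun u hu => ?_, fun u hu => ?_⟩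
  · simp only [emb]
    split_ifs with h1' h2
    · exact gam_mem_bundle (hm u) h0 h1
    · exact h2 ▸ hb
    · exact gam_mem_bundle (hm u) le_rfl zero_le_one
  · rcases lt_or_ge u w with h | h
    · right; simp [emb, h]
    · left; simp [emb, not_lt.2 (h.trans huv.le), (lt_of_le_of_lt h huv).ne']
  · rcases ht with h | h
    · exact Or.inl h
    · refine Or.inr fun u => ?_
      simp only [emb]
      split_ifs with h1' h2
      · exact Or.inr rfl
      · exact h
      · exact Or.inl rfl
  · simp [emb, hu]
  · simp [emb, not_lt.2 hu.le, hu.ne']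

theorem cell_eq {m : W → ℕ} (hm : ∀ w, 0 < m w) (w : W) :
    cell m w = emb w '' thick (Set.Iio (m w)) := by
  ext p
  constructor
  · intro hp
    exact ⟨_, ⟨hp.1.1, hp.1.2.1 w, hp.1.2.2.2.imp_right fun h => h w⟩, (eq_emb hp).symm⟩
  · rintro ⟨q, hq, rfl⟩
    exact emb_mem_cell hm hq

theorem link_eq {m : W → ℕ} (hm : ∀ w, 0 < m w) (w : W) :
    link m w = (fun p => emb w (1, p)) '' bundle (Set.Iio (m w)) := by
  ext p
  constructor
  · rintro ⟨hp, h1⟩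
    exact ⟨p.2 w, hp.1.2.1 w, by rw [← h1]; exact (eq_emb hp).symm⟩
  · rintro ⟨q, hq, rfl⟩
    exact ⟨emb_mem_cell hm ⟨⟨zero_le_one, le_rfl⟩, hq, Or.inl rfl⟩, rfl⟩

theorem cyc_cell {m : W → ℕ} (hm : ∀ w, 0 < m w) (w : W) : Cyc (cell m w) := by
  rw [cell_eq hm]
  exact (cyc_thick (hm w)).image (continuous_emb w).continuousOn (emb_injective w).injOn

theorem continuous_emb_one (w : W) : Continuous fun p => emb w (1, p) :=
  (continuous_emb w).comp (by fun_prop)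

theorem emb_one_injective (w : W) : Function.Injective fun p => emb w (1, p) :=
  fun _ _ h => congrArg Prod.snd (emb_injective w h)

theorem cyc_link {m : W → ℕ} (hm : ∀ w, 3 ≤ m w) (w : W) : Cyc (link m w) := by
  rw [link_eq fun w => lt_of_lt_of_le (by norm_num) (hm w)]
  refine Cyc.image (cyc_bundle ⟨0, ?_, 1, ?_, by simp⟩) (continuous_emb_one w).continuousOn
    (emb_one_injective w).injOn
  · simp only [Set.mem_Iio]; linarith [hm w]
  · simp only [Set.mem_Iio]; linarith [hm w]

theorem zero_mem_cell {m : W → ℕ} (hm : ∀ w, 0 < m w) (w : W) : 0 ∈ cell m w := by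
  refine ⟨⟨by simp, fun w => gam_mem_bundle (hm w) le_rfl zero_le_one, fun _ _ _ => Or.inl rfl,
    Or.inr fun _ => Or.inl rfl⟩, fun _ _ => rfl, fun _ _ => rfl⟩

theorem eq_zero_of_fst {m : W → ℕ} {p : ℝ × (W → ℝ × ℝ)} (hp : p ∈ Chain m) (h : p.1 = 0) :
    p = 0 := by
  refine Prod.ext h (funext fun w => ?_)
  rcases hp.2.2.2 with h' | h'
  · exact (zero_ne_one (h.symm.trans h')).elim
  · rcases h' w with h' | h'
    · exact h'
    · rw [h', h]
      rfl

/-- Cells that are not adjacent meet only in the apex. -/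
theorem cell_inter {m : W → ℕ} {w u v : W} (hwu : w < u) (huv : u < v)
    {p : ℝ × (W → ℝ × ℝ)} (h1 : p ∈ cell m w) (h2 : p ∈ cell m v) : p = 0 :=
  eq_zero_of_fst h1.1 (gam_inj ((h2.2.1 u huv).symm.trans (h1.2.2 u hwu)))

theorem link_inter {m : W → ℕ} {w u : W} (hwu : w < u) {p q : ℝ × (W → ℝ × ℝ)}
    (hp : p ∈ link m w) (hp' : p ∈ link m u) (hq : q ∈ link m w) (hq' : q ∈ link m u) :
    p = q := by
  have e : p.2 w = q.2 w := by
    rw [hp'.1.2.1 w hwu, hq'.1.2.1 w hwu, hp.2, hq.2]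
  rw [eq_emb hp.1, eq_emb hq.1, e, hp.2, hq.2]

theorem cell_cover [WellFoundedLT W] [OrderTop W] {m : W → ℕ} {p : ℝ × (W → ℝ × ℝ)}
    (hp : p ∈ Chain m) : ∃ w, p ∈ cell m w := by
  by_cases h : ∃ w, p.2 w ≠ gam p.1
  · obtain ⟨w, hw, hmin⟩ := WellFounded.has_min (wellFounded_lt (α := W))
      {w | p.2 w ≠ gam p.1} h
    exact ⟨w, hp, fun u hu => by_contra fun h => hmin u h hu,
      fun u hu => (hp.2.2.1 w u hu).resolve_right hw⟩
  · push Not at h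
    exact ⟨⊤, hp, fun u _ => h u, fun u hu => (not_top_lt hu).elim⟩

/-- The cyclic sets avoiding the apex are contained in the links. -/
theorem cyc_sub_link [WellFoundedLT W] [OrderTop W] {m : W → ℕ} {C : Set (ℝ × (W → ℝ × ℝ))}
    (hC : Cyc C) (hCm : C ⊆ Chain m) (hC0 : 0 ∉ C) : ∃ w, C ⊆ link m w := by
  have h0 : ∀ p ∈ C, 0 < p.1 ∧ p.1 ≤ 1 := fun p hp =>
    ⟨lt_of_le_of_ne (hCm hp).1.1 fun h => hC0 (eq_zero_of_fst (hCm hp) h.symm ▸ hp),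
      (hCm hp).1.2⟩
  have hspoke : ∀ p ∈ C, p.1 < 1 → ∀ w, p.2 w = gam 0 ∨ p.2 w = gam p.1 := fun p hp h =>
    (hCm hp).2.2.2.resolve_left h.ne
  have hne : ∀ p ∈ C, gam 0 ≠ gam p.1 := fun p hp h => (h0 p hp).1.ne (gam_inj h)
  -- the spokes are excluded one after the other, in the order of their vertices
  have hcoord : ∀ w, ∀ p ∈ C, p.1 < 1 → p.2 w = gam p.1 := by
    intro w
    induction w using WellFoundedLT.induction with
    | ind w ih =>
      intro p hp hp1
      by_contra hpw
      refine spoke_avoid hC (G := {p | p.2 w ≠ gam p.1}) (H := {p | p.2 w ≠ gam 0})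
        ?_ ?_ ?_ ?_ ?_ hp hp1 hpw
      · exact isOpen_ne_fun ((continuous_apply w).comp continuous_snd)
          (continuous_gam.comp continuous_fst)
      · exact isOpen_ne_fun ((continuous_apply w).comp continuous_snd) continuous_const
      · intro q hq hq1
        by_contra! hcon
        obtain ⟨h1, h2⟩ := hcon
        exact hne q hq ((not_not.1 h2).symm.trans (not_not.1 h1))
      · intro q hq hq1 h1 h2
        exact (hspoke q hq hq1 w).elim h2 h1
      · intro a ha b hb ha1 haG hbG hab
        refine Prod.ext hab (funext fun u => ?_)
        have hb1 : b.1 < 1 := hab ▸ ha1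
        rcases lt_trichotomy u w with h | rfl | h
        · rw [ih u h a ha ha1, ih u h b hb hb1, hab]
        · rw [(hspoke a ha ha1 u).resolve_right haG, (hspoke b hb hb1 u).resolve_right hbG]
        · rw [((hCm ha).2.2.1 w u h).resolve_right haG, ((hCm hb).2.2.1 w u h).resolve_right hbG]
  have ht : ∀ p ∈ C, p.1 = 1 := by
    intro p hp
    by_contra hp1
    refine spoke_avoid hC (G := Set.univ) (H := ∅) isOpen_univ isOpen_empty
      (fun _ _ _ => Or.inl trivial) (fun _ _ _ _ h => h) ?_ hp (lt_of_le_of_ne (h0 p hp).2 hp1)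
      trivial
    intro a ha b hb ha1 _ _ hab
    exact Prod.ext hab (funext fun u => by
      rw [hcoord u a ha ha1, hcoord u b hb (hab ▸ ha1), hab])
  obtain ⟨w, hw, hmin⟩ := WellFounded.has_min (wellFounded_lt (α := W))
    {w | ∀ p ∈ C, ∀ u, w < u → p.2 u = gam 0} ⟨⊤, fun p _ u hu => (not_top_lt hu).elim⟩
  refine ⟨w, fun p hp => ⟨⟨hCm hp, fun v hv => ?_, fun u hu => hw p hp u hu⟩, ht p hp⟩⟩
  -- some point of `C` lies above the vertex `Set.Iic v`, hence all of `C` does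
  by_contra hpv
  rw [ht p hp] at hpv
  have : ¬ ∀ p ∈ C, ∀ u, v < u → p.2 u = gam 0 := fun h => hmin v h hv
  push Not at this
  obtain ⟨q, hq, u, hvu, hqu⟩ := this
  have hq1 : q.2 v = gam 1 := by
    rw [← ht q hq]
    exact ((hCm hq).2.2.1 v u hvu).resolve_left hqu
  refine hC.split (emb v (1, gam 1)) (U := {x | x.2 v ≠ gam 1})
    (V := ⋃ u : Set.Ioi v, {x | x.2 u ≠ gam 0}) ?_ ?_ ?_ ?_ hp ?_ hpv hq ?_ ?_
  · exact isOpen_ne_fun ((continuous_apply v).comp continuous_snd) continuous_const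
  · exact isOpen_iUnion fun u =>
      isOpen_ne_fun ((continuous_apply _).comp continuous_snd) continuous_const
  · intro x hx hxz
    by_contra! hcon
    obtain ⟨h1, h2⟩ := hcon
    simp only [Set.mem_ofPred_eq, not_not] at h1
    simp only [Set.mem_iUnion, Set.mem_ofPred_eq, not_exists, not_not] at h2
    refine hxz ?_
    have hxc : x ∈ cell m v := by
      refine ⟨hCm hx, fun y hy => ?_, fun y hy => h2 ⟨y, hy⟩⟩
      refine ((hCm hx).2.2.1 y v hy).resolve_left fun h => ?_
      exact zero_ne_one (gam_inj (h.symm.trans h1))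
    rw [eq_emb hxc, h1, ht x hx]
  · intro x hx h1 h2
    obtain ⟨⟨y, hy⟩, hxy⟩ := Set.mem_iUnion.1 h2
    refine h1 ?_
    have := ((hCm hx).2.2.1 v y hy).resolve_left hxy
    rwa [ht x hx] at this
  · rintro rfl
    exact hpv (emb_snd_self _ _)
  · rintro rfl
    apply hqu
    simp [emb, not_lt.2 hvu.le, hvu.ne']
  · exact Set.mem_iUnion.2 ⟨⟨u, hvu⟩, hqu⟩

end Chain

/-! ### Embeddings between chains -/

section Rigid

variable {W : Type*} [LinearOrder W]

theorem poles_mem_link {m : W → ℕ} {D : Set (ℝ × (W → ℝ × ℝ))} {w : W} (hD : Cyc D)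
    (h : D ⊆ link m w) : emb w (1, gam 0) ∈ D ∧ emb w (1, gam 1) ∈ D := by
  have hemb : ∀ p ∈ D, p = emb w (1, p.2 w) := fun p hp => by
    have := eq_emb (h hp).1
    rwa [(h hp).2] at this
  have hc : Cyc ((fun p : ℝ × (W → ℝ × ℝ) => p.2 w) '' D) := by
    refine hD.image ((continuous_apply w).comp continuous_snd).continuousOn ?_
    intro p hp q hq hpq
    rw [hemb p hp, hemb q hq, show p.2 w = q.2 w from hpq]
  obtain ⟨⟨p, hp, hp0⟩, ⟨q, hq, hq1⟩⟩ := poles_mem hc (K := Set.Iio (m w)) (by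
    rintro _ ⟨p, hp, rfl⟩
    exact (h hp).1.1.2.1 w)
  refine ⟨?_, ?_⟩
  · rw [← hp0, ← hemb p hp]; exact hp
  · rw [← hq1, ← hemb q hq]; exact hq

theorem link_inter_ne {m : W → ℕ} {w u : W} (hwu : w ≠ u) {p q : ℝ × (W → ℝ × ℝ)}
    (hp : p ∈ link m w) (hp' : p ∈ link m u) (hq : q ∈ link m w) (hq' : q ∈ link m u) :
    p = q := by
  rcases lt_or_gt_of_ne hwu with h | h
  · exact link_inter h hp hp' hq hq'
  · exact link_inter h hp' hp hq' hq

theorem pole_of_mem_links {m : W → ℕ} {w u : W} (hwu : w ≠ u) {p : ℝ × (W → ℝ × ℝ)}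
    (hp : p ∈ link m w) (hp' : p ∈ link m u) :
    p = emb w (1, gam 0) ∨ p = emb w (1, gam 1) := by
  have e := eq_emb hp.1
  rw [hp.2] at e
  rcases lt_or_gt_of_ne hwu with h | h
  · right
    rw [e, hp'.1.2.1 w h, hp'.2]
  · left
    rw [e, hp'.1.2.2 w h]

theorem poles_ne (w : W) : emb w (1, gam 0) ≠ emb w (1, gam 1) := fun h =>
  zero_ne_one (gam_inj (emb_one_injective w h))

variable [WellFoundedLT W] [OrderTop W] {m m' : W → ℕ}
  {F : ℝ × (W → ℝ × ℝ) → ℝ × (W → ℝ × ℝ)}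

/-- An embedding between chains maps the apex to the apex: the apex is the only point that lies in
infinitely many cells. -/
theorem apex_fixed [Infinite W] (hm : ∀ w, 3 ≤ m w)
    (hc : ContinuousOn F (Chain m)) (hi : Set.InjOn F (Chain m))
    (hmap : Set.MapsTo F (Chain m) (Chain m')) : F 0 = 0 := by
  have hm0 : ∀ w, 0 < m w := fun w => lt_of_lt_of_le (by norm_num) (hm w)
  have hcell : ∀ w, cell m w ⊆ Chain m := fun w p hp => hp.1
  have hlink : ∀ w, link m w ⊆ cell m w := fun w p hp => hp.1
  by_contra hF
  have bad : ∀ w u v, w < u → u < v → (∃ z ∈ cell m w, F z = 0) → (∃ z ∈ cell m v, F z = 0) →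
      False := by
    rintro w u v hwu huv ⟨z, hz, hz0⟩ ⟨y, hy, hy0⟩
    have : z = y := hi (hcell w hz) (hcell v hy) (hz0.trans hy0.symm)
    subst this
    rw [cell_inter hwu huv hz hy] at hz0
    exact hF hz0
  have sub : ∀ w, (∀ z ∈ cell m w, F z ≠ 0) → ∃ l, F '' cell m w ⊆ link m' l := fun w hw =>
    cyc_sub_link ((cyc_cell hm0 w).image (hc.mono (hcell w)) (hi.mono (hcell w)))
      (by rintro _ ⟨z, hz, rfl⟩; exact hmap (hcell w hz))
      (by rintro ⟨z, hz, hz0⟩; exact hw z hz hz0)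
  have poles : ∀ w l, F '' cell m w ⊆ link m' l →
      emb l (1, gam 0) ∈ F '' link m w ∧ emb l (1, gam 1) ∈ F '' link m w := fun w l hl =>
    poles_mem_link ((cyc_link hm w).image (hc.mono ((hlink w).trans (hcell w)))
      (hi.mono ((hlink w).trans (hcell w)))) ((Set.image_mono (hlink w)).trans hl)
  have good : ∀ w u, w ≠ u → (∀ z ∈ cell m w, F z ≠ 0) → (∀ z ∈ cell m u, F z ≠ 0) → False := by
    intro w u hwu hw hu
    obtain ⟨l, hl⟩ := sub w hw
    obtain ⟨k, hk⟩ := sub u hu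
    have h0l : F 0 ∈ link m' l := hl ⟨0, zero_mem_cell hm0 w, rfl⟩
    have h0k : F 0 ∈ link m' k := hk ⟨0, zero_mem_cell hm0 u, rfl⟩
    obtain ⟨hpl, hql⟩ := poles w l hl
    by_cases hlk : l = k
    · subst hlk
      obtain ⟨hpk, hqk⟩ := poles u l hk
      obtain ⟨x, hx, hxe⟩ := hpl
      obtain ⟨x', hx', hxe'⟩ := hpk
      obtain ⟨y, hy, hye⟩ := hql
      obtain ⟨y', hy', hye'⟩ := hqk
      have hx2 : x' = x := hi (hcell u (hlink u hx')) (hcell w (hlink w hx)) (hxe'.trans hxe.symm)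
      have hy2 : y' = y := hi (hcell u (hlink u hy')) (hcell w (hlink w hy)) (hye'.trans hye.symm)
      subst hx2 hy2
      have hxy := link_inter_ne hwu hx hx' hy hy'
      subst hxy
      exact poles_ne l (hxe.symm.trans hye)
    · have : F 0 ∈ F '' link m w := by
        rcases pole_of_mem_links hlk h0l h0k with h | h <;> rw [h] <;> assumption
      obtain ⟨z, hz, hz0⟩ := this
      have := hi (hcell w (hlink w hz)) (zero_mem_cell hm0 w).1 hz0
      have h1 := hz.2
      rw [this] at h1
      exact zero_ne_one h1
  obtain ⟨s, hs⟩ := Infinite.exists_subset_card_eq W 5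
  let f := s.orderEmbOfFin hs
  have lt : ∀ i j : Fin 5, i < j → f i < f j := fun i j h => f.strictMono h
  by_cases b0 : ∃ z ∈ cell m (f 0), F z = 0
  · by_cases b2 : ∃ z ∈ cell m (f 2), F z = 0
    · exact bad _ _ _ (lt 0 1 (by decide)) (lt 1 2 (by decide)) b0 b2
    · by_cases b4 : ∃ z ∈ cell m (f 4), F z = 0
      · exact bad _ _ _ (lt 0 1 (by decide)) (lt 1 4 (by decide)) b0 b4
      · push Not at b2 b4
        exact good _ _ (lt 2 4 (by decide)).ne b2 b4
  · by_cases b2 : ∃ z ∈ cell m (f 2), F z = 0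
    · by_cases b4 : ∃ z ∈ cell m (f 4), F z = 0
      · exact bad _ _ _ (lt 2 3 (by decide)) (lt 3 4 (by decide)) b2 b4
      · push Not at b0 b4
        exact good _ _ (lt 0 4 (by decide)).ne b0 b4
    · push Not at b0 b2
      exact good _ _ (lt 0 2 (by decide)).ne b0 b2

/-- An embedding between chains does not decrease multiplicities, provided that the bundle of least
index is too large to be mapped into another one. Since the apex is fixed, every bundle is mapped
into a bundle, and by well-founded induction it is the bundle of the same index: the preceding
bundles stay in place, hence so does the limit of their upper vertices, which is the lower vertex
of the bundle under consideration. -/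
theorem rigid [Infinite W] (hm : ∀ w, 3 ≤ m w)
    (hc : ContinuousOn F (Chain m)) (hi : Set.InjOn F (Chain m))
    (hmap : Set.MapsTo F (Chain m) (Chain m')) {b : W} (hb : ∀ w, b ≤ w)
    (hb' : ∀ w, w ≠ b → m' w < m b) (w : W) : m w ≤ m' w := by
  have hm0 : ∀ w, 0 < m w := fun w => lt_of_lt_of_le (by norm_num) (hm w)
  have hF := apex_fixed hm hc hi hmap
  have hlink : ∀ w, link m w ⊆ Chain m := fun w p hp => hp.1.1
  have hg : ∀ w, ∃ l, F '' link m w ⊆ link m' l := fun w => by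
    refine cyc_sub_link ((cyc_link hm w).image (hc.mono (hlink w)) (hi.mono (hlink w)))
      (by rintro _ ⟨z, hz, rfl⟩; exact hmap (hlink w hz)) ?_
    rintro ⟨z, hz, hz0⟩
    have := hi (hlink w hz) (zero_mem_cell hm0 w).1 (hz0.trans hF.symm)
    have h1 := hz.2
    rw [this] at h1
    exact zero_ne_one h1
  choose g hg using hg
  have poles : ∀ w, emb (g w) (1, gam 0) ∈ F '' link m w ∧ emb (g w) (1, gam 1) ∈ F '' link m w :=
    fun w => poles_mem_link ((cyc_link hm w).image (hc.mono (hlink w)) (hi.mono (hlink w))) (hg w)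
  have ginj : ∀ w u, g w = g u → w = u := by
    intro w u h
    by_contra hwu
    obtain ⟨⟨x, hx, hxe⟩, y, hy, hye⟩ := poles w
    obtain ⟨⟨x', hx', hxe'⟩, y', hy', hye'⟩ := poles u
    rw [← h] at hxe' hye'
    have hx2 : x' = x := hi (hlink u hx') (hlink w hx) (hxe'.trans hxe.symm)
    have hy2 : y' = y := hi (hlink u hy') (hlink w hy) (hye'.trans hye.symm)
    subst hx2 hy2
    have hxy := link_inter_ne hwu hx hx' hy hy'
    subst hxy
    exact poles_ne _ (hxe.symm.trans hye)
  have hmono : ∀ w, m w ≤ m' (g w) := by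
    intro w
    have hmem : ∀ p ∈ bundle (Set.Iio (m w)), emb w (1, p) ∈ link m w := fun p hp => by
      rw [link_eq hm0]; exact ⟨p, hp, rfl⟩
    refine bundle_mono (φ := fun p => (F (emb w (1, p))).2 (g w)) (hm w) ?_ ?_ ?_
    · refine ((continuous_apply (g w)).comp continuous_snd).comp_continuousOn
        ((hc.mono (hlink w)).comp (continuous_emb_one w).continuousOn hmem)
    · intro p hp q hq hpq
      have h1 := hg w ⟨_, hmem p hp, rfl⟩
      have h2 := hg w ⟨_, hmem q hq, rfl⟩
      refine emb_one_injective w (hi (hlink w (hmem p hp)) (hlink w (hmem q hq)) ?_)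
      rw [eq_emb h1.1, eq_emb h2.1, h1.2, h2.2]
      exact congrArg (fun z => emb (g w) (1, z)) hpq
    · intro p hp
      exact (hg w ⟨_, hmem p hp, rfl⟩).1.1.2.1 (g w)
  have hgid : ∀ w, g w = w := by
    intro w
    induction w using WellFoundedLT.induction with
    | ind w ih =>
      by_cases hwb : w = b
      · subst hwb
        by_contra h
        exact absurd (hmono w) (not_le.2 (hb' _ h))
      rcases lt_trichotomy (g w) w with h | h | h
      · exact ginj _ _ (ih _ h)
      · exact h
      exfalso
      -- the lower vertex of the bundle `w` is a limit of upper vertices of preceding bundles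
      have hbw : b < w := lt_of_le_of_ne (hb w) (Ne.symm hwb)
      have : Nonempty (Set.Iio w) := ⟨⟨b, hbw⟩⟩
      have hlim : Filter.Tendsto (fun u : Set.Iio w => emb (u : W) (1, gam 1)) Filter.atTop
          (𝓝 (emb w (1, gam 0))) := by
        refine Filter.Tendsto.prodMk_nhds tendsto_const_nhds (tendsto_pi_nhds.2 fun x => ?_)
        refine tendsto_const_nhds.congr' ?_
        by_cases hx : x < w
        · filter_upwards [Filter.eventually_ge_atTop (⟨x, hx⟩ : Set.Iio w)] with u hu
          have hu' : x ≤ u := hu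
          rcases hu'.lt_or_eq with h' | h' <;> simp [hx, h', Set.mem_Iio.1 u.2]
        · refine Filter.Eventually.of_forall fun u => ?_
          have hux : (u : W) < x := lt_of_lt_of_le u.2 (not_lt.1 hx)
          simp [hx, not_lt.2 hux.le, hux.ne']
      have hmemu : ∀ u : W, emb u (1, gam 1) ∈ link m u := fun u => by
        rw [link_eq hm0]; exact ⟨gam 1, gam_mem_bundle (hm0 u) zero_le_one le_rfl, rfl⟩
      have hmemw : emb w (1, gam 0) ∈ link m w := by
        rw [link_eq hm0]; exact ⟨gam 0, gam_mem_bundle (hm0 w) le_rfl zero_le_one, rfl⟩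
      have hlimF := (hc _ (hlink w hmemw)).tendsto.comp (tendsto_nhdsWithin_iff.2
        ⟨hlim, Filter.Eventually.of_forall fun u => hlink _ (hmemu u)⟩)
      have hlimw := (((continuous_apply w).comp continuous_snd).tendsto _).comp hlimF
      have hconst : ∀ u : Set.Iio w, (F (emb (u : W) (1, gam 1))).2 w = gam 0 := by
        rintro ⟨u, hu⟩
        have := hg u ⟨_, hmemu u, rfl⟩
        rw [ih u hu] at this
        exact this.1.2.2 w hu
      have e0 : (F (emb w (1, gam 0))).2 w = gam 0 :=
        tendsto_nhds_unique hlimw (tendsto_const_nhds.congr fun u => (hconst u).symm)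
      have hw := hg w ⟨_, hmemw, rfl⟩
      have e1 := hw.1.2.1 w h
      rw [hw.2] at e1
      exact zero_ne_one (gam_inj (e0.symm.trans e1))
  have := hmono w
  rwa [hgid w] at this

end Rigid

/-! ### Weight -/

/-- The topology `t` has a subbasis of at most `κ` sets. -/
def HasSubbasis (κ : Cardinal.{u}) {X : Type*} (t : TopologicalSpace X) : Prop :=
  ∃ (ι : Type u) (f : ι → Set X), #ι ≤ κ ∧ t = TopologicalSpace.generateFrom (Set.range f)

theorem HasSubbasis.induced {κ : Cardinal.{u}} {X Y : Type*} {t : TopologicalSpace Y}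
    (h : HasSubbasis κ t) (g : X → Y) : HasSubbasis κ (t.induced g) := by
  obtain ⟨ι, f, hι, rfl⟩ := h
  refine ⟨ι, fun i => g ⁻¹' f i, hι, ?_⟩
  rw [induced_generateFrom_eq, ← Set.range_comp]
  rfl

theorem HasSubbasis.inf {κ : Cardinal.{u}} (hκ : ℵ₀ ≤ κ) {X : Type*} {t t' : TopologicalSpace X}
    (h : HasSubbasis κ t) (h' : HasSubbasis κ t') : HasSubbasis κ (t ⊓ t') := by
  obtain ⟨ι, f, hι, rfl⟩ := h
  obtain ⟨ι', f', hι', rfl⟩ := h'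
  refine ⟨ι ⊕ ι', Sum.elim f f', ?_, ?_⟩
  · rw [mk_sum, lift_id, lift_id]
    exact add_le_of_le hκ hι hι'
  · rw [Set.Sum.elim_range, generateFrom_union]

theorem HasSubbasis.iInf {κ : Cardinal.{u}} (hκ : ℵ₀ ≤ κ) {X : Type*} {J : Type u} (hJ : #J ≤ κ)
    {t : J → TopologicalSpace X} (h : ∀ j, HasSubbasis κ (t j)) : HasSubbasis κ (⨅ j, t j) := by
  choose ι f hι ht using h
  refine ⟨Σ j, ι j, fun p => f p.1 p.2, ?_, ?_⟩
  · rw [mk_sigma]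
    calc Cardinal.sum (fun j => #(ι j)) ≤ Cardinal.sum (fun _ : J => κ) := sum_le_sum _ _ hι
      _ = #J * κ := by simp
      _ ≤ κ := mul_le_of_le hκ hJ le_rfl
  · rw [Set.range_sigma_eq_iUnion_range, generateFrom_iUnion]
    exact iInf_congr ht

theorem HasSubbasis.real {κ : Cardinal.{u}} (hκ : ℵ₀ ≤ κ) :
    HasSubbasis κ (inferInstance : TopologicalSpace ℝ) := by
  obtain ⟨b, hbc, -, hb⟩ := TopologicalSpace.exists_countable_basis ℝ
  rcases b.eq_empty_or_nonempty with rfl | hne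
  · exact ⟨PEmpty, PEmpty.elim, by simp, by rw [hb.eq_generateFrom]; congr; ext; simp⟩
  · obtain ⟨f, rfl⟩ := hbc.exists_eq_range hne
    refine ⟨ULift ℕ, fun n => f n.down, by simpa using hκ, ?_⟩
    rw [hb.eq_generateFrom]
    exact congrArg TopologicalSpace.generateFrom (ULift.down_surjective.range_comp f).symm

theorem HasSubbasis.prod {κ : Cardinal.{u}} (hκ : ℵ₀ ≤ κ) {X Y : Type*} [tX : TopologicalSpace X]
    [tY : TopologicalSpace Y] (h : HasSubbasis κ tX) (h' : HasSubbasis κ tY) :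
    HasSubbasis κ (inferInstance : TopologicalSpace (X × Y)) :=
  HasSubbasis.inf hκ (h.induced _) (h'.induced _)

theorem HasSubbasis.pi {κ : Cardinal.{u}} (hκ : ℵ₀ ≤ κ) {J : Type u} (hJ : #J ≤ κ) {Y : Type*}
    [tY : TopologicalSpace Y] (h : HasSubbasis κ tY) :
    HasSubbasis κ (inferInstance : TopologicalSpace (J → Y)) :=
  HasSubbasis.iInf hκ hJ fun _ => h.induced _

theorem wt_le {κ : Cardinal.{u}} (hκ : ℵ₀ ≤ κ) {X : Type u} [t : TopologicalSpace X]
    (h : HasSubbasis κ t) : wt X ≤ κ := by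
  obtain ⟨ι, f, hι, ht⟩ := h
  have hb := TopologicalSpace.isTopologicalBasis_of_subbasis ht
  refine (show wt X ≤ _ from csInf_le' ⟨_, hb, rfl⟩).trans ?_
  have hsub : (fun f => ⋂₀ f) '' {s : Set (Set X) | s.Finite ∧ s ⊆ Set.range f} ⊆
      Set.range (fun F : Finset ι => ⋂ i ∈ F, f i) := by
    rintro _ ⟨s, ⟨hs, hsf⟩, rfl⟩
    obtain ⟨T, -, hT, rfl⟩ := (Set.exists_subset_image_finite_and (f := f) (s := Set.univ)
      (p := fun t => t = s)).1 ⟨s, by rwa [Set.image_univ], hs, rfl⟩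
    exact ⟨hT.toFinset, by simp [Set.sInter_image]⟩
  refine (mk_le_mk_of_subset hsub).trans (mk_range_le.trans ?_)
  rcases finite_or_infinite ι with hfin | hinf
  · exact (mk_le_aleph0).trans hκ
  · rwa [mk_finset_of_infinite]

/-- The cellularity is at most the weight. -/
theorem le_wt {K X : Type u} [TopologicalSpace X] (O : K → Set X)
    (ho : ∀ k, IsOpen (O k)) (hn : ∀ k, (O k).Nonempty)
    (hd : ∀ k l x, x ∈ O k → x ∈ O l → k = l) : #K ≤ wt X := by
  refine le_csInf ⟨_, _, TopologicalSpace.isTopologicalBasis_opens, rfl⟩ ?_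
  rintro _ ⟨B, hB, rfl⟩
  have : ∀ k, ∃ b : B, (b : Set X).Nonempty ∧ (b : Set X) ⊆ O k := fun k => by
    obtain ⟨x, hx⟩ := hn k
    obtain ⟨b, hb, hxb, hbo⟩ := hB.exists_subset_of_mem_open hx (ho k)
    exact ⟨⟨b, hb⟩, ⟨x, hxb⟩, hbo⟩
  choose b hb hbO using this
  refine mk_le_of_injective (f := b) fun k l hkl => ?_
  obtain ⟨x, hx⟩ := hb k
  exact hd k l x (hbO k hx) (hbO l (hkl ▸ hx))

/-! ### Topology of chains -/

section ChainTop

variable {W : Type*} [LinearOrder W]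

theorem isCompact_Chain (m : W → ℕ) : IsCompact (Chain m) := by
  have hK : IsCompact (Set.Icc (0 : ℝ) 1 ×ˢ
      Set.univ.pi fun w => bundle (Set.Iio (m w))) :=
    isCompact_Icc.prod (isCompact_univ_pi fun w => isCompact_bundle (Set.finite_Iio _))
  have e0 : ∀ w : W, Continuous fun p : ℝ × (W → ℝ × ℝ) => p.2 w := fun w =>
    (continuous_apply w).comp continuous_snd
  have e1 : Continuous fun p : ℝ × (W → ℝ × ℝ) => gam p.1 := continuous_gam.comp continuous_fst
  have hC : IsClosed {p : ℝ × (W → ℝ × ℝ) |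
      (∀ u w, u < w → p.2 w = gam 0 ∨ p.2 u = gam p.1) ∧
      (p.1 = 1 ∨ ∀ w, p.2 w = gam 0 ∨ p.2 w = gam p.1)} := by
    refine IsClosed.inter ?_ ?_
    · change IsClosed {p : ℝ × (W → ℝ × ℝ) | ∀ u w, u < w → p.2 w = gam 0 ∨ p.2 u = gam p.1}
      simp only [Set.ofPred_forall]
      exact isClosed_iInter fun u => isClosed_iInter fun w => isClosed_iInter fun _ =>
        (isClosed_eq (e0 w) continuous_const).union (isClosed_eq (e0 u) e1)
    · refine (isClosed_eq continuous_fst continuous_const).union ?_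
      change IsClosed {p : ℝ × (W → ℝ × ℝ) | ∀ w, p.2 w = gam 0 ∨ p.2 w = gam p.1}
      simp only [Set.ofPred_forall]
      exact isClosed_iInter fun w =>
        (isClosed_eq (e0 w) continuous_const).union (isClosed_eq (e0 w) e1)
  convert hK.inter_right hC using 1
  ext p
  simp only [Chain, Set.mem_ofPred_eq, Set.mem_inter_iff, Set.mem_prod, Set.mem_Icc,
    Set.mem_univ_pi, and_assoc]

theorem joinedIn_of_path {X : Type*} [TopologicalSpace X] {S : Set X} {f : ℝ → X}
    (hf : Continuous f) (h : ∀ s, 0 ≤ s → s ≤ 1 → f s ∈ S) : JoinedIn S (f 0) (f 1) :=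
  (((convex_Icc (0 : ℝ) 1).isPathConnected ⟨0, by simp⟩).image hf).joinedIn _
    ⟨0, by simp, rfl⟩ _ ⟨1, by simp, rfl⟩ |>.mono (by rintro _ ⟨s, hs, rfl⟩; exact h s hs.1 hs.2)

theorem joined_thick {K : Set ℕ} (hK : 0 ∈ K) {q : ℝ × (ℝ × ℝ)} (hq : q ∈ thick K) :
    JoinedIn (thick K) (0, gam 0) q := by
  obtain ⟨t, p⟩ := q
  have hspoke : ∀ t : ℝ, 0 ≤ t → t ≤ 1 → JoinedIn (thick K) (0, gam 0) (t, gam 0) := by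
    intro t h0 h1
    have := joinedIn_of_path (S := thick K) (f := fun s : ℝ => (s * t, gam 0)) (by fun_prop)
      fun s hs0 hs1 => ⟨⟨by positivity, by nlinarith⟩, gam_mem_bundle hK le_rfl zero_le_one,
        Or.inr (Or.inl rfl)⟩
    simpa using this
  obtain ⟨⟨h0, h1⟩, hp, h⟩ := hq
  simp only at h0 h1 hp h
  rcases h with rfl | rfl | rfl
  · obtain ⟨⟨hx0, hx1⟩, k, hk, hy⟩ := hp
    refine (hspoke 1 zero_le_one le_rfl).trans ?_
    have := joinedIn_of_path (S := thick K) (f := fun s : ℝ => (1, arc k (s * p.1)))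
      (by have := continuous_arc k; fun_prop)
      fun s hs0 hs1 => ⟨⟨zero_le_one, le_rfl⟩,
        ⟨⟨mul_nonneg hs0 hx0, mul_le_one₀ hs1 hx0 hx1⟩, k, hk, rfl⟩, Or.inl rfl⟩
    simp only [zero_mul, one_mul, arc_zero] at this
    rwa [show arc k p.1 = p from Prod.ext rfl hy.symm] at this
  · exact hspoke t h0 h1
  · have := joinedIn_of_path (S := thick K) (f := fun s : ℝ => (s * t, gam (s * t)))
      (by have := continuous_gam; fun_prop)
      fun s hs0 hs1 => ⟨⟨by positivity, by nlinarith⟩,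
        gam_mem_bundle hK (mul_nonneg hs0 h0) (mul_le_one₀ hs1 h0 h1), Or.inr (Or.inr rfl)⟩
    simpa using this

theorem emb_zero (w : W) : emb w (0, gam 0) = 0 := by
  refine Prod.ext rfl (funext fun u => ?_)
  simp only [emb]
  split_ifs <;> rfl

theorem isPathConnected_Chain [WellFoundedLT W] [OrderTop W] {m : W → ℕ} (hm : ∀ w, 0 < m w) :
    IsPathConnected (Chain m) := by
  refine ⟨0, (zero_mem_cell hm ⊤).1, fun {p} hp => ?_⟩
  obtain ⟨w, hw⟩ := cell_cover hp
  rw [cell_eq hm] at hw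
  obtain ⟨q, hq, rfl⟩ := hw
  have := (joined_thick (hm w) hq).map (continuous_emb w)
  rw [emb_zero, ← cell_eq hm] at this
  exact this.mono fun x hx => hx.1

theorem mk_Chain_le {W : Type u} [LinearOrder W] [WellFoundedLT W] [OrderTop W] {m : W → ℕ} :
    #(Chain m) ≤ #W * 𝔠 := by
  have hsub : Chain m ⊆ Set.range fun x : W × (ℝ × (ℝ × ℝ)) => emb x.1 x.2 := by
    intro p hp
    obtain ⟨w, hw⟩ := cell_cover hp
    exact ⟨(w, _), (eq_emb hw).symm⟩
  refine (mk_le_mk_of_subset hsub).trans (mk_range_le.trans ?_)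
  simp [mk_real]

/-- The open sets of the points whose coordinate of index `w` is off the arc number `0` are disjoint
for different `w`. -/
theorem link_open {m : W → ℕ} {p : ℝ × (W → ℝ × ℝ)} (hp : p ∈ Chain m) {w u : W}
    (hw : (p.2 w).2 ≠ 0) (hu : (p.2 u).2 ≠ 0) : w = u := by
  have key : ∀ w u, w < u → (p.2 w).2 ≠ 0 → (p.2 u).2 ≠ 0 → False := by
    intro w u h hw hu
    rcases hp.2.2.1 w u h with h | h
    · exact hu (by rw [h]; rfl)
    · exact hw (by rw [h]; rfl)
  rcases lt_trichotomy w u with h | h | h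
  · exact (key w u h hw hu).elim
  · exact h
  · exact (key u w h hu hw).elim

theorem exists_link_open {m : W → ℕ} (hm : ∀ w, 3 ≤ m w) (w : W) :
    ∃ p ∈ Chain m, (p.2 w).2 ≠ 0 := by
  refine ⟨emb w (1, arc 1 (1 / 2)), (emb_mem_cell (fun w => lt_of_lt_of_le (by norm_num) (hm w))
    ⟨⟨zero_le_one, le_rfl⟩, ⟨?_, 1, lt_of_lt_of_le (by norm_num) (hm w), rfl⟩, Or.inl rfl⟩).1, ?_⟩
  · norm_num [arc]
  · rw [emb_snd_self]; norm_num [arc]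

end ChainTop

/-! ### Resolutions -/

section Resolution

theorem continuous_snd_apply {β δ J : Type*} [TopologicalSpace β] [TopologicalSpace δ] (j : J) :
    Continuous fun x : β × (J → δ) => x.2 j :=
  (continuous_apply j).comp continuous_snd

/-- The resolution of `B` that replaces each point `p j` by `D j`, glued along the origin. A point
consists of a base point and of a family of coordinates in the sets `D j`, of which only the
coordinates `j` such that the base point equals `p j` may be nonzero. -/
def res {β δ J : Type*} [Zero δ] (B : Set β) (p : J → β) (D : J → Set δ) : Set (β × (J → δ)) :=
  {x | x.1 ∈ B ∧ ∀ j, x.2 j ∈ D j ∧ (x.2 j = 0 ∨ x.1 = p j)}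

/-- The canonical parametrization of the part of a resolution over `p j`. -/
noncomputable def tooth {β δ J : Type*} [Zero δ] (p : J → β) (j : J) (d : δ) : β × (J → δ) :=
  open Classical in (p j, Function.update 0 j d)

section Basic

variable {β δ J : Type*} [Zero δ] {B : Set β} {p : J → β} {D : J → Set δ}

theorem tooth_snd (j : J) (d : δ) : (tooth p j d).2 j = d := by simp [tooth]

theorem tooth_injective (j : J) : Function.Injective (tooth p j : δ → β × (J → δ)) :=
  fun d d' h => by rw [← tooth_snd (p := p) j d, h, tooth_snd]

theorem base_mem (h0 : ∀ j, 0 ∈ D j) {b : β} (hb : b ∈ B) : (b, 0) ∈ res B p D :=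
  ⟨hb, fun j => ⟨h0 j, Or.inl rfl⟩⟩

theorem tooth_mem (h0 : ∀ j, 0 ∈ D j) (hp : ∀ j, p j ∈ B) {j : J} {d : δ} (hd : d ∈ D j) :
    tooth p j d ∈ res B p D := by
  refine ⟨hp j, fun i => ?_⟩
  by_cases h : i = j
  · subst h
    rw [tooth_snd]
    exact ⟨hd, Or.inr rfl⟩
  · have : (tooth p j d).2 i = 0 := by simp [tooth, h]
    rw [this]
    exact ⟨h0 i, Or.inl rfl⟩

theorem eq_tooth (hpi : Function.Injective p) {x : β × (J → δ)} (hx : x ∈ res B p D) {j : J}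
    (h : x.1 = p j) : x = tooth p j (x.2 j) := by
  refine Prod.ext h (funext fun i => ?_)
  by_cases hi : i = j
  · subst hi
    rw [tooth_snd]
  · have : (tooth p j (x.2 j)).2 i = 0 := by simp [tooth, hi]
    rw [this]
    exact (hx.2 i).2.resolve_right fun h' => hi (hpi (h'.symm.trans h))

theorem base_or_tooth {x : β × (J → δ)} (hx : x ∈ res B p D) :
    x = (x.1, 0) ∨ ∃ j, x.1 = p j := by
  by_cases h : ∃ j, x.1 = p j
  · exact Or.inr h
  · push Not at h
    exact Or.inl (Prod.ext rfl (funext fun j => (hx.2 j).2.resolve_right (h j)))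

end Basic

variable {β δ J : Type*} [Zero δ] [TopologicalSpace β] [TopologicalSpace δ] {B : Set β}
  {p : J → β} {D : J → Set δ}

theorem continuous_tooth (j : J) : Continuous (tooth p j : δ → β × (J → δ)) := by
  classical
  exact continuous_const.prodMk (continuous_const.update j continuous_id)

theorem isCompact_res [T2Space β] [T2Space δ] (hB : IsCompact B) (hD : ∀ j, IsCompact (D j)) :
    IsCompact (res B p D) := by
  have hK : IsCompact (B ×ˢ Set.univ.pi D) := hB.prod (isCompact_univ_pi hD)
  have hC : IsClosed {x : β × (J → δ) | ∀ j, x.2 j = 0 ∨ x.1 = p j} := by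
    simp only [Set.ofPred_forall]
    exact isClosed_iInter fun j => (isClosed_eq (continuous_snd_apply j) continuous_const).union
      (isClosed_eq continuous_fst continuous_const)
  convert hK.inter_right hC using 1
  ext x
  simp only [res, Set.mem_ofPred_eq, Set.mem_inter_iff, Set.mem_prod, Set.mem_univ_pi, and_assoc,
    forall_and]

theorem isPathConnected_res (hB : IsPathConnected B) (hD : ∀ j, IsPathConnected (D j))
    (h0 : ∀ j, 0 ∈ D j) (hp : ∀ j, p j ∈ B) (hpi : Function.Injective p) :
    IsPathConnected (res B p D) := by
  obtain ⟨b, hb, hbB⟩ := hB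
  have hbase : ∀ a ∈ B, JoinedIn (res B p D) (b, 0) (a, 0) := fun a ha =>
    ((hbB ha).map (continuous_id.prodMk continuous_const)).mono (by
      rintro _ ⟨c, hc, rfl⟩
      exact base_mem h0 hc)
  refine ⟨(b, 0), base_mem h0 hb, fun {x} hx => ?_⟩
  rcases base_or_tooth hx with h | ⟨j, h⟩
  · rw [h]; exact hbase _ hx.1
  · have e := eq_tooth hpi hx h
    have := (((hD j).joinedIn 0 (h0 j) (x.2 j) (hx.2 j).1).map
      (continuous_tooth (p := p) j)).mono (V := res B p D) (by
        rintro _ ⟨c, hc, rfl⟩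
        exact tooth_mem h0 hp hc)
    rw [← e] at this
    refine (hbase (p j) (hp j)).trans ?_
    rwa [show ((p j, 0) : β × (J → δ)) = tooth p j 0 by simp [tooth]]

/-- A cyclic subset of a resolution lies in the base or over a single point. -/
theorem cyc_res [T1Space β] [T1Space δ] (hpi : Function.Injective p) {C : Set (β × (J → δ))}
    (hC : Cyc C) (hCR : C ⊆ res B p D) :
    (∀ x ∈ C, x.2 = 0) ∨ ∃ j, ∀ x ∈ C, x.1 = p j := by
  by_contra! hcon
  obtain ⟨⟨x, hx, hx0⟩, hcon⟩ := hcon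
  obtain ⟨j, hj⟩ := Function.ne_iff.1 hx0
  obtain ⟨y, hy, hyj⟩ := hcon j
  refine hC.split (p j, 0) (U := {x | x.2 j ≠ 0}) (V := {x | x.1 ≠ p j})
    (isOpen_ne.preimage (continuous_snd_apply j)) (isOpen_ne.preimage continuous_fst)
    ?_ ?_ hx ?_ hj hy ?_ hyj
  · intro z hz hzp
    by_contra! hcon
    obtain ⟨h1, h2⟩ := hcon
    simp only [Set.mem_ofPred_eq, not_not] at h1 h2
    refine hzp ?_
    rw [eq_tooth hpi (hCR hz) h2, h1]
    simp [tooth]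
  · intro z hz h1 h2
    exact ((hCR hz).2 j).2.elim h1 h2
  · rintro rfl
    exact hj rfl
  · rintro rfl
    exact hyj rfl

/-- A point that is alone in its fibre has the neighbourhoods prescribed by the image. -/
theorem isCountablyGenerated_nhds_of_fibre {X Y : Type*} [TopologicalSpace X] [TopologicalSpace Y]
    [CompactSpace X] [T2Space Y] [FirstCountableTopology Y] {f : X → Y} (hf : Continuous f) (x : X)
    (hx : ∀ y, f y = f x → y = x) : (𝓝 x).IsCountablyGenerated := by
  have : 𝓝 x = Filter.comap f (𝓝 (f x)) := by
    rw [hf.isClosedMap.comap_nhds_eq hf, show f ⁻¹' {f x} = {x} from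
      Set.eq_singleton_iff_unique_mem.2 ⟨rfl, hx⟩, nhdsSet_singleton]
  rw [this]
  infer_instance

theorem firstCountable_res [T2Space β] [T2Space δ] [FirstCountableTopology β]
    [FirstCountableTopology δ] (hpi : Function.Injective p) (hR : IsCompact (res B p D)) :
    FirstCountableTopology (res B p D) := by
  have := isCompact_iff_compactSpace.1 hR
  refine ⟨fun x => ?_⟩
  by_cases h : ∃ j, x.1.1 = p j
  · obtain ⟨j, hj⟩ := h
    refine isCountablyGenerated_nhds_of_fibre (f := fun y : res B p D => (y.1.1, y.1.2 j))
      ((continuous_fst.prodMk (continuous_snd_apply j)).comp continuous_subtype_val) x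
      fun y hy => Subtype.ext ?_
    have h1 : y.1.1 = x.1.1 := (Prod.ext_iff.1 hy).1
    have h2 : y.1.2 j = x.1.2 j := (Prod.ext_iff.1 hy).2
    rw [eq_tooth hpi y.2 (h1.trans hj), eq_tooth hpi x.2 hj, h2]
  · refine isCountablyGenerated_nhds_of_fibre (f := fun y : res B p D => y.1.1)
      (continuous_fst.comp continuous_subtype_val) x fun y hy => Subtype.ext ?_
    have h' : ¬ ∃ j, y.1.1 = p j := by rwa [show y.1.1 = x.1.1 from hy]
    rw [(base_or_tooth y.2).resolve_right h', (base_or_tooth x.2).resolve_right h,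
      show y.1.1 = x.1.1 from hy]

end Resolution

section ResolutionCard

variable {β δ J : Type u} [Zero δ] {B : Set β} {p : J → β} {D : J → Set δ}

theorem mk_res_le (hpi : Function.Injective p) {θ : Cardinal.{u}} (hθ : ℵ₀ ≤ θ) (hB : #B ≤ θ)
    (hJ : #J ≤ θ) (hD : ∀ j, #(D j) ≤ θ) : #(res B p D) ≤ θ := by
  have hsub : res B p D ⊆ (fun b => (b, 0)) '' B ∪ ⋃ j, tooth p j '' D j := by
    intro x hx
    rcases base_or_tooth hx with h | ⟨j, h⟩
    · exact Or.inl ⟨x.1, hx.1, h.symm⟩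
    · exact Or.inr (Set.mem_iUnion.2 ⟨j, x.2 j, (hx.2 j).1, (eq_tooth hpi hx h).symm⟩)
  refine (mk_le_mk_of_subset hsub).trans ((mk_union_le _ _).trans ?_)
  refine add_le_of_le hθ (mk_image_le.trans hB) ((mk_iUnion_le_sum_mk).trans ?_)
  calc Cardinal.sum (fun j => #(tooth p j '' D j)) ≤ Cardinal.sum (fun _ : J => θ) :=
        sum_le_sum _ _ fun j => mk_image_le.trans (hD j)
    _ = #J * θ := by simp
    _ ≤ θ := mul_le_of_le hθ hJ le_rfl

theorem mk_base_le (h0 : ∀ j, 0 ∈ D j) : #B ≤ #(res B p D) :=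
  mk_le_of_injective (f := fun b : B => (⟨(b, 0), base_mem h0 b.2⟩ : res B p D))
    fun _ _ h => Subtype.ext (congrArg (fun x => x.1.1) h)

theorem mk_tooth_le (h0 : ∀ j, 0 ∈ D j) (hp : ∀ j, p j ∈ B) (j : J) : #(D j) ≤ #(res B p D) :=
  mk_le_of_injective (f := fun d : D j => (⟨tooth p j d, tooth_mem h0 hp d.2⟩ : res B p D))
    fun _ _ h => Subtype.ext (tooth_injective j (congrArg Subtype.val h))

end ResolutionCard

/-! ### A path-connected compactum of prescribed size without cyclic subsets -/

section Fan

/-- The cone over the space of partial functions from `M` to `L`, the latter being encoded by their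
graphs: at height `t`, the graph of a partial function is the set of the pairs where the second
component equals `t` instead of `0`. -/
def fan (M L : Type*) : Set (ℝ × (M → L → ℝ)) :=
  {x | (0 ≤ x.1 ∧ x.1 ≤ 1) ∧ (∀ m l, x.2 m l = 0 ∨ x.2 m l = x.1) ∧
    ∀ m l l', l ≠ l' → x.2 m l = 0 ∨ x.2 m l' = 0}

variable {M L : Type*}

theorem zero_mem_fan : 0 ∈ fan M L :=
  ⟨⟨le_rfl, zero_le_one⟩, fun _ _ => Or.inl rfl, fun _ _ _ _ => Or.inl rfl⟩

theorem isCompact_fan : IsCompact (fan M L) := by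
  have hK : IsCompact (Set.Icc (0 : ℝ) 1 ×ˢ
      Set.univ.pi fun _ : M => Set.univ.pi fun _ : L => Set.Icc (0 : ℝ) 1) :=
    isCompact_Icc.prod (isCompact_univ_pi fun _ => isCompact_univ_pi fun _ => isCompact_Icc)
  have e0 : ∀ m l, Continuous fun x : ℝ × (M → L → ℝ) => x.2 m l := fun m l => by fun_prop
  have hC : IsClosed {x : ℝ × (M → L → ℝ) | (∀ m l, x.2 m l = 0 ∨ x.2 m l = x.1) ∧
      ∀ m l l', l ≠ l' → x.2 m l = 0 ∨ x.2 m l' = 0} := by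
    refine IsClosed.inter ?_ ?_
    · change IsClosed {x : ℝ × (M → L → ℝ) | ∀ m l, x.2 m l = 0 ∨ x.2 m l = x.1}
      simp only [Set.ofPred_forall]
      exact isClosed_iInter fun m => isClosed_iInter fun l =>
        (isClosed_eq (e0 m l) continuous_const).union (isClosed_eq (e0 m l) continuous_fst)
    · change IsClosed {x : ℝ × (M → L → ℝ) | ∀ m l l', l ≠ l' → x.2 m l = 0 ∨ x.2 m l' = 0}
      simp only [Set.ofPred_forall]
      exact isClosed_iInter fun m => isClosed_iInter fun l => isClosed_iInter fun l' =>
        isClosed_iInter fun _ =>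
          (isClosed_eq (e0 m l) continuous_const).union (isClosed_eq (e0 m l') continuous_const)
  convert hK.inter_right hC using 1
  ext x
  simp only [fan, Set.mem_ofPred_eq, Set.mem_inter_iff, Set.mem_prod, Set.mem_Icc, Set.mem_univ_pi]
  constructor
  · rintro ⟨h, h1, h2⟩
    refine ⟨⟨h, fun m l => ?_⟩, h1, h2⟩
    rcases h1 m l with h' | h' <;> rw [h']
    · exact ⟨le_rfl, zero_le_one⟩
    · exact h
  · rintro ⟨⟨h, -⟩, h'⟩
    exact ⟨h, h'⟩

theorem isPathConnected_fan : IsPathConnected (fan M L) := by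
  refine ⟨0, zero_mem_fan, fun {x} hx => ?_⟩
  have := joinedIn_of_path (S := fan M L) (f := fun s : ℝ => s • x) (by fun_prop)
    fun s hs0 hs1 => ⟨⟨mul_nonneg hs0 hx.1.1, mul_le_one₀ hs1 hx.1.1 hx.1.2⟩,
      fun m l => (hx.2.1 m l).imp (fun h => by simp [h]) (fun h => by simp [h]),
      fun m l l' hl => (hx.2.2 m l l' hl).imp (fun h => by simp [h]) (fun h => by simp [h])⟩
  simpa using this

/-- A fan has no cyclic subsets: removing the apex separates the spokes, so that a cyclic subset
would lie on a single spoke. -/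
theorem not_cyc_fan {C : Set (ℝ × (M → L → ℝ))} (hCf : C ⊆ fan M L) : ¬ Cyc C := by
  intro hC
  have hpos : ∀ x ∈ C, x ≠ 0 → x.1 ≠ 0 := by
    intro x hx hx0 h
    refine hx0 (Prod.ext h (funext fun m => funext fun l => ?_))
    rcases (hCf hx).2.1 m l with h' | h'
    · exact h'
    · exact h'.trans h
  have key : ∀ m l, (∀ x ∈ C, x.2 m l = 0) ∨ ∀ x ∈ C, x.2 m l = x.1 := by
    intro m l
    by_contra! hcon
    obtain ⟨⟨x, hx, hx0⟩, y, hy, hy0⟩ := hcon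
    have e0 : Continuous fun x : ℝ × (M → L → ℝ) => x.2 m l := by fun_prop
    refine hC.split 0 (U := {x | x.2 m l ≠ 0}) (V := {x | x.2 m l ≠ x.1})
      (isOpen_ne_fun e0 continuous_const) (isOpen_ne_fun e0 continuous_fst) ?_ ?_ hx ?_ hx0 hy ?_
      hy0
    · intro z hz hz0
      by_contra! hcon
      obtain ⟨h1, h2⟩ := hcon
      exact hpos z hz hz0 ((not_not.1 h2).symm.trans (not_not.1 h1))
    · intro z hz h1 h2
      exact ((hCf hz).2.1 m l).elim h1 h2
    · rintro rfl
      exact hx0 rfl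
    · rintro rfl
      exact hy0 rfl
  refine not_cyc_of_injOn (f := fun x => x.1) continuous_fst.continuousOn ?_ hC
  intro x hx y hy hxy
  refine Prod.ext hxy (funext fun m => funext fun l => ?_)
  rcases key m l with h | h
  · rw [h x hx, h y hy]
  · rw [h x hx, h y hy]; exact hxy

theorem mk_fan {M L : Type u} (hM : ℵ₀ ≤ #M) (hL : ℵ₀ ≤ #L) : #(fan M L) = #L ^ #M := by
  classical
  have hc : 𝔠 ≤ #L ^ #M := by
    rw [← two_power_aleph0]
    exact (power_le_power_left two_ne_zero hM).trans
      (power_le_power_right (natCast_lt_aleph0.le.trans hL))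
  apply le_antisymm
  · have hsub : fan M L ⊆ Set.range fun x : ℝ × (M → Option L) =>
        (x.1, fun m l => if x.2 m = some l then x.1 else 0) := by
      intro x hx
      refine ⟨(x.1, fun m => if h : ∃ l, x.2 m l ≠ 0 then some h.choose else none),
        Prod.ext rfl (funext fun m => funext fun l => ?_)⟩
      dsimp only
      by_cases h : ∃ l, x.2 m l ≠ 0
      · have h' := h.choose_spec
        simp only [dif_pos h]
        by_cases hl : h.choose = l
        · rw [if_pos (congrArg some hl)]
          rw [hl] at h'
          exact ((hx.2.1 m l).resolve_left h').symm
        · rw [if_neg fun h'' => hl (Option.some.inj h'')]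
          exact ((hx.2.2 m _ _ hl).resolve_left h').symm
      · simp only [dif_neg h]
        rw [if_neg (by simp)]
        push Not at h
        exact (h l).symm
    refine (mk_le_mk_of_subset hsub).trans (mk_range_le.trans ?_)
    have : #(Option L) = #L := by rw [mk_option, add_one_eq hL]
    simp only [mk_prod, mk_real, lift_continuum, lift_id, lift_id', mk_pi, prod_const, this]
    exact mul_le_of_le (hL.trans (self_le_power _ (one_le_aleph0.trans hM))) hc (by simp)
  · rw [power_def]
    refine mk_le_of_injective (f := fun g : M → L =>
      (⟨(1, fun m l => if l = g m then 1 else 0), ⟨zero_le_one, le_rfl⟩, fun m l => ?_,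
        fun m l l' hl => ?_⟩ : fan M L)) fun g g' h => funext fun m => ?_
    · by_cases h : l = g m <;> simp [h]
    · by_cases h : l = g m
      · right
        exact if_neg fun h' => hl (h.trans h'.symm)
      · left; exact if_neg h
    · have h1 := congrFun (congrFun (congrArg (fun x : fan M L => x.1.2) h) m) (g m)
      by_contra hne
      simp [hne] at h1

end Fan

/-! ### Families of mutually non-embeddable chains -/

section Family

variable {W : Type*} [LinearOrder W]

/-- The multiplicities coding the set `S`, with an exceptional value at `b`, larger
than all the others. -/
noncomputable def code (b : W) (S : Set W) (w : W) : ℕ :=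
  open Classical in if w = b then 5 else if w ∈ S then 4 else 3

theorem code_ge (b : W) (S : Set W) (w : W) : 3 ≤ code b S w := by
  unfold code; split_ifs <;> norm_num

theorem code_rigid [WellFoundedLT W] [OrderTop W] [Infinite W] {b : W} (hb : ∀ w, b ≤ w)
    {S T : Set W} {F : ℝ × (W → ℝ × ℝ) → ℝ × (W → ℝ × ℝ)}
    (hc : ContinuousOn F (Chain (code b S))) (hi : Set.InjOn F (Chain (code b S)))
    (hmap : Set.MapsTo F (Chain (code b S)) (Chain (code b T))) {w : W} (hw : w ≠ b)
    (hwS : w ∈ S) : w ∈ T := by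
  have h := rigid (code_ge b S) hc hi hmap hb (fun w hw => by
    simp only [code, if_neg hw, if_true]
    split_ifs <;> norm_num) w
  by_contra hwT
  simp [code, hw, hwS, hwT] at h

/-- There are as many mutually non-embeddable chains over `W` as subsets of `W`. -/
theorem exists_family (W : Type u) [LinearOrder W] [WellFoundedLT W] [OrderTop W] [Infinite W] :
    ∃ M : Set W → W → ℕ, (∀ P w, 3 ≤ M P w) ∧
      ∀ (P Q : Set W) (F : ℝ × (W → ℝ × ℝ) → ℝ × (W → ℝ × ℝ)),
        ContinuousOn F (Chain (M P)) → Set.InjOn F (Chain (M P)) →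
        Set.MapsTo F (Chain (M P)) (Chain (M Q)) → P = Q := by
  obtain ⟨b, -, hb⟩ := WellFounded.has_min (wellFounded_lt (α := W)) Set.univ Set.univ_nonempty
  have hb : ∀ w, b ≤ w := fun w => not_lt.1 (hb w trivial)
  have hcard : #(W ⊕ W) ≤ #{w : W // w ≠ b} := by
    have hW : ℵ₀ ≤ #W := infinite_iff.1 ‹_›
    have hb1 : #({b} : Set W) < #W := by
      rw [mk_singleton]
      exact one_lt_aleph0.trans_le hW
    have h1 : #{w : W // w ≠ b} = #W := mk_compl_of_infinite {b} hb1
    rw [h1, mk_sum, lift_id, add_eq_self hW]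
  obtain ⟨e⟩ := hcard
  -- passing to codes of pairs `(P, Pᶜ)` makes distinct codes incomparable for inclusion
  refine ⟨fun P => code b ((fun x => (e x : W)) '' (Sum.inl '' P ∪ Sum.inr '' Pᶜ)),
    fun P => code_ge b _, fun P Q F hc hi hmap => ?_⟩
  have key : ∀ x, x ∈ Sum.inl '' P ∪ Sum.inr '' Pᶜ → x ∈ Sum.inl '' Q ∪ Sum.inr '' Qᶜ := by
    intro x hx
    obtain ⟨y, hy, hyx⟩ := code_rigid hb hc hi hmap (e x).2 ⟨x, hx, rfl⟩
    rwa [← e.injective (Subtype.ext hyx)]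
  ext w
  constructor
  · intro hw
    simpa using key (Sum.inl w) (by simpa using hw)
  · intro hw
    by_contra hwP
    have := key (Sum.inr w) (by simpa using hwP)
    simp only [Set.mem_union, Set.mem_image, Sum.inr.injEq, reduceCtorEq, and_false, exists_false,
      exists_eq_right, false_or, Set.mem_compl_iff] at this
    exact this hw

/-- There is a well-order with a largest element of each infinite cardinality. -/
theorem exists_order {κ : Cardinal.{u}} (hκ : ℵ₀ ≤ κ) :
    ∃ (W : Type u) (_ : LinearOrder W), WellFoundedLT W ∧ Nonempty (OrderTop W) ∧ Infinite W ∧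
      #W = κ := by
  have h : #(WithTop κ.ord.ToType) = κ := by
    change #(Option κ.ord.ToType) = κ
    rw [mk_option, mk_ord_toType, add_one_eq hκ]
  exact ⟨WithTop κ.ord.ToType, inferInstance, inferInstance, ⟨inferInstance⟩,
    infinite_iff.2 (h.symm ▸ hκ), h⟩

/-- An embedding of subspaces as a map between the ambient spaces; the values off the domain are
irrelevant. -/
theorem exists_ambient {α : Type*} [TopologicalSpace α] {A B : Set α} {f : A → B}
    (hf : IsEmbedding f) :
    ∃ G : α → α, ContinuousOn G A ∧ Set.InjOn G A ∧ Set.MapsTo G A B := by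
  classical
  refine ⟨fun x => if h : x ∈ A then f ⟨x, h⟩ else x, ?_, ?_, ?_⟩
  · rw [continuousOn_iff_continuous_domRestrict]
    refine (continuous_subtype_val.comp hf.continuous).congr fun x => ?_
    simp
  · intro x hx y hy h
    simp only [dif_pos hx, dif_pos hy] at h
    exact congrArg Subtype.val (hf.injective (Subtype.ext h))
  · intro x hx
    simp only [dif_pos hx]
    exact (f _).2

end Family

/-! ### The two constructions -/

/-- Compacta of size at least the continuum: a fan is attached to the
apex of a chain. -/
theorem exists_large {κ l μ : Cardinal.{u}} (hκ : ℵ₀ ≤ κ) (hl : ℵ₀ ≤ l) (hlκ : l ≤ κ)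
    (hμ : ℵ₀ ≤ μ) (hμκ : μ ≤ κ) :
    ∃ (ι : Type u) (X : ι → TopCat.{u}), #ι = 2 ^ κ ∧
      (∀ i, CompactSpace ↥(X i) ∧ T2Space ↥(X i) ∧ PathConnectedSpace ↥(X i) ∧
        wt ↥(X i) = κ ∧ #↥(X i) = max κ (l ^ μ)) ∧ IncompFamily X := by
  obtain ⟨W, _, _, ⟨_⟩, _, hW⟩ := exists_order hκ
  obtain ⟨m, hm, hrig⟩ := exists_family W
  have hm0 : ∀ P w, 0 < m P w := fun P w => lt_of_lt_of_le (by norm_num) (hm P w)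
  let p : PUnit.{u + 1} → ℝ × (W → ℝ × ℝ) := fun _ => 0
  let D : PUnit.{u + 1} → Set (ℝ × (μ.out → l.out → ℝ)) := fun _ => fan μ.out l.out
  let R : Set W → Set ((ℝ × (W → ℝ × ℝ)) × (PUnit.{u + 1} → ℝ × (μ.out → l.out → ℝ))) :=
    fun P => res (Chain (m P)) p D
  have hpi : Function.Injective p := fun _ _ _ => rfl
  have h0 : ∀ j, 0 ∈ D j := fun _ => zero_mem_fan
  have hp : ∀ P j, p j ∈ Chain (m P) := fun P _ => (zero_mem_cell (hm0 P) ⊤).1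
  have hcomp : ∀ P, IsCompact (R P) := fun P =>
    isCompact_res (isCompact_Chain _) fun _ => isCompact_fan
  have hfan : #(fan μ.out l.out) = l ^ μ := by
    rw [mk_fan] <;> simp [hμ, hl]
  have hcont : 𝔠 ≤ l ^ μ := by
    rw [← two_power_aleph0]
    exact (power_le_power_left two_ne_zero hμ).trans
      (power_le_power_right (natCast_lt_aleph0.le.trans hl))
  refine ⟨Set W, fun P => TopCat.of (R P), by rw [mk_set, hW], fun P => ⟨?_, ?_, ?_, ?_, ?_⟩, ?_⟩
  · exact isCompact_iff_compactSpace.1 (hcomp P)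
  · exact inferInstanceAs (T2Space (R P))
  · exact isPathConnected_iff_pathConnectedSpace.1 (isPathConnected_res
      (isPathConnected_Chain (hm0 P)) (fun _ => isPathConnected_fan) h0 (hp P) hpi)
  · apply le_antisymm
    · refine wt_le hκ (HasSubbasis.induced ?_ Subtype.val)
      have hr := HasSubbasis.real hκ
      exact (hr.prod hκ ((hr.prod hκ hr).pi hκ hW.le)).prod hκ
        ((hr.prod hκ ((hr.pi hκ (by simpa)).pi hκ (by simpa))).pi hκ
          (by simpa using one_le_aleph0.trans hκ))
    · have e : ∀ w, Continuous fun x : R P => (x.1.1.2 w).2 := fun w => by fun_prop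
      refine hW.symm.le.trans (le_wt (X := R P) (fun w => {x : R P | (x.1.1.2 w).2 ≠ 0})
        (fun w => isOpen_ne_fun (e w) continuous_const) (fun w => ?_) fun w u x hw hu =>
          link_open x.2.1 hw hu)
      obtain ⟨q, hq, hq0⟩ := exists_link_open (hm P) w
      exact ⟨⟨(q, 0), base_mem h0 hq⟩, hq0⟩
  · have hθ : ℵ₀ ≤ max κ (l ^ μ) := hκ.trans (le_max_left _ _)
    change #(R P) = max κ (l ^ μ)
    apply le_antisymm
    · refine mk_res_le hpi hθ (mk_Chain_le.trans ?_) (by simpa using one_le_aleph0.trans hθ)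
        fun _ => hfan.le.trans (le_max_right _ _)
      rw [hW]
      exact mul_le_of_le hθ (le_max_left _ _) (hcont.trans (le_max_right _ _))
    · refine max_le ?_ (hfan.symm.le.trans (mk_tooth_le h0 (hp P) PUnit.unit))
      refine (hW.symm.le.trans ?_).trans (mk_base_le (B := Chain (m P)) h0)
      have := exists_link_open (hm P)
      choose q hq hq0 using this
      exact mk_le_of_injective (f := fun w => (⟨q w, hq w⟩ : Chain (m P))) fun w u h => by
        have hqq : q w = q u := congrArg Subtype.val h
        exact link_open (hq w) (hq0 w) (hqq ▸ hq0 u)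
  · intro P Q hPQ f hf
    obtain ⟨G, hGc, hGi, hGm⟩ := exists_ambient (A := R P) (B := R Q) (f := f) hf
    have hin : ∀ x ∈ Chain (m P), (x, 0) ∈ R P := fun x hx => base_mem h0 hx
    have hc : ContinuousOn (fun x => G (x, 0)) (Chain (m P)) :=
      hGc.comp (by fun_prop) hin
    have hi : Set.InjOn (fun x => G (x, 0)) (Chain (m P)) := fun x hx y hy h =>
      congrArg Prod.fst (hGi (hin x hx) (hin y hy) h)
    -- the cells are cyclic, hence not mapped into the fan
    have hbase : ∀ x ∈ Chain (m P), (G (x, 0)).2 = 0 := by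
      intro x hx
      obtain ⟨w, hw⟩ := cell_cover hx
      have hsub : cell (m P) w ⊆ Chain (m P) := fun y hy => hy.1
      have hC := (cyc_cell (hm0 P) w).image (hc.mono hsub) (hi.mono hsub)
      have hCR : (fun x => G (x, 0)) '' cell (m P) w ⊆ R Q := by
        rintro _ ⟨y, hy, rfl⟩
        exact hGm (hin y (hsub hy))
      rcases cyc_res hpi hC hCR with h | ⟨j, h⟩
      · exact h _ ⟨x, hw, rfl⟩
      · refine (not_cyc_fan ?_ (hC.image (continuous_snd_apply j).continuousOn ?_)).elim
        · rintro _ ⟨y, hy, rfl⟩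
          exact ((hCR hy).2 j).1
        · intro y hy z hz hyz
          rw [eq_tooth hpi (hCR hy) (h y hy), eq_tooth hpi (hCR hz) (h z hz)]
          exact congrArg (tooth p j) hyz
    refine hPQ (hrig P Q (fun x => (G (x, 0)).1) (continuous_fst.comp_continuousOn hc) ?_
      fun x hx => (hGm (hin x hx)).1)
    intro x hx y hy h
    exact hi hx hy (Prod.ext h ((hbase x hx).trans (hbase y hy).symm))

/-- First countable compacta of the size of the continuum: chains over a fixed countable index set
are attached to the points of a subset of an interval. -/
theorem exists_small {κ : Cardinal.{u}} (hκ : ℵ₀ ≤ κ) (hκc : κ ≤ 𝔠) :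
    ∃ (ι : Type u) (X : ι → TopCat.{u}), #ι = 2 ^ κ ∧
      (∀ i, CompactSpace ↥(X i) ∧ T2Space ↥(X i) ∧ PathConnectedSpace ↥(X i) ∧
        wt ↥(X i) = κ ∧ #↥(X i) = 𝔠 ∧ FirstCountableTopology ↥(X i)) ∧ IncompFamily X := by
  classical
  obtain ⟨W, _, _, ⟨_⟩, _, hW⟩ := exists_order (le_refl ℵ₀)
  have : Countable W := mk_le_aleph0_iff.1 hW.le
  obtain ⟨m, hm, hrig⟩ := exists_family W
  have hm0 : ∀ P w, 0 < m P w := fun P w => lt_of_lt_of_le (by norm_num) (hm P w)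
  let K := κ.out
  have hK : #K = κ := mk_out κ
  obtain ⟨h⟩ : #(K ⊕ K) ≤ #(Set W) := by
    rw [mk_sum, lift_id, hK, add_eq_self hκ, mk_set, hW, two_power_aleph0]
    exact hκc
  obtain ⟨q⟩ : Nonempty (K ↪ Set.Icc (0 : ℝ) 1) := by
    rw [← lift_mk_le', mk_Icc_real zero_lt_one, hK]
    simpa using hκc
  -- for each `a`, the two elements of the sum that come from `a` index the two chains
  let σ : Set K → K → K ⊕ K := fun P a => if a ∈ P then Sum.inl a else Sum.inr a
  let c : ℝ → ℝ × (W → ℝ × ℝ) := fun t => (t, 0)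
  have hcc : Continuous c := by fun_prop
  have hci : Function.Injective c := fun _ _ h => congrArg Prod.fst h
  let B : Set (ℝ × (W → ℝ × ℝ)) := c '' Set.Icc 0 1
  let p : K → ℝ × (W → ℝ × ℝ) := fun a => c (q a)
  let D : Set K → K → Set (ℝ × (W → ℝ × ℝ)) := fun P a => Chain (m (h (σ P a)))
  let R : Set K → Set ((ℝ × (W → ℝ × ℝ)) × (K → ℝ × (W → ℝ × ℝ))) := fun P => res B p (D P)
  have hpi : Function.Injective p := fun a b hab => q.injective (Subtype.ext (hci hab))
  have h0 : ∀ P j, 0 ∈ D P j := fun P j => (zero_mem_cell (hm0 _) ⊤).1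
  have hp : ∀ j, p j ∈ B := fun j => ⟨_, (q j).2, rfl⟩
  have hcomp : ∀ P, IsCompact (R P) := fun P =>
    isCompact_res (isCompact_Icc.image hcc) fun _ => isCompact_Chain _
  have hB : #B = 𝔠 := by
    have := mk_image_eq_lift c (Set.Icc 0 1) hci
    rw [mk_Icc_real zero_lt_one] at this
    simpa using this
  have hexl : ∀ P a, ∃ d ∈ D P a, d ≠ 0 := fun P a => by
    obtain ⟨d, hd, hd0⟩ := exists_link_open (hm (h (σ P a))) ⊤
    refine ⟨d, hd, ?_⟩
    rintro rfl
    exact hd0 rfl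
  refine ⟨Set K, fun P => TopCat.of (R P), by rw [mk_set, hK],
    fun P => ⟨?_, ?_, ?_, ?_, ?_, ?_⟩, ?_⟩
  · exact isCompact_iff_compactSpace.1 (hcomp P)
  · exact inferInstanceAs (T2Space (R P))
  · exact isPathConnected_iff_pathConnectedSpace.1 (isPathConnected_res
      (((convex_Icc (0 : ℝ) 1).isPathConnected ⟨0, by simp⟩).image hcc)
      (fun _ => isPathConnected_Chain (hm0 _)) (h0 P) hp hpi)
  · apply le_antisymm
    · refine wt_le hκ (HasSubbasis.induced ?_ Subtype.val)
      have hr := HasSubbasis.real hκ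
      have hr' := hr.prod hκ ((hr.prod hκ hr).pi hκ (hW.le.trans hκ))
      exact hr'.prod hκ (hr'.pi hκ hK.le)
    · have e : ∀ a, Continuous fun x : R P => x.1.2 a := fun a => by fun_prop
      refine hK.symm.le.trans (le_wt (X := R P) (fun a => {x : R P | x.1.2 a ≠ 0})
        (fun a => isOpen_ne_fun (e a) continuous_const) (fun a => ?_) fun a b x ha hb =>
          hpi (((x.2.2 a).2.resolve_left ha).symm.trans ((x.2.2 b).2.resolve_left hb)))
      obtain ⟨d, hd, hd0⟩ := hexl P a
      exact ⟨⟨tooth p a d, tooth_mem (h0 P) hp hd⟩, by simpa [tooth_snd] using hd0⟩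
  · change #(R P) = 𝔠
    apply le_antisymm
    · refine mk_res_le hpi aleph0_le_continuum hB.le (hK.le.trans hκc) fun _ =>
        mk_Chain_le.trans ?_
      rw [hW]
      exact mul_le_of_le aleph0_le_continuum aleph0_le_continuum le_rfl
    · exact hB.symm.le.trans (mk_base_le (h0 P))
  · exact firstCountable_res hpi (hcomp P)
  · intro P Q hPQ f hf
    obtain ⟨G, hGc, hGi, hGm⟩ := exists_ambient (A := R P) (B := R Q) (f := f) hf
    -- each chain attached in the first space is mapped into a chain attached in the second one
    have key : ∀ a, σ P a = σ Q a := by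
      intro a
      have hin : ∀ x ∈ D P a, tooth p a x ∈ R P := fun x hx => tooth_mem (h0 P) hp hx
      have hc : ContinuousOn (fun x => G (tooth p a x)) (D P a) :=
        hGc.comp (continuous_tooth a).continuousOn hin
      have hi : Set.InjOn (fun x => G (tooth p a x)) (D P a) := fun x hx y hy h =>
        tooth_injective a (hGi (hin x hx) (hin y hy) h)
      have hsub : ∀ w, cell (m (h (σ P a))) w ⊆ D P a := fun w y hy => hy.1
      -- the base is an interval, hence does not contain the image of a cell
      have hcell : ∀ w, ∃ b, ∀ x ∈ cell (m (h (σ P a))) w, (G (tooth p a x)).1 = p b := by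
        intro w
        have hC := (cyc_cell (hm0 (h (σ P a))) w).image (hc.mono (hsub w)) (hi.mono (hsub w))
        have hCR : (fun x => G (tooth p a x)) '' cell (m (h (σ P a))) w ⊆ R Q := by
          rintro _ ⟨y, hy, rfl⟩
          exact hGm (hin y (hsub w hy))
        rcases cyc_res hpi hC hCR with hh | ⟨b, hb⟩
        · refine (not_cyc_of_injOn (f := fun x => x.1.1) (by fun_prop) ?_ hC).elim
          intro x hx y hy hxy
          obtain ⟨s, hs, hsx⟩ := (hCR hx).1
          obtain ⟨t, ht, hty⟩ := (hCR hy).1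
          refine Prod.ext ?_ ((hh x hx).trans (hh y hy).symm)
          rw [← hsx, ← hty]
          have hst : x.1.1 = y.1.1 := hxy
          rw [← hsx, ← hty] at hst
          exact congrArg c hst
        · exact ⟨b, fun x hx => hb _ ⟨x, hx, rfl⟩⟩
      obtain ⟨b, hb⟩ := hcell ⊤
      -- all the cells share the apex, hence are mapped to the same chain
      have hall : ∀ x ∈ D P a, (G (tooth p a x)).1 = p b := by
        intro x hx
        obtain ⟨w, hw⟩ := cell_cover hx
        obtain ⟨b', hb'⟩ := hcell w
        rw [hb' x hw, ← hb' 0 (zero_mem_cell (hm0 _) w), hb 0 (zero_mem_cell (hm0 _) ⊤)]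
      have hab : σ P a = σ Q b := by
        refine h.injective (hrig _ _ (fun x => (G (tooth p a x)).2 b)
          ((continuous_snd_apply b).comp_continuousOn hc) ?_ fun x hx =>
            ((hGm (hin x hx)).2 b).1)
        intro x hx y hy hxy
        refine hi hx hy ?_
        dsimp only at hxy ⊢
        rw [eq_tooth hpi (hGm (hin x hx)) (hall x hx), eq_tooth hpi (hGm (hin y hy)) (hall y hy),
          hxy]
      have : a = b := by
        simp only [σ] at hab
        split_ifs at hab <;> simpa using hab
      rw [this] at hab ⊢
      exact hab
    refine hPQ (Set.ext fun a => ?_)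
    have := key a
    simp only [σ] at this
    split_ifs at this <;> tauto

/-! ### The choice of the parameters -/

/-- For `θ = max {κ, 𝔠}` or `θ = λ ^ ν(λ,κ)` with `λ ≤ κ` there exist `2 ^ κ` incomparable
path-connected compact Hausdorff spaces of weight `κ` and size `θ` (first countable when
`θ = 𝔠`); moreover for every infinite `μ ≤ κ` there exist `2 ^ κ` incomparable connected
compact Hausdorff spaces of weight `κ` and size `κ ^ μ`. -/
theorem incomparable_pathconnected_compacta (κ : Cardinal.{u}) (hκ : ℵ₀ ≤ κ) :
    (∀ θ : Cardinal.{u},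
      (θ = max κ 𝔠 ∨ ∃ l : Cardinal.{u}, ℵ₀ ≤ l ∧ l ≤ κ ∧ θ = l ^ nuC l κ) →
      ∃ (ι : Type u) (X : ι → TopCat.{u}),
        #ι = 2 ^ κ ∧
        (∀ i, CompactSpace ↥(X i) ∧ T2Space ↥(X i) ∧ PathConnectedSpace ↥(X i) ∧
          wt ↥(X i) = κ ∧ #↥(X i) = θ ∧
          (θ = 𝔠 → FirstCountableTopology ↥(X i))) ∧
        IncompFamily X) ∧
    (∀ μ : Cardinal.{u}, ℵ₀ ≤ μ → μ ≤ κ →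
      ∃ (ι : Type u) (X : ι → TopCat.{u}),
        #ι = 2 ^ κ ∧
        (∀ i, CompactSpace ↥(X i) ∧ T2Space ↥(X i) ∧ ConnectedSpace ↥(X i) ∧
          wt ↥(X i) = κ ∧ #↥(X i) = κ ^ μ) ∧
        IncompFamily X) := by
  refine ⟨fun θ hθ => ?_, fun μ hμ hμκ => ?_⟩
  · obtain ⟨l, ν, hl, hlκ, hν, hνκ, rfl⟩ : ∃ l ν : Cardinal.{u}, ℵ₀ ≤ l ∧ l ≤ κ ∧ ℵ₀ ≤ ν ∧
        ν ≤ κ ∧ θ = max κ (l ^ ν) := by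
      rcases hθ with rfl | ⟨l, hl, hlκ, rfl⟩
      · exact ⟨ℵ₀, ℵ₀, le_rfl, hκ, le_rfl, hκ, by rw [aleph0_power_aleph0]⟩
      · have hmem : κ < l ^ κ :=
          (cantor κ).trans_le (power_le_power_right (natCast_lt_aleph0.le.trans hl))
        have hlt : κ < l ^ nuC l κ := csInf_mem (s := {m : Cardinal.{u} | κ < l ^ m}) ⟨κ, hmem⟩
        refine ⟨l, nuC l κ, hl, hlκ, ?_, csInf_le' hmem, (max_eq_right hlt.le).symm⟩
        by_contra hν
        obtain ⟨n, hn⟩ := lt_aleph0.1 (not_le.1 hν)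
        rw [hn] at hlt
        exact absurd ((power_nat_le hl).trans hlκ) (not_le.2 hlt)
    by_cases hc : max κ (l ^ ν) = 𝔠
    · obtain ⟨ι, X, hι, hX, hinc⟩ := exists_small hκ ((le_max_left _ _).trans hc.le)
      refine ⟨ι, X, hι, fun i => ?_, hinc⟩
      obtain ⟨h1, h2, h3, h4, h5, h6⟩ := hX i
      exact ⟨h1, h2, h3, h4, h5.trans hc.symm, fun _ => h6⟩
    · obtain ⟨ι, X, hι, hX, hinc⟩ := exists_large hκ hl hlκ hν hνκ
      refine ⟨ι, X, hι, fun i => ?_, hinc⟩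
      obtain ⟨h1, h2, h3, h4, h5⟩ := hX i
      exact ⟨h1, h2, h3, h4, h5, fun h => absurd h hc⟩
  · obtain ⟨ι, X, hι, hX, hinc⟩ := exists_large hκ hκ le_rfl hμ hμκ
    refine ⟨ι, X, hι, fun i => ?_, hinc⟩
    obtain ⟨h1, h2, h3, h4, h5⟩ := hX i
    exact ⟨h1, h2, inferInstance, h4,
      h5.trans (max_eq_right (self_le_power κ (one_le_aleph0.trans hμ)))⟩
end

section
/- There exists a family of 𝔠 incomparable path-connected compact subspaces of the Euclidean space ℝ³. -/
/-!
Let `K` be a nondegenerate continuum and `γ : ℝ → K` a continuous curve that rests at a point `k₀`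
up to time `0` and afterwards accumulates at every point of `K`. The graph of `γ` together with
the fibre over `∞` is a compactification `W γ ⊆ K × (ℝ ∪ {∞})` of the line with remainder `K`. It
is path-connected if `K` is, because `γ` is at rest near `-∞`.

Both pieces of the line minus a point accumulate at `K`, so no point separates `W γ`; on the other
hand, two points of the line cut off the arc between them. It follows that a nondegenerate
connected subset of `W γ` that is separated by none of its points and that misses a point of the
line is contained in `K`. If any two points of `K'` are separated by a third one (so that `K'` is a
dendrite), no nondegenerate connected subset of `K'` is of that kind, and hence every embedding
`W γ → W γ'` is onto (`RaySpace.surjective_of_injective`). It is then a homeomorphism, and since `K`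
is recovered from `W γ` as the closure of the set of points that belong to no cut pair, it
restricts to a homeomorphism `K ≃ₜ K'` (`RaySpace.nonempty_homeomorph_of_injective`).

It therefore suffices to find `𝔠` pairwise non-homeomorphic planar dendrites. For `S ⊆ ℕ` the comb
`K_S` has, for every `n ∈ S`, exactly `n + 1` teeth at the point `2 ^ (-n - 1)` of its spine
`[0, 1]`. That point has order `n + 3`, and all points that carry no tooth have order at most two,
so `K_S` determines `S` (`CombSpace.subset_of_homeomorph`). The comb is drawn in a half-plane
(`CombSpace.draw_injective`), and rotating this drawing about the axis embeds `K_S × (ℝ ∪ {∞})`,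
hence `W γ`, in `ℝ³`.
-/

open Cardinal Topology

namespace RaySpace

open Set Filter OnePoint

/-! ### Compactifications of a line by a continuum -/

/-- The curve is a concatenation of loops at `k₀`, the `n`-th of which, run through on `[n, n + 1]`,
goes to a point of a dense sequence and back. -/
theorem exists_dense_ray (K : Type) [TopologicalSpace K] [PathConnectedSpace K]
    [TopologicalSpace.SeparableSpace K] (k₀ : K) :
    ∃ γ : ℝ → K, Continuous γ ∧ (∀ t ≤ 0, γ t = k₀) ∧ ∀ k, MapClusterPt k atTop γ := by
  have : Nonempty K := ⟨k₀⟩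
  let d := TopologicalSpace.denseSeq K
  -- The index `n.unpair.1` takes every value infinitely often, so every `d m` is visited
  -- infinitely often.
  let p : ℕ → Path k₀ k₀ := fun n =>
    (PathConnectedSpace.somePath k₀ (d n.unpair.1)).trans
      (PathConnectedSpace.somePath k₀ (d n.unpair.1)).symm
  let q : ℤ → Path k₀ k₀ := fun n => if n < 0 then Path.refl k₀ else p n.toNat
  refine ⟨fun t => (q ⌊t⌋).extend (Int.fract t), ?_, ?_, ?_⟩
  · have hlf : LocallyFinite (fun n : ℤ => Icc (n : ℝ) (n + 1)) := by
      intro x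
      refine ⟨Ioo (x - 1) (x + 1), Ioo_mem_nhds (by linarith) (by linarith), ?_⟩
      refine (finite_Icc (⌊x⌋ - 3) (⌊x⌋ + 3)).subset ?_
      rintro n ⟨y, ⟨h1, h2⟩, h3, h4⟩
      have h5 := Int.floor_le x
      have h6 := Int.lt_floor_add_one x
      constructor
      · have : ((⌊x⌋ - 3 : ℤ) : ℝ) ≤ n := by push_cast; linarith
        exact_mod_cast this
      · have : (n : ℝ) ≤ ((⌊x⌋ + 3 : ℤ) : ℝ) := by push_cast; linarith
        exact_mod_cast this
    refine hlf.continuous ?_ (fun n => isClosed_Icc) ?_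
    · refine eq_univ_of_forall fun t => mem_iUnion.2 ⟨⌊t⌋, Int.floor_le t, ?_⟩
      exact (Int.lt_floor_add_one t).le
    · intro n
      have : ContinuousOn (fun t : ℝ => (q n).extend (t - n)) (Icc (n : ℝ) (n + 1)) :=
        ((q n).continuous_extend.comp (by fun_prop)).continuousOn
      refine this.congr ?_
      rintro t ⟨h1, h2⟩
      rcases h2.lt_or_eq with h | h
      · have : ⌊t⌋ = n := Int.floor_eq_iff.2 ⟨h1, h⟩
        simp only [Int.fract, this]
      · have : ⌊t⌋ = n + 1 := by rw [h]; simp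
        simp [Int.fract, h]
  · intro t ht
    rcases ht.lt_or_eq with h | h
    · have : ⌊t⌋ < 0 := Int.floor_lt.2 (by simpa using h)
      simp [q, this, Path.extend, IccExtend]
    · simp [h]
  · intro k
    rw [mapClusterPt_iff_frequently]
    intro U hU
    obtain ⟨m, hm⟩ : ∃ m, d m ∈ U := by
      obtain ⟨_, ⟨m, rfl⟩, h1⟩ := (TopologicalSpace.denseRange_denseSeq K).inter_nhds_nonempty hU
      exact ⟨m, h1⟩
    rw [frequently_atTop]
    intro a
    obtain ⟨N, hN⟩ := exists_nat_ge a
    have hle : (N : ℝ) ≤ (Nat.pair m N : ℝ) := by exact_mod_cast Nat.right_le_pair m N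
    have hfl : ⌊(Nat.pair m N : ℝ) + 1 / 2⌋ = (Nat.pair m N : ℤ) := by
      rw [Int.floor_eq_iff]; push_cast; constructor <;> linarith
    refine ⟨(Nat.pair m N : ℝ) + 1 / 2, by linarith, ?_⟩
    have : (q (Nat.pair m N : ℤ)).extend (1 / 2) = d m := by
      have h2 : (1 / 2 : ℝ) ∈ unitInterval := by constructor <;> norm_num
      rw [Path.extend_apply _ h2]
      have : ¬ ((Nat.pair m N : ℤ) < 0) := by lia
      simp only [q, this, if_false, p, Int.toNat_natCast]
      rw [Path.trans_apply, dif_pos (by simp)]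
      norm_num
    simp only [Int.fract, hfl]
    have h3 : (Nat.pair m N : ℝ) + 1 / 2 - ((Nat.pair m N : ℤ) : ℝ) = 1 / 2 := by
      push_cast; ring
    rw [h3, this]
    exact hm

/-- The compactification of the line by `K` along `γ : ℝ → K`: the graph of `γ` together with the
fibre `K × {∞}`, inside `K × OnePoint ℝ`. -/
abbrev W {K : Type} (γ : ℝ → K) : Type := {w : K × OnePoint ℝ // ∀ t : ℝ, w.2 = t → w.1 = γ t}

variable {K : Type}

/-- The line, as a subset of `W γ`. -/
def rho (γ : ℝ → K) (t : ℝ) : W γ := ⟨(γ t, (t : OnePoint ℝ)), fun s hs => by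
  rw [OnePoint.coe_eq_coe] at hs; simp [hs]⟩

/-- The remainder `K × {∞}`, as a subset of `W γ`. -/
def kap (γ : ℝ → K) (k : K) : W γ := ⟨(k, ∞), fun s hs => by simp at hs⟩

/-- The conditions under which `W γ` is a compactification of the line with remainder `K`: as
`t → +∞` the point `γ t` accumulates at every point of `K`, and as `t → -∞` it tends to `k₀`
(it is even equal to `k₀`, which makes `W γ` path-connected). -/
structure IsRay [TopologicalSpace K] (γ : ℝ → K) (k₀ : K) : Prop where
  cont : Continuous γ
  base : ∀ t ≤ 0, γ t = k₀
  clus : ∀ k, MapClusterPt k atTop γ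

theorem W_cases {γ : ℝ → K} (w : W γ) : (∃ t, w = rho γ t) ∨ ∃ k, w = kap γ k := by
  obtain ⟨⟨k, x⟩, h⟩ := w
  induction x using OnePoint.rec with
  | infty => exact Or.inr ⟨k, rfl⟩
  | coe t =>
    left
    refine ⟨t, Subtype.ext (Prod.ext ?_ rfl)⟩
    exact h t rfl

theorem rho_inj {γ : ℝ → K} {s t : ℝ} : rho γ s = rho γ t ↔ s = t := by
  constructor
  · intro h
    have := congrArg (fun w : W γ => w.1.2) h
    simpa [rho] using this
  · rintro rfl; rfl

theorem kap_inj {γ : ℝ → K} {s t : K} : kap γ s = kap γ t ↔ s = t := by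
  constructor
  · intro h
    exact congrArg (fun w : W γ => w.1.1) h
  · rintro rfl; rfl

theorem rho_ne_kap {γ : ℝ → K} {s : ℝ} {t : K} : rho γ s ≠ kap γ t := by
  intro h
  have := congrArg (fun w : W γ => w.1.2) h
  simp [rho, kap] at this

variable [TopologicalSpace K]

theorem continuous_kap (γ : ℝ → K) : Continuous (kap γ) :=
  Continuous.subtype_mk (by fun_prop) _

section

variable {γ : ℝ → K} {k₀ : K}

theorem IsRay.continuous_rho (h : IsRay γ k₀) : Continuous (rho γ) :=
  Continuous.subtype_mk (h.cont.prodMk OnePoint.continuous_coe) _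

theorem compactSpace_W [CompactSpace K] [T2Space K] (h : IsRay γ k₀) : CompactSpace (W γ) := by
  have hemb : IsOpenEmbedding (Prod.map (id : K → K) ((↑) : ℝ → OnePoint ℝ)) :=
    IsOpenEmbedding.id.prodMap OnePoint.isOpenEmbedding_coe
  have hcl : IsClosed {w : K × OnePoint ℝ | ∀ t : ℝ, w.2 = t → w.1 = γ t} := by
    have : {w : K × OnePoint ℝ | ∀ t : ℝ, w.2 = t → w.1 = γ t}ᶜ =
        Prod.map (id : K → K) ((↑) : ℝ → OnePoint ℝ) '' {p : K × ℝ | p.1 ≠ γ p.2} := by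
      ext ⟨k, x⟩
      simp only [mem_compl_iff, mem_ofPred_eq, not_forall, mem_image, Prod.exists, Prod.map,
        Prod.mk.injEq, id]
      constructor
      · rintro ⟨t, rfl, h⟩; exact ⟨k, t, h, rfl, rfl⟩
      · rintro ⟨k, t, h, rfl, rfl⟩; exact ⟨t, rfl, h⟩
    rw [← isOpen_compl_iff, this]
    refine hemb.isOpenMap _ ?_
    exact isOpen_ne_fun continuous_fst (h.cont.comp continuous_snd)
  exact isCompact_iff_compactSpace.1 hcl.isCompact

theorem isOpen_rho_image (γ : ℝ → K) {U : Set ℝ} (hU : IsOpen U) : IsOpen (rho γ '' U) := by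
  have : rho γ '' U = (fun w : W γ => w.1.2) ⁻¹' (((↑) : ℝ → OnePoint ℝ) '' U) := by
    ext w
    rcases W_cases w with ⟨t, rfl⟩ | ⟨k, rfl⟩
    · simp only [mem_image, mem_preimage, rho_inj]
      simp only [rho, OnePoint.coe_eq_coe]
    · simp only [mem_image, mem_preimage]
      constructor
      · rintro ⟨t, _, h⟩; exact (rho_ne_kap h).elim
      · rintro ⟨t, _, h⟩; simp [kap] at h
  rw [this]
  exact (OnePoint.isOpenEmbedding_coe.isOpenMap U hU).preimage
    (continuous_snd.comp continuous_subtype_val)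

theorem IsRay.isClosed_rho_Icc [T2Space K] (h : IsRay γ k₀) (a b : ℝ) :
    IsClosed (rho γ '' Icc a b) :=
  (isCompact_Icc.image h.continuous_rho).isClosed

theorem IsRay.kap_mem_closure (h : IsRay γ k₀) (a : ℝ) (k : K) :
    kap γ k ∈ closure (rho γ '' Ioi a) := by
  rw [closure_subtype, mem_closure_iff_nhds]
  intro U hU
  obtain ⟨V, hV, V', hV', hVU⟩ := mem_nhds_prod_iff.1 hU
  have h1 := (mapClusterPt_iff_frequently.1 (h.clus k)) V hV
  have h2 : ∀ᶠ t : ℝ in atTop, (t : OnePoint ℝ) ∈ V' := by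
    have := OnePoint.tendsto_coe_infty (X := ℝ)
    rw [coclosedCompact_eq_cocompact] at this
    exact (this.mono_left atTop_le_cocompact) hV'
  obtain ⟨t, ht, ht', hat⟩ := (h1.and_eventually (h2.and (eventually_gt_atTop a))).exists
  exact ⟨(γ t, (t : OnePoint ℝ)), hVU ⟨ht, ht'⟩, rho γ t, ⟨t, hat, rfl⟩, rfl⟩

theorem IsRay.tendsto_rho_atBot (h : IsRay γ k₀) : Tendsto (rho γ) atBot (𝓝 (kap γ k₀)) := by
  rw [tendsto_subtype_rng]
  refine Tendsto.prodMk_nhds (tendsto_const_nhds.congr' ?_) ?_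
  · filter_upwards [eventually_le_atBot 0] with t ht using (h.base t ht).symm
  · have := OnePoint.tendsto_coe_infty (X := ℝ)
    rw [coclosedCompact_eq_cocompact] at this
    exact this.mono_left atBot_le_cocompact

theorem IsRay.kap_base_mem_closure (h : IsRay γ k₀) (a : ℝ) :
    kap γ k₀ ∈ closure (rho γ '' Iio a) :=
  mem_closure_of_tendsto h.tendsto_rho_atBot
    ((eventually_lt_atBot a).mono fun t ht => ⟨t, ht, rfl⟩)

theorem IsRay.dense_rho (h : IsRay γ k₀) : Dense (range (rho γ)) := by
  intro w
  rcases W_cases w with ⟨t, rfl⟩ | ⟨k, rfl⟩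
  · exact subset_closure ⟨t, rfl⟩
  · exact closure_mono (image_subset_range _ _) (h.kap_mem_closure 0 k)

theorem IsRay.pathConnectedSpace_W [PathConnectedSpace K] (h : IsRay γ k₀) :
    PathConnectedSpace (W γ) := by
  have hk : ∀ k, Joined (kap γ k₀) (kap γ k) := fun k =>
    (PathConnectedSpace.joined k₀ k).map (continuous_kap γ)
  have hr : ∀ t, Joined (rho γ 0) (rho γ t) := fun t =>
    (PathConnectedSpace.joined (0 : ℝ) t).map h.continuous_rho
  -- The curve `s ↦ rho (1 - 1 / s)`, extended by `kap k₀` at `s = 0`.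
  have h0 : Joined (kap γ k₀) (rho γ 0) := by
    have hc : Continuous (fun s : unitInterval =>
        if (s : ℝ) = 0 then kap γ k₀ else rho γ (1 - (s : ℝ)⁻¹)) := by
      rw [continuous_iff_continuousAt]
      intro s
      by_cases hs : (s : ℝ) = 0
      · have h0 : Tendsto (fun x : unitInterval => (x : ℝ)) (𝓝[≠] s) (𝓝[>] 0) := by
          refine tendsto_nhdsWithin_iff.2 ⟨?_, ?_⟩
          · rw [← hs]
            exact continuous_subtype_val.continuousAt.tendsto.mono_left nhdsWithin_le_nhds
          · filter_upwards [self_mem_nhdsWithin] with x hx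
            refine lt_of_le_of_ne x.2.1 fun hx0 => hx (Subtype.ext ?_)
            rw [hs, ← hx0]
        have h1 : Tendsto (fun x : unitInterval => 1 - (x : ℝ)⁻¹) (𝓝[≠] s) atBot :=
          tendsto_atBot_add_const_left _ 1
            (tendsto_neg_atTop_atBot.comp (tendsto_inv_nhdsGT_zero.comp h0))
        rw [continuousAt_iff_punctured_nhds, if_pos hs]
        refine (h.tendsto_rho_atBot.comp h1).congr' ?_
        filter_upwards [self_mem_nhdsWithin] with x hx
        have : (x : ℝ) ≠ 0 := fun hx0 => hx (Subtype.ext (hx0.trans hs.symm))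
        simp [this]
      · have h1 : ContinuousAt (fun s : unitInterval => rho γ (1 - (s : ℝ)⁻¹)) s :=
          h.continuous_rho.continuousAt.comp
            (continuousAt_const.sub (continuous_subtype_val.continuousAt.inv₀ hs))
        refine h1.congr ?_
        filter_upwards [continuous_subtype_val.continuousAt.eventually_ne hs] with x hx
        rw [if_neg hx]
    refine ⟨⟨⟨_, hc⟩, ?_, ?_⟩⟩ <;> simp
  refine ⟨⟨kap γ k₀⟩, ?_⟩
  have : ∀ w, Joined (kap γ k₀) w := by
    intro w
    rcases W_cases w with ⟨t, rfl⟩ | ⟨k, rfl⟩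
    · exact h0.trans (hr t)
    · exact hk k
  exact fun x y => (this x).symm.trans (this y)

/-- Both pieces of the line minus a point remain attached to `K \ Z`: the one at `+∞` because it
accumulates on all of `K`, the one at `-∞` because it tends to `k₀`. -/
theorem IsRay.isPreconnected_compl (h : IsRay γ k₀) (t : ℝ) (Z : Set K) (hZ : k₀ ∉ Z) :
    IsPreconnected {w : W γ | w ≠ rho γ t ∧ w ∉ kap γ '' Z} := by
  have h1 : IsPreconnected (rho γ '' Ioi t ∪ kap γ '' Zᶜ) := by
    refine (isPreconnected_Ioi.image _ h.continuous_rho.continuousOn).subset_closure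
      subset_union_left (union_subset subset_closure ?_)
    rintro _ ⟨k, _, rfl⟩
    exact h.kap_mem_closure t k
  have h2 : IsPreconnected (rho γ '' Iio t ∪ {kap γ k₀}) := by
    refine (isPreconnected_Iio.image _ h.continuous_rho.continuousOn).subset_closure
      subset_union_left (union_subset subset_closure ?_)
    rintro _ rfl
    exact h.kap_base_mem_closure t
  have h3 := h1.union (kap γ k₀) (Or.inr ⟨k₀, hZ, rfl⟩) (Or.inr rfl) h2
  convert h3 using 1
  ext w
  rcases W_cases w with ⟨s, rfl⟩ | ⟨k, rfl⟩
  · have : ∀ Y : Set K, rho γ s ∉ kap γ '' Y := by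
      rintro Y ⟨k, _, hk⟩; exact rho_ne_kap hk.symm
    simp only [mem_ofPred_eq, mem_union, mem_singleton_iff, this,
      not_false_eq_true, and_true, or_false, Ne, rho_ne_kap, rho_inj]
    simp only [mem_image, rho_inj, exists_eq_right, mem_Ioi, mem_Iio]
    rw [or_comm]
    exact ne_iff_lt_or_gt
  · have : ∀ Y : Set ℝ, kap γ k ∉ rho γ '' Y := by
      rintro Y ⟨k, _, hk⟩; exact rho_ne_kap hk
    have h4 : ∀ Y : Set K, kap γ k ∈ kap γ '' Y ↔ k ∈ Y := by simp [mem_image, kap_inj]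
    simp only [mem_ofPred_eq, mem_union, this, h4, mem_singleton_iff, kap_inj, mem_compl_iff]
    constructor
    · rintro ⟨_, h⟩; exact Or.inl (Or.inr h)
    · rintro ((h | h) | (h | h))
      · exact h.elim
      · exact ⟨rho_ne_kap.symm, h⟩
      · exact h.elim
      · exact ⟨rho_ne_kap.symm, h ▸ hZ⟩

theorem IsRay.isPreconnected_compl_kap (h : IsRay γ k₀) (Z : Set K) :
    IsPreconnected ((kap γ '' Z)ᶜ) := by
  refine (isPreconnected_range h.continuous_rho).subset_closure ?_ ?_
  · rintro _ ⟨t, rfl⟩ ⟨k, _, hk⟩; exact rho_ne_kap hk.symm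
  · rw [h.dense_rho.closure_eq]; exact subset_univ _

theorem IsRay.isPreconnected_compl_singleton (h : IsRay γ k₀) (w : W γ) :
    IsPreconnected ({w}ᶜ : Set (W γ)) := by
  rcases W_cases w with ⟨s, rfl⟩ | ⟨k, rfl⟩
  · simpa [compl_def] using h.isPreconnected_compl s ∅ (by simp)
  · simpa using h.isPreconnected_compl_kap {k}

/-- The points `x` such that no `{x, y}` separates the space (`y = x` included); in `W γ` these are
exactly the points of the remainder `K` other than `k₀`. -/
def Core (X : Type) [TopologicalSpace X] : Set X := {x | ∀ y, IsPreconnected ({x, y}ᶜ : Set X)}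

theorem IsRay.kap_mem_Core (h : IsRay γ k₀) {k : K} (hk : k ≠ k₀) : kap γ k ∈ Core (W γ) := by
  intro w
  rcases W_cases w with ⟨s, rfl⟩ | ⟨k', rfl⟩
  · have := h.isPreconnected_compl s {k} (by simpa using hk.symm)
    convert this using 1
    ext w; simp [and_comm]
  · have := h.isPreconnected_compl_kap {k, k'}
    rwa [image_pair] at this

/-- A subset of `W γ` that no point separates, and that misses an end of an open arc of the line,
is either disjoint from the arc or contained in its closure. -/
theorem IsRay.arc_dichotomy [T2Space K] (h : IsRay γ k₀) {C : Set (W γ)}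
    (hC : ∀ w, IsPreconnected (C \ {w})) {a b : ℝ}
    (hab : rho γ a ∉ C ∨ rho γ b ∉ C) :
    (∀ s ∈ Ioo a b, rho γ s ∉ C) ∨ ∀ w ∈ C, w ∈ rho γ '' Icc a b := by
  by_contra! hcon
  obtain ⟨⟨s, hs, hsC⟩, w, hw, hwI⟩ := hcon
  -- With one end of the arc not in `C`, removing the other end `e` from `C` isolates the arc.
  obtain ⟨e, he, heC⟩ : ∃ e, e ∈ rho γ '' Icc a b ∧ rho γ s ≠ e ∧
      ∀ x ∈ C \ {e}, x ≠ rho γ a ∧ x ≠ rho γ b := by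
    have hI := hs.1.trans hs.2
    rcases hab with hab | hab
    · refine ⟨rho γ b, ⟨b, ⟨hI.le, le_rfl⟩, rfl⟩, ?_, ?_⟩
      · rw [Ne, rho_inj]; exact hs.2.ne
      · rintro x ⟨hx, hxb⟩; exact ⟨fun h => hab (h ▸ hx), hxb⟩
    · refine ⟨rho γ a, ⟨a, ⟨le_rfl, hI.le⟩, rfl⟩, ?_, ?_⟩
      · rw [Ne, rho_inj]; exact hs.1.ne'
      · rintro x ⟨hx, hxb⟩; exact ⟨hxb, fun h => hab (h ▸ hx)⟩
  obtain ⟨x, hx, hx1, hx2⟩ := hC e (rho γ '' Ioo a b) (rho γ '' Icc a b)ᶜ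
    (isOpen_rho_image γ isOpen_Ioo) (h.isClosed_rho_Icc a b).isOpen_compl (by
      intro x hx
      by_cases hxI : x ∈ rho γ '' Icc a b
      · left
        obtain ⟨r, hr, rfl⟩ := hxI
        have := heC.2 _ hx
        rw [Ne, Ne, rho_inj, rho_inj] at this
        exact ⟨r, ⟨lt_of_le_of_ne hr.1 (Ne.symm this.1), lt_of_le_of_ne hr.2 this.2⟩, rfl⟩
      · exact Or.inr hxI)
    ⟨rho γ s, ⟨hsC, heC.1⟩, s, hs, rfl⟩ ⟨w, ⟨hw, fun h => hwI (h ▸ he)⟩, hwI⟩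
  exact hx2 (image_mono Ioo_subset_Icc_self hx1)

/-- Two points of the line form a cut pair: the arc between them is cut off from `K`. -/
theorem IsRay.rho_notMem_Core [T2Space K] (h : IsRay γ k₀) (t : ℝ) : rho γ t ∉ Core (W γ) := by
  intro hcore
  obtain ⟨x, hx, hx1, hx2⟩ := hcore (rho γ (t + 2)) (rho γ '' Ioo t (t + 2))
    (rho γ '' Icc t (t + 2))ᶜ (isOpen_rho_image γ isOpen_Ioo)
    (h.isClosed_rho_Icc _ _).isOpen_compl (by
      intro x hx
      by_cases hxI : x ∈ rho γ '' Icc t (t + 2)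
      · left
        obtain ⟨r, hr, rfl⟩ := hxI
        simp only [mem_compl_iff, mem_insert_iff, mem_singleton_iff, rho_inj, not_or] at hx
        exact ⟨r, ⟨lt_of_le_of_ne hr.1 (Ne.symm hx.1), lt_of_le_of_ne hr.2 hx.2⟩, rfl⟩
      · exact Or.inr hxI)
    ⟨rho γ (t + 1), by simp [rho_inj], t + 1, ⟨by linarith, by linarith⟩, rfl⟩
    ⟨kap γ k₀, by simp [rho_ne_kap.symm], by
      rintro ⟨s, _, hs⟩; exact rho_ne_kap hs⟩
  exact hx2 (image_mono Ioo_subset_Icc_self hx1)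

theorem IsRay.closure_Core [CompactSpace K] [T2Space K] [ConnectedSpace K] [Nontrivial K]
    (h : IsRay γ k₀) : closure (Core (W γ)) = range (kap γ) := by
  apply subset_antisymm
  · refine closure_minimal ?_ (isCompact_range (continuous_kap γ)).isClosed
    intro w hw
    rcases W_cases w with ⟨s, rfl⟩ | ⟨k', rfl⟩
    · exact (h.rho_notMem_Core s hw).elim
    · exact ⟨k', rfl⟩
  · have hd : Dense ({k₀}ᶜ : Set K) := dense_compl_singleton k₀
    have : range (kap γ) ⊆ closure (kap γ '' {k₀}ᶜ) := by
      rw [← image_univ, ← hd.closure_eq]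
      exact image_closure_subset_closure_image (continuous_kap γ)
    refine this.trans (closure_mono ?_)
    rintro _ ⟨k, hk, rfl⟩
    exact h.kap_mem_Core hk

end

/-! ### Rigidity of these compactifications -/

section

theorem isPreconnected_range_diff {X Y : Type} [TopologicalSpace X] [TopologicalSpace Y]
    [PreconnectedSpace X] (hX : ∀ x : X, IsPreconnected ({x}ᶜ : Set X)) {f : X → Y}
    (hf : Continuous f) (hi : Function.Injective f) (y : Y) :
    IsPreconnected (range f \ {y}) := by
  by_cases hy : y ∈ range f
  · obtain ⟨x, rfl⟩ := hy
    rw [← image_singleton, ← image_univ, ← image_sdiff hi, ← compl_eq_univ_sdiff]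
    exact (hX x).image _ hf.continuousOn
  · rw [sdiff_singleton_eq_self hy]
    exact isPreconnected_range hf

/-- Any two points are separated by a third one. Among metrizable continua, this characterizes
dendrites. -/
def PointSep (X : Type) [TopologicalSpace X] : Prop :=
  ∀ a b : X, a ≠ b → ∃ (p : X) (U V : Set X), IsOpen U ∧ IsOpen V ∧ Disjoint U V ∧
    U ∪ V = {p}ᶜ ∧ a ∈ U ∧ b ∈ V

variable {K K' : Type} [TopologicalSpace K] [TopologicalSpace K'] [CompactSpace K] [T2Space K]
  [T2Space K'] {γ : ℝ → K} {γ' : ℝ → K'} {k₀ : K} {k₀' : K'} [PathConnectedSpace K]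
  [Nontrivial K]

/-- A nondegenerate set that no point separates and that misses one point of the line misses the
whole line. Otherwise the arc dichotomy, applied to arcs ending at the missed point, would pin any
two points of the set down to one. -/
theorem IsRay.rho_notMem_of_rho_notMem {K : Type} [TopologicalSpace K] [T2Space K]
    {γ : ℝ → K} {k₀ : K} (h : IsRay γ k₀) {C : Set (W γ)}
    (hC : ∀ w, IsPreconnected (C \ {w})) (hnt : C.Nontrivial) {t : ℝ} (ht : rho γ t ∉ C) (a : ℝ) :
    rho γ a ∉ C := by
  intro ha
  obtain ⟨y, hy, hya⟩ := hnt.exists_ne (rho γ a)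
  rcases lt_trichotomy a t with hat | rfl | hat
  · have h1 := (h.arc_dichotomy hC (a := a - 1) (b := t) (Or.inr ht)).resolve_left
      (fun h => h a ⟨by linarith, hat⟩ ha) y hy
    obtain ⟨b, hb, rfl⟩ := h1
    rw [Ne, rho_inj] at hya
    have hbt : b ≠ t := fun h => ht (h ▸ hy)
    rcases lt_or_gt_of_ne hya with hlt | hlt
    · have := (h.arc_dichotomy hC (a := (a + b) / 2) (b := t) (Or.inr ht)).resolve_left
        (fun h => h a ⟨by linarith, hat⟩ ha) _ hy
      obtain ⟨c, hc, hcb⟩ := this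
      rw [rho_inj] at hcb
      linarith [hc.1]
    · have := (h.arc_dichotomy hC (a := (a + b) / 2) (b := t) (Or.inr ht)).resolve_left
        (fun h => h b ⟨by linarith, lt_of_le_of_ne hb.2 hbt⟩ hy) _ ha
      obtain ⟨c, hc, hcb⟩ := this
      rw [rho_inj] at hcb
      linarith [hc.1]
  · exact ht ha
  · have h1 := (h.arc_dichotomy hC (a := t) (b := a + 1) (Or.inl ht)).resolve_left
      (fun h => h a ⟨hat, by linarith⟩ ha) y hy
    obtain ⟨b, hb, rfl⟩ := h1
    rw [Ne, rho_inj] at hya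
    have hbt : t ≠ b := fun h => ht (h ▸ hy)
    rcases lt_or_gt_of_ne hya with hlt | hlt
    · have := (h.arc_dichotomy hC (a := t) (b := (a + b) / 2) (Or.inl ht)).resolve_left
        (fun h => h b ⟨lt_of_le_of_ne hb.1 hbt, by linarith⟩ hy) _ ha
      obtain ⟨c, hc, hcb⟩ := this
      rw [rho_inj] at hcb
      linarith [hc.2]
    · have := (h.arc_dichotomy hC (a := t) (b := (a + b) / 2) (Or.inl ht)).resolve_left
        (fun h => h a ⟨hat, by linarith⟩ ha) _ hy
      obtain ⟨c, hc, hcb⟩ := this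
      rw [rho_inj] at hcb
      linarith [hc.2]

/-- The image of a continuous injection is not separated by any point. If it missed a point of the
line, it would lie in the remainder `K'`, any two points of which are separated by a third. So it
contains the line, which is dense. -/
theorem surjective_of_injective (h : IsRay γ k₀) (h' : IsRay γ' k₀') (hsep : PointSep K')
    {f : W γ → W γ'} (hf : Continuous f) (hi : Function.Injective f) : Function.Surjective f := by
  have := compactSpace_W h
  have := h.pathConnectedSpace_W
  obtain ⟨k₁, k₂, hk⟩ := exists_pair_ne K
  have hne : kap γ k₁ ≠ kap γ k₂ := by rwa [Ne, kap_inj]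
  have hC := isPreconnected_range_diff h.isPreconnected_compl_singleton hf hi
  have hsub : range (rho γ') ⊆ range f := by
    rintro _ ⟨t, rfl⟩
    by_contra ht
    have hnt : (range f).Nontrivial := ⟨_, ⟨kap γ k₁, rfl⟩, _, ⟨kap γ k₂, rfl⟩, hi.ne hne⟩
    have hno := h'.rho_notMem_of_rho_notMem hC hnt ht
    have hf' : ∀ w, f w = kap γ' (f w).1.1 := by
      intro w
      rcases W_cases (f w) with ⟨s, hs⟩ | ⟨k, hk⟩
      · exact (hno s ⟨w, hs⟩).elim
      · rw [hk]; rfl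
    let g : W γ → K' := fun w => (f w).1.1
    have hg : Continuous g := continuous_fst.comp (continuous_subtype_val.comp hf)
    have hgi : Function.Injective g := fun x y hxy => hi (by
      rw [hf' x, hf' y, kap_inj]; exact hxy)
    obtain ⟨p, U, V, hU, hV, hUV, hp, ha, hb⟩ := hsep _ _ (hgi.ne hne)
    have hpU : ∀ x ∈ U ∪ V, x ≠ p := fun x hx => by rw [hp] at hx; exact hx
    obtain ⟨x, hx, hx1, hx2⟩ := isPreconnected_range_diff h.isPreconnected_compl_singleton hg hgi p
      U V hU hV (by rw [hp]; exact fun x hx => hx.2)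
      ⟨_, ⟨⟨_, rfl⟩, hpU _ (Or.inl ha)⟩, ha⟩ ⟨_, ⟨⟨_, rfl⟩, hpU _ (Or.inr hb)⟩, hb⟩
    exact disjoint_left.1 hUV hx1 hx2
  rw [← range_eq_univ, ← univ_subset_iff, ← h'.dense_rho.closure_eq]
  exact closure_minimal hsub (isCompact_range hf).isClosed

theorem image_Core {X Y : Type} [TopologicalSpace X] [TopologicalSpace Y] (e : X ≃ₜ Y) :
    e '' Core X = Core Y := by
  have key : ∀ {X Y : Type} [TopologicalSpace X] [TopologicalSpace Y] (e : X ≃ₜ Y) (x : X),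
      x ∈ Core X → e x ∈ Core Y := by
    intro X Y _ _ e x hx y
    have := (hx (e.symm y)).image e e.continuous.continuousOn
    rwa [image_compl_eq e.bijective, image_pair, e.apply_symm_apply] at this
  ext y
  constructor
  · rintro ⟨x, hx, rfl⟩; exact key e x hx
  · intro hy; exact ⟨e.symm y, key e.symm y hy, e.apply_symm_apply y⟩

/-- A continuous injection is a homeomorphism, hence it carries the core, and its closure `K`, onto
those of the target. -/
theorem nonempty_homeomorph_of_injective [CompactSpace K'] [ConnectedSpace K'] [Nontrivial K']
    (h : IsRay γ k₀) (h' : IsRay γ' k₀')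
    (hsep : PointSep K') {f : W γ → W γ'} (hf : Continuous f) (hi : Function.Injective f) :
    Nonempty (K ≃ₜ K') := by
  have := compactSpace_W h
  let e : W γ ≃ₜ W γ' := hf.homeoOfEquivCompactToT2
    (f := Equiv.ofBijective f ⟨hi, surjective_of_injective h h' hsep hf hi⟩)
  have he : e '' range (kap γ) = range (kap γ') := by
    rw [← h.closure_Core, ← h'.closure_Core, e.image_closure, image_Core]
  have hek : ∀ k, e (kap γ k) = kap γ' (e (kap γ k)).1.1 := by
    intro k
    have : e (kap γ k) ∈ range (kap γ') := he ▸ mem_image_of_mem _ ⟨k, rfl⟩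
    obtain ⟨k', hk'⟩ := this
    rw [← hk']; rfl
  let g : K → K' := fun k => (e (kap γ k)).1.1
  have hg : Continuous g :=
    continuous_fst.comp (continuous_subtype_val.comp (e.continuous.comp (continuous_kap γ)))
  have hb : Function.Bijective g := by
    constructor
    · intro x y hxy
      have : e (kap γ x) = e (kap γ y) := by rw [hek x, hek y, kap_inj]; exact hxy
      exact kap_inj.1 (e.injective this)
    · intro k'
      have : kap γ' k' ∈ e '' range (kap γ) := he ▸ ⟨k', rfl⟩
      obtain ⟨_, ⟨k, rfl⟩, hk⟩ := this
      exact ⟨k, by rw [hek k, kap_inj] at hk; exact hk⟩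
  exact ⟨hg.homeoOfEquivCompactToT2 (f := Equiv.ofBijective g hb)⟩

end

end RaySpace

namespace CombSpace

open Set Filter

/-! ### The order of a point -/

/-- The complement of `x` has exactly `ι`-many components, all of them open. -/
def HasOrder {X : Type} [TopologicalSpace X] (x : X) (ι : Type) : Prop :=
  ∃ U : ι → Set X, (∀ i, IsOpen (U i) ∧ IsConnected (U i)) ∧
    (∀ i j, i ≠ j → Disjoint (U i) (U j)) ∧ ⋃ i, U i = {x}ᶜ

theorem HasOrder.map {X Y : Type} [TopologicalSpace X] [TopologicalSpace Y] {x : X} {ι : Type}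
    (h : HasOrder x ι) (e : X ≃ₜ Y) : HasOrder (e x) ι := by
  obtain ⟨U, h1, h2, h3⟩ := h
  refine ⟨fun i => e '' U i, fun i => ⟨e.isOpenMap _ (h1 i).1,
    (h1 i).2.image _ e.continuous.continuousOn⟩, fun i j hij => ?_, ?_⟩
  · exact (disjoint_image_iff e.injective).2 (h2 i j hij)
  · rw [← image_iUnion, h3, image_compl_eq e.bijective, image_singleton]

/-- A cover of the complement of `x` by preconnected sets has at least as many members as there are
components. -/
theorem HasOrder.card_le {X : Type} [TopologicalSpace X] {x : X} {ι κ : Type} [Finite κ]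
    (h : HasOrder x ι) {C : κ → Set X} (hC : ∀ k, IsPreconnected (C k)) (hx : ⋃ k, C k = {x}ᶜ) :
    Nat.card ι ≤ Nat.card κ := by
  obtain ⟨U, h1, h2, h3⟩ := h
  have : ∀ i, ∃ k, (U i ∩ C k).Nonempty := by
    intro i
    obtain ⟨y, hy⟩ := (h1 i).2.nonempty
    have : y ∈ ⋃ k, C k := by rw [hx, ← h3]; exact mem_iUnion.2 ⟨i, hy⟩
    obtain ⟨k, hk⟩ := mem_iUnion.1 this
    exact ⟨k, y, hy, hk⟩
  choose m hm using this
  refine Nat.card_le_card_of_injective m fun i j hij => ?_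
  by_contra hne
  obtain ⟨y, hy, hy1, hy2⟩ := hC (m i) (U i) (⋃ l ∈ {l | l ≠ i}, U l) (h1 i).1
    (isOpen_biUnion fun l _ => (h1 l).1) (by
      intro z hz
      have : z ∈ ⋃ i, U i := by rw [h3, ← hx]; exact mem_iUnion.2 ⟨_, hz⟩
      obtain ⟨l, hl⟩ := mem_iUnion.1 this
      by_cases hli : l = i
      · exact Or.inl (hli ▸ hl)
      · exact Or.inr (mem_biUnion (show l ∈ {l | l ≠ i} from hli) hl))
    (by rw [inter_comm]; exact hm i) (by
      obtain ⟨z, hz, hz'⟩ := hm j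
      exact ⟨z, hij ▸ hz', mem_biUnion (show j ∈ {l | l ≠ i} from Ne.symm hne) hz⟩)
  obtain ⟨l, hl, hly⟩ := mem_iUnion₂.1 hy2
  exact disjoint_left.1 (h2 l i hl) hly hy1

/-! ### Combs -/

/-- The comb with spine `[0, 1]` and a tooth of length `1` attached at `β e` for every `e : E`.
A point is given by its projection to the spine and its heights on all teeth, at most one of which
is nonzero; in the product topology all but finitely many teeth are small. -/
abbrev Comb {E : Type} (β : E → ℝ) : Type :=
  {p : ℝ × (E → ℝ) // p.1 ∈ Icc (0 : ℝ) 1 ∧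
    (∀ e, p.2 e ∈ Icc (0 : ℝ) 1 ∧ (p.2 e = 0 ∨ p.1 = β e)) ∧
    ∀ e e', e ≠ e' → p.2 e = 0 ∨ p.2 e' = 0}

variable {E : Type} {β : E → ℝ}

instance : CompactSpace (Comb β) := by
  suffices h : IsCompact {p : ℝ × (E → ℝ) | p.1 ∈ Icc (0 : ℝ) 1 ∧
      (∀ e, p.2 e ∈ Icc (0 : ℝ) 1 ∧ (p.2 e = 0 ∨ p.1 = β e)) ∧
      ∀ e e', e ≠ e' → p.2 e = 0 ∨ p.2 e' = 0} from isCompact_iff_compactSpace.1 h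
  have hK : IsCompact (Icc (0 : ℝ) 1 ×ˢ univ.pi fun _ : E => Icc (0 : ℝ) 1) :=
    isCompact_Icc.prod (isCompact_univ_pi fun _ => isCompact_Icc)
  refine hK.of_isClosed_subset ?_ ?_
  · refine (isClosed_Icc.preimage continuous_fst).inter (IsClosed.inter ?_ ?_)
    · have : ∀ e, IsClosed {p : ℝ × (E → ℝ) | p.2 e ∈ Icc (0 : ℝ) 1 ∧ (p.2 e = 0 ∨ p.1 = β e)} := by
        intro e
        refine (isClosed_Icc.preimage (by fun_prop)).inter (IsClosed.union ?_ ?_)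
        · exact isClosed_eq (by fun_prop) (by fun_prop)
        · exact isClosed_eq (by fun_prop) (by fun_prop)
      have h := isClosed_iInter this
      rw [show (⋂ e, {p : ℝ × (E → ℝ) | p.2 e ∈ Icc (0 : ℝ) 1 ∧ (p.2 e = 0 ∨ p.1 = β e)}) =
        {p | ∀ e, p.2 e ∈ Icc (0 : ℝ) 1 ∧ (p.2 e = 0 ∨ p.1 = β e)} by ext p; simp] at h
      exact h
    · have : ∀ e e', IsClosed {p : ℝ × (E → ℝ) | e ≠ e' → p.2 e = 0 ∨ p.2 e' = 0} := by
        intro e e'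
        by_cases h : e = e'
        · simp [h]
        · simp only [ne_eq, h, not_false_eq_true, true_imp_iff]
          refine IsClosed.union ?_ ?_
          · exact isClosed_eq (by fun_prop) (by fun_prop)
          · exact isClosed_eq (by fun_prop) (by fun_prop)
      have h := isClosed_iInter fun e => isClosed_iInter (this e)
      rw [show (⋂ e, ⋂ e', {p : ℝ × (E → ℝ) | e ≠ e' → p.2 e = 0 ∨ p.2 e' = 0}) =
        {p | ∀ e e', e ≠ e' → p.2 e = 0 ∨ p.2 e' = 0} by ext p; simp] at h
      exact h
  · rintro p ⟨h1, h2, _⟩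
    exact ⟨h1, fun e _ => (h2 e).1⟩

/-- The projection to the spine. -/
def base (z : Comb β) : ℝ := z.1.1

/-- The height on the tooth `e`. -/
def height (e : E) (z : Comb β) : ℝ := z.1.2 e

theorem continuous_base : Continuous (base : Comb β → ℝ) := by unfold base; fun_prop

theorem continuous_height (e : E) : Continuous (height e : Comb β → ℝ) := by
  unfold height; fun_prop

theorem ext_comb {y z : Comb β} (h1 : base y = base z) (h2 : ∀ e, height e y = height e z) :
    y = z := Subtype.ext (Prod.ext h1 (funext h2))

theorem base_mem (z : Comb β) : base z ∈ Icc (0 : ℝ) 1 := z.2.1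

theorem height_mem (e : E) (z : Comb β) : height e z ∈ Icc (0 : ℝ) 1 := (z.2.2.1 e).1

theorem height_eq_zero_or (e : E) (z : Comb β) : height e z = 0 ∨ base z = β e := (z.2.2.1 e).2

theorem height_disj {d e : E} (h : d ≠ e) (z : Comb β) : height d z = 0 ∨ height e z = 0 :=
  z.2.2.2 d e h

/-- The points of the spine. -/
def spine (β : E → ℝ) (s : unitInterval) : Comb β :=
  ⟨(s, 0), s.2, fun e => ⟨by simp, Or.inl rfl⟩, fun _ _ _ => Or.inl rfl⟩

theorem continuous_spine : Continuous (spine β) := by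
  unfold spine; fun_prop

@[simp] theorem base_spine (s : unitInterval) : base (spine β s) = s := rfl

@[simp] theorem height_spine (e : E) (s : unitInterval) : height e (spine β s) = 0 := rfl

/-- Multiplication of all heights by `r`. -/
def scale (r : unitInterval) (z : Comb β) : Comb β :=
  ⟨(z.1.1, fun e => r * z.1.2 e), z.2.1, fun e => ⟨⟨mul_nonneg r.2.1 (height_mem e z).1,
    mul_le_one₀ r.2.2 (height_mem e z).1 (height_mem e z).2⟩,
    (height_eq_zero_or e z).imp (fun h => by
      change (r : ℝ) * height e z = 0
      rw [h, mul_zero]) id⟩,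
    fun e e' h => (height_disj h z).imp (fun h => by
      change (r : ℝ) * height e z = 0
      rw [h, mul_zero]) (fun h => by
      change (r : ℝ) * height e' z = 0
      rw [h, mul_zero])⟩

theorem continuous_scale (z : Comb β) : Continuous fun r => scale r z := by
  unfold scale; fun_prop

@[simp] theorem base_scale (r : unitInterval) (z : Comb β) : base (scale r z) = base z := rfl

@[simp] theorem height_scale (e : E) (r : unitInterval) (z : Comb β) :
    height e (scale r z) = r * height e z := rfl

theorem scale_one (z : Comb β) : scale 1 z = z := ext_comb rfl fun e => by simp

theorem scale_zero (z : Comb β) : scale 0 z = spine β ⟨base z, base_mem z⟩ :=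
  ext_comb rfl fun e => by simp

open Classical in
/-- The point at height `s` on the tooth `e`. -/
noncomputable def tooth (hβ : ∀ e, β e ∈ Icc (0 : ℝ) 1) (e : E) (s : unitInterval) : Comb β :=
  ⟨(β e, fun e' => if e' = e then (s : ℝ) else 0), hβ e, fun e' => by
    dsimp only
    split_ifs with h
    · exact ⟨s.2, Or.inr (h ▸ rfl)⟩
    · simp, fun e₁ e₂ h => by
    dsimp only
    by_cases h1 : e₁ = e
    · right; rw [if_neg]; rintro rfl; exact h h1
    · left; rw [if_neg h1]⟩

theorem continuous_tooth (hβ : ∀ e, β e ∈ Icc (0 : ℝ) 1) (e : E) : Continuous (tooth hβ e) := by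
  refine Continuous.subtype_mk (continuous_const.prodMk (continuous_pi fun e' => ?_)) _
  split_ifs <;> fun_prop

@[simp] theorem base_tooth (hβ : ∀ e, β e ∈ Icc (0 : ℝ) 1) (e : E) (s : unitInterval) :
    base (tooth hβ e s) = β e := rfl

@[simp] theorem height_tooth_self (hβ : ∀ e, β e ∈ Icc (0 : ℝ) 1) (e : E) (s : unitInterval) :
    height e (tooth hβ e s) = s := by simp [tooth, height]

theorem height_tooth_of_ne (hβ : ∀ e, β e ∈ Icc (0 : ℝ) 1) {e e' : E} (h : e' ≠ e)
    (s : unitInterval) : height e' (tooth hβ e s) = 0 := by simp [tooth, height, h]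

theorem eq_spine_of_height {z : Comb β} (h : ∀ e, height e z = 0) :
    z = spine β ⟨base z, base_mem z⟩ := ext_comb rfl h

theorem eq_tooth_of_height (hβ : ∀ e, β e ∈ Icc (0 : ℝ) 1) {z : Comb β} {e : E}
    (h : height e z ≠ 0) : z = tooth hβ e ⟨height e z, height_mem e z⟩ := by
  refine ext_comb ((height_eq_zero_or e z).resolve_left h) fun e' => ?_
  by_cases he : e' = e
  · subst he; simp
  · rw [height_tooth_of_ne hβ he]; exact (height_disj he z).resolve_right h

theorem height_pos_iff {e : E} {z : Comb β} : 0 < height e z ↔ height e z ≠ 0 :=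
  (height_mem e z).1.lt_iff_ne'

instance : PathConnectedSpace (Comb β) := by
  have : PathConnectedSpace unitInterval := isPathConnected_iff_pathConnectedSpace.1
    ((convex_Icc (0 : ℝ) 1).isPathConnected ⟨0, by simp⟩)
  have : ∀ z : Comb β, Joined (spine β 0) z := by
    intro z
    have h1 : Joined (spine β 0) (spine β ⟨base z, base_mem z⟩) :=
      (PathConnectedSpace.joined (0 : unitInterval) _).map continuous_spine
    have h2 := (PathConnectedSpace.joined (0 : unitInterval) 1).map (continuous_scale z)
    rw [scale_zero, scale_one] at h2
    exact h1.trans h2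
  exact ⟨⟨spine β 0⟩, fun x y => (this x).symm.trans (this y)⟩

instance : Nontrivial (Comb β) :=
  ⟨spine β 0, spine β 1, fun h => by simpa using congrArg base h⟩

/-- A subset of the comb closed under lowering heights is connected as soon as its trace on the
spine is. -/
theorem isPreconnected_of_scale {Z : Set (Comb β)} {J : Set unitInterval} (hJ : IsPreconnected J)
    (h1 : ∀ z ∈ Z, ⟨base z, base_mem z⟩ ∈ J) (h2 : ∀ s ∈ J, spine β s ∈ Z)
    (h3 : ∀ z ∈ Z, ∀ r, scale r z ∈ Z) : IsPreconnected Z := by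
  rcases Z.eq_empty_or_nonempty with rfl | ⟨z₀, hz₀⟩
  · exact isPreconnected_empty
  refine isPreconnected_of_forall (spine β ⟨base z₀, base_mem z₀⟩) fun z hz => ?_
  refine ⟨spine β '' J ∪ range (fun r => scale r z), ?_, Or.inl ⟨_, h1 _ hz₀, rfl⟩,
    Or.inr ⟨1, scale_one z⟩, ?_⟩
  · rintro _ (⟨s, hs, rfl⟩ | ⟨r, rfl⟩)
    · exact h2 s hs
    · exact h3 z hz r
  · exact (hJ.image _ continuous_spine.continuousOn).union (spine β ⟨base z, base_mem z⟩)
      ⟨_, h1 z hz, rfl⟩ ⟨0, scale_zero z⟩ (isPreconnected_range (continuous_scale z))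

theorem isPreconnected_base_lt (s : ℝ) : IsPreconnected {z : Comb β | base z < s} := by
  refine isPreconnected_of_scale (J := {t : unitInterval | (t : ℝ) < s}) ?_ (fun z hz => hz)
    (fun s hs => hs) (fun z hz r => hz)
  exact (ordConnected_Iio.preimage_mono (f := ((↑) : unitInterval → ℝ))
    (fun _ _ h => h)).isPreconnected

theorem isPreconnected_base_gt (s : ℝ) : IsPreconnected {z : Comb β | s < base z} := by
  refine isPreconnected_of_scale (J := {t : unitInterval | s < (t : ℝ)}) ?_ (fun z hz => hz)
    (fun s hs => hs) (fun z hz r => hz)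
  exact (ordConnected_Ioi.preimage_mono (f := ((↑) : unitInterval → ℝ))
    (fun _ _ h => h)).isPreconnected

theorem isPreconnected_height_lt (e : E) {s : ℝ} (hs : 0 < s) :
    IsPreconnected {z : Comb β | height e z < s} := by
  refine isPreconnected_of_scale (J := univ) isPreconnected_univ (fun z _ => mem_univ _)
    (fun t _ => hs) (fun z hz r => ?_)
  exact (mul_le_of_le_one_left (height_mem e z).1 r.2.2).trans_lt hz

theorem isPreconnected_height_gt (hβ : ∀ e, β e ∈ Icc (0 : ℝ) 1) (e : E) {s : ℝ} (hs : 0 ≤ s) :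
    IsPreconnected {z : Comb β | s < height e z} := by
  have : {z : Comb β | s < height e z} = tooth hβ e '' {t : unitInterval | s < (t : ℝ)} := by
    ext z
    constructor
    · intro hz
      exact ⟨⟨height e z, height_mem e z⟩, hz,
        (eq_tooth_of_height hβ (hs.trans_lt hz).ne').symm⟩
    · rintro ⟨t, ht, rfl⟩
      simpa using ht
  rw [this]
  exact (ordConnected_Ioi.preimage_mono (f := ((↑) : unitInterval → ℝ))
    (fun _ _ h => h)).isPreconnected.image _ (continuous_tooth hβ e).continuousOn

/-- Points at different heights on a tooth are separated by an intermediate point of that tooth;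
points with different projections by a point of the spine that is not a hub. -/
theorem pointSep [Countable E] (hβ : ∀ e, β e ∈ Icc (0 : ℝ) 1) :
    RaySpace.PointSep (Comb β) := by
  have symm : ∀ {a b : Comb β}, (∃ (p : Comb β) (U V : Set (Comb β)), IsOpen U ∧ IsOpen V ∧
      Disjoint U V ∧ U ∪ V = {p}ᶜ ∧ a ∈ U ∧ b ∈ V) → ∃ (p : Comb β) (U V : Set (Comb β)),
      IsOpen U ∧ IsOpen V ∧ Disjoint U V ∧ U ∪ V = {p}ᶜ ∧ b ∈ U ∧ a ∈ V := by
    rintro a b ⟨p, U, V, h1, h2, h3, h4, h5, h6⟩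
    exact ⟨p, V, U, h2, h1, h3.symm, by rw [union_comm, h4], h6, h5⟩
  have main : ∀ (g : Comb β → ℝ) (_ : Continuous g) (a b p : Comb β) (_ : g a < g p)
      (_ : g p < g b) (_ : ∀ z, g z = g p → z = p), ∃ (p : Comb β) (U V : Set (Comb β)),
      IsOpen U ∧ IsOpen V ∧ Disjoint U V ∧ U ∪ V = {p}ᶜ ∧ a ∈ U ∧ b ∈ V := by
    intro g hg a b p h1 h2 h3
    refine ⟨p, {z | g z < g p}, {z | g p < g z}, isOpen_lt hg continuous_const,
      isOpen_lt continuous_const hg, ?_, ?_, h1, h2⟩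
    · exact disjoint_left.2 fun z hz hz' => lt_asymm (show g z < g p from hz) hz'
    · ext z
      change g z < g p ∨ g p < g z ↔ z ≠ p
      rw [← ne_iff_lt_or_gt]
      exact ⟨fun h h' => h (h' ▸ rfl), fun h h' => h (h3 z h')⟩
  have hheight : ∀ (e : E) (a b : Comb β), height e a < height e b →
      ∃ (p : Comb β) (U V : Set (Comb β)),
      IsOpen U ∧ IsOpen V ∧ Disjoint U V ∧ U ∪ V = {p}ᶜ ∧ a ∈ U ∧ b ∈ V := by
    intro e a b h
    obtain ⟨s, hs1, hs2⟩ := exists_between h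
    have hs0 : 0 < s := (height_mem e a).1.trans_lt hs1
    have hsI : s ∈ unitInterval := ⟨hs0.le, hs2.le.trans (height_mem e b).2⟩
    refine main (height e) (continuous_height e) a b (tooth hβ e ⟨s, hsI⟩) (by simpa) (by simpa) ?_
    intro z hz
    rw [height_tooth_self] at hz
    have := eq_tooth_of_height hβ (z := z) (e := e) (by rw [hz]; exact hs0.ne')
    rw [this]
    congr
  -- A point of the spine at which no tooth is attached separates what lies on either side.
  have hbase : ∀ (a b : Comb β), base a < base b →
      ∃ (p : Comb β) (U V : Set (Comb β)),
      IsOpen U ∧ IsOpen V ∧ Disjoint U V ∧ U ∪ V = {p}ᶜ ∧ a ∈ U ∧ b ∈ V := by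
    intro a b h
    obtain ⟨s, hs, hs1, hs2⟩ := ((countable_range β).dense_compl ℝ).exists_between h
    have hsI : s ∈ unitInterval :=
      ⟨(base_mem a).1.trans hs1.le, hs2.le.trans (base_mem b).2⟩
    refine main base continuous_base a b (spine β ⟨s, hsI⟩) (by simpa) (by simpa) ?_
    intro z hz
    rw [base_spine] at hz
    refine ext_comb (by simpa using hz) fun e => ?_
    exact (height_eq_zero_or e z).resolve_right fun h => hs ⟨e, by rw [← h, hz]⟩
  intro a b hab
  by_cases h : ∀ e, height e a = height e b
  · have : base a ≠ base b := fun h' => hab (ext_comb h' h)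
    rcases lt_or_gt_of_ne this with h' | h'
    · exact hbase a b h'
    · exact symm (hbase b a h')
  · push Not at h
    obtain ⟨e, he⟩ := h
    rcases lt_or_gt_of_ne he with hlt | hlt
    · exact hheight e a b hlt
    · exact symm (hheight e b a hlt)

/-- A point of the spine strictly between the ends has order two plus the number of teeth attached
there. -/
theorem hasOrder_spine (hβ : ∀ e, β e ∈ Icc (0 : ℝ) 1) (s : unitInterval) (hs0 : (0 : ℝ) < s)
    (hs1 : (s : ℝ) < 1) : HasOrder (spine β s) (Bool ⊕ {e // β e = s}) := by
  refine ⟨Sum.elim (fun b => if b then {z | base z < s} else {z | (s : ℝ) < base z})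
    (fun e => {z | 0 < height e.1 z}), ?_, ?_, ?_⟩
  · rintro (b | e)
    · cases b
      · exact ⟨isOpen_lt continuous_const continuous_base, ⟨spine β 1, by simpa using hs1⟩,
          isPreconnected_base_gt _⟩
      · exact ⟨isOpen_lt continuous_base continuous_const, ⟨spine β 0, by simpa using hs0⟩,
          isPreconnected_base_lt _⟩
    · exact ⟨isOpen_lt continuous_const (continuous_height _), ⟨tooth hβ e 1, by simp⟩,
        isPreconnected_height_gt hβ _ le_rfl⟩
  · have key : ∀ (e : {e // β e = s}) (z : Comb β), 0 < height e.1 z → base z = s :=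
      fun e z hz => ((height_eq_zero_or e.1 z).resolve_left hz.ne').trans e.2
    rintro (b | e) (b' | e') hne <;> rw [disjoint_left] <;> intro z hz hz'
    · cases b <;> cases b'
      · exact hne rfl
      · exact lt_asymm (show (s : ℝ) < base z from hz) hz'
      · exact lt_asymm (show base z < (s : ℝ) from hz) hz'
      · exact hne rfl
    · have := key e' z hz'
      cases b
      · exact (show (s : ℝ) < base z from hz).ne' this
      · exact (show base z < (s : ℝ) from hz).ne this
    · have := key e z hz
      cases b'
      · exact (show (s : ℝ) < base z from hz').ne' this
      · exact (show base z < (s : ℝ) from hz').ne this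
    · have : e.1 ≠ e'.1 := fun h => hne (by rw [Subtype.ext h])
      rcases height_disj this z with h | h
      · exact (show 0 < height e.1 z from hz).ne' h
      · exact (show 0 < height e'.1 z from hz').ne' h
  · ext z
    simp only [mem_iUnion, mem_compl_iff, mem_singleton_iff]
    constructor
    · rintro ⟨b | e, hz⟩ rfl
      · cases b
        · exact lt_irrefl _ (show (s : ℝ) < s from hz)
        · exact lt_irrefl _ (show (s : ℝ) < s from hz)
      · exact lt_irrefl _ (show (0 : ℝ) < 0 from hz)
    · intro hz
      rcases lt_trichotomy (base z) s with h | h | h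
      · exact ⟨Sum.inl true, h⟩
      · by_contra hno
        push Not at hno
        refine hz (ext_comb h fun e => ?_)
        by_contra he
        refine hno (Sum.inr ⟨e, ?_⟩) (height_pos_iff.2 he)
        rw [← h, (height_eq_zero_or e z).resolve_left he]
      · exact ⟨Sum.inl false, h⟩

/-- A point that is not a hub, that is, not the foot of a tooth, has order at most two. -/
theorem exists_cover_of_not_hub (hβ : ∀ e, β e ∈ Icc (0 : ℝ) 1) (z : Comb β)
    (hz : ∀ e, z ≠ spine β ⟨β e, hβ e⟩) :
    ∃ C : Bool → Set (Comb β), (∀ b, IsPreconnected (C b)) ∧ ⋃ b, C b = {z}ᶜ := by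
  have main : ∀ (g : Comb β → ℝ) (_ : IsPreconnected {y | g y < g z})
      (_ : IsPreconnected {y | g z < g y}) (_ : ∀ y, g y = g z → y = z),
      ∃ C : Bool → Set (Comb β), (∀ b, IsPreconnected (C b)) ∧ ⋃ b, C b = {z}ᶜ := by
    intro g h1 h2 h3
    refine ⟨fun b => if b then {y | g y < g z} else {y | g z < g y}, ?_, ?_⟩
    · rintro (_ | _)
      · exact h2
      · exact h1
    · ext y
      simp only [mem_iUnion, mem_compl_iff, mem_singleton_iff, Bool.exists_bool]
      change g z < g y ∨ g y < g z ↔ y ≠ z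
      rw [or_comm, ← ne_iff_lt_or_gt]
      exact ⟨fun h h' => h (h' ▸ rfl), fun h h' => h (h3 y h')⟩
  by_cases h : ∀ e, height e z = 0
  · refine main base (isPreconnected_base_lt _) (isPreconnected_base_gt _) ?_
    intro y hy
    refine ext_comb hy fun e => ?_
    rw [h e]
    refine (height_eq_zero_or e y).resolve_right fun h' => hz e (ext_comb ?_ h)
    rw [← hy, h']; rfl
  · push Not at h
    obtain ⟨e, he⟩ := h
    refine main (height e) (isPreconnected_height_lt e (height_pos_iff.2 he))
      (isPreconnected_height_gt hβ e (height_mem e z).1) ?_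
    intro y hy
    rw [eq_tooth_of_height hβ he, eq_tooth_of_height hβ (z := y) (e := e) (hy ▸ he)]
    congr

end CombSpace

namespace CombSpace

open Set Filter

/-! ### The comb coding a set of natural numbers -/

/-- The teeth of the comb coding `S`: the pair `(n, i)` with `n ∈ S` and `i ≤ n` is the `i`-th of
the `n + 1` teeth at the `n`-th hub. -/
abbrev Teeth (S : Set ℕ) : Type := {e : ℕ × ℕ // e.1 ∈ S ∧ e.2 ≤ e.1}

/-- The position `2 ^ (-n - 1)` of the `n`-th hub on the spine. -/
noncomputable def pos (n : ℕ) : ℝ := (1 / 2) ^ (n + 1)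

theorem pos_pos (n : ℕ) : 0 < pos n := by unfold pos; positivity

theorem pos_lt_one (n : ℕ) : pos n < 1 := pow_lt_one₀ (by norm_num) (by norm_num) (by simp)

theorem pos_strictAnti : StrictAnti pos := fun m n h =>
  pow_lt_pow_right_of_lt_one₀ (by norm_num) (by norm_num) (by omega)

theorem pos_mem (n : ℕ) : pos n ∈ Icc (0 : ℝ) 1 := ⟨(pos_pos n).le, (pos_lt_one n).le⟩

/-- The tooth `(n, i)` is attached at the `n`-th hub. -/
noncomputable abbrev foot (S : Set ℕ) (e : Teeth S) : ℝ := pos e.1.1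

theorem foot_mem (S : Set ℕ) (e : Teeth S) : foot S e ∈ Icc (0 : ℝ) 1 := pos_mem _

/-- The point of the spine at which the `n`-th hub sits. -/
noncomputable def hub (S : Set ℕ) (n : ℕ) : Comb (foot S) := spine (foot S) ⟨pos n, pos_mem n⟩

/-- Two components of the complement of the hub come from the spine, the others are teeth. -/
theorem exists_hasOrder_hub {S : Set ℕ} {n : ℕ} (hn : n ∈ S) :
    ∃ ι : Type, Finite ι ∧ Nat.card ι = n + 3 ∧ HasOrder (hub S n) ι := by
  let e : Fin (n + 1) ≃ {e : Teeth S // foot S e = pos n} :=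
    { toFun := fun i => ⟨⟨(n, i), hn, Nat.lt_succ_iff.1 i.2⟩, rfl⟩
      invFun := fun e => ⟨e.1.1.2, Nat.lt_succ_iff.2
        (e.1.2.2.trans_eq (pos_strictAnti.injective e.2))⟩
      left_inv := fun i => rfl
      right_inv := by
        rintro ⟨⟨⟨m, i⟩, h1, h2⟩, h3⟩
        obtain rfl : m = n := pos_strictAnti.injective h3
        rfl }
  have : Finite {e : Teeth S // foot S e = pos n} := Finite.of_equiv _ e
  refine ⟨Bool ⊕ {e : Teeth S // foot S e = pos n}, inferInstance, ?_,
    hasOrder_spine (foot_mem S) _ (pos_pos n) (pos_lt_one n)⟩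
  rw [Nat.card_sum, ← Nat.card_congr e]
  simp
  omega

/-- The set `S` can be read off from the orders of the points of its comb, since these orders are
at most two except for the order `n + 3` of the `n`-th hub, `n ∈ S`. -/
theorem subset_of_homeomorph {S T : Set ℕ} (e : Comb (foot S) ≃ₜ Comb (foot T)) : S ⊆ T := by
  intro n hn
  obtain ⟨ι, hι, hcard, hord⟩ := exists_hasOrder_hub hn
  have hord' := hord.map e
  by_cases h : ∃ d : Teeth T, e (hub S n) = spine (foot T) ⟨foot T d, foot_mem T d⟩
  · obtain ⟨⟨⟨m, i⟩, hm, him⟩, hd⟩ := h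
    change e (hub S n) = hub T m at hd
    obtain ⟨κ, hκ, hcard', hκord⟩ := exists_hasOrder_hub hm
    rw [hd] at hord'
    obtain ⟨U, hU, -, hU'⟩ := id hord'
    obtain ⟨V, hV, -, hV'⟩ := id hκord
    have h1 := hκord.card_le (fun k => (hU k).2.isPreconnected) hU'
    have h2 := hord'.card_le (fun k => (hV k).2.isPreconnected) hV'
    obtain rfl : n = m := by omega
    exact hm
  · push Not at h
    obtain ⟨C, hC, hC'⟩ := exists_cover_of_not_hub (foot_mem T) _ h
    have := hord'.card_le hC hC'
    rw [hcard, Nat.card_eq_fintype_card, Fintype.card_bool] at this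
    omega

instance (S : Set ℕ) : TopologicalSpace.SeparableSpace (Comb (foot S)) := by
  have : SecondCountableTopology (ℝ × (Teeth S → ℝ)) := inferInstance
  have : SecondCountableTopology (Comb (foot S)) :=
    IsEmbedding.subtypeVal.secondCountableTopology
  infer_instance

/-! ### Drawing the comb in the plane -/

/-- The length with which the tooth `(n, i)` is drawn. -/
noncomputable def len (e : ℕ × ℕ) : ℝ := (1 / 2) ^ (e.1 + 2) * (1 / 2) ^ e.2

/-- The slope `θ` of the tooth `(n, i)`: it is drawn in the direction of `(θ, 1)`. -/
noncomputable def slope (e : ℕ × ℕ) : ℝ := (1 / 2) ^ e.2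

theorem len_pos (e : ℕ × ℕ) : 0 < len e := by unfold len; positivity

theorem slope_pos (e : ℕ × ℕ) : 0 < slope e := by unfold slope; positivity

theorem slope_le_one (e : ℕ × ℕ) : slope e ≤ 1 := pow_le_one₀ (by norm_num) (by norm_num)

theorem slope_injective {n i j : ℕ} (h : slope (n, i) = slope (n, j)) : i = j :=
  pow_right_injective₀ (by norm_num) (by norm_num) h

theorem len_le (e : ℕ × ℕ) : len e ≤ pos e.1 / 2 := by
  have : (1 / 2 : ℝ) ^ e.2 ≤ 1 := pow_le_one₀ (by norm_num) (by norm_num)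
  have h : (0 : ℝ) ≤ (1 / 2) ^ (e.1 + 2) := by positivity
  calc len e ≤ (1 / 2) ^ (e.1 + 2) * 1 := mul_le_mul_of_nonneg_left this h
    _ = pos e.1 / 2 := by unfold pos; ring

theorem summable_len : Summable len := by
  have h : Summable fun n : ℕ => (1 / 2 : ℝ) ^ n :=
    summable_geometric_of_lt_one (by norm_num) (by norm_num)
  exact ((summable_nat_add_iff 2).2 h).mul_of_nonneg h (fun n => by positivity)
    (fun n => by positivity)

theorem pos_add_pos_le {m n : ℕ} (h : m < n) : pos n + pos n ≤ pos m := by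
  have h1 : pos n ≤ pos (m + 1) := pos_strictAnti.antitone h
  have h2 : pos (m + 1) = pos m / 2 := by unfold pos; ring
  linarith

variable {S : Set ℕ}

/-- The second coordinate of the drawing. -/
noncomputable def drawY (z : Comb (foot S)) : ℝ := ∑' e : Teeth S, len e.1 * height e z

/-- The first coordinate of the drawing; the shift by `1` makes it positive. -/
noncomputable def drawX (z : Comb (foot S)) : ℝ :=
  1 + base z + ∑' e : Teeth S, slope e.1 * (len e.1 * height e z)

theorem continuous_drawY : Continuous (drawY : Comb (foot S) → ℝ) := by
  refine continuous_tsum (fun e => continuous_const.mul (continuous_height e))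
    (summable_len.comp_injective Subtype.val_injective) fun e z => ?_
  rw [Real.norm_of_nonneg (mul_nonneg (len_pos _).le (height_mem e z).1)]
  exact mul_le_of_le_one_right (len_pos _).le (height_mem e z).2

theorem continuous_drawX : Continuous (drawX : Comb (foot S) → ℝ) := by
  refine (continuous_const.add continuous_base).add ?_
  refine continuous_tsum
    (fun e => continuous_const.mul (continuous_const.mul (continuous_height e)))
    (summable_len.comp_injective Subtype.val_injective) fun e z => ?_
  have h0 := mul_nonneg (len_pos e.1).le (height_mem e z).1
  rw [Real.norm_of_nonneg (mul_nonneg (slope_pos _).le h0)]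
  exact (mul_le_of_le_one_left h0 (slope_le_one _)).trans
    (mul_le_of_le_one_right (len_pos _).le (height_mem e z).2)

theorem drawX_pos (z : Comb (foot S)) : 0 < drawX z := by
  have h1 := (base_mem z).1
  have h2 : 0 ≤ ∑' e : Teeth S, slope e.1 * (len e.1 * height e z) := tsum_nonneg fun e =>
    mul_nonneg (slope_pos _).le (mul_nonneg (len_pos _).le (height_mem e z).1)
  unfold drawX
  linarith

theorem draw_of_spine {z : Comb (foot S)} (h : ∀ e, height e z = 0) :
    drawX z = 1 + base z ∧ drawY z = 0 := by
  simp [drawX, drawY, h]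

theorem draw_of_tooth {z : Comb (foot S)} {e : Teeth S} (h : height e z ≠ 0) :
    drawY z = len e.1 * height e z ∧ drawX z = 1 + pos e.1.1 + slope e.1 * drawY z := by
  have h0 : ∀ d, d ≠ e → height d z = 0 := fun d hd => (height_disj hd z).resolve_right h
  have hy : drawY z = len e.1 * height e z := tsum_eq_single e fun d hd => by rw [h0 d hd, mul_zero]
  have hb : base z = pos e.1.1 := (height_eq_zero_or e z).resolve_left h
  refine ⟨hy, ?_⟩
  rw [hy, ← hb, drawX,
    tsum_eq_single e fun d hd => by rw [h0 d hd, mul_zero, mul_zero]]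

/-- Teeth at one hub have different slopes, and teeth at different hubs are too short to meet. -/
theorem draw_injective {y z : Comb (foot S)} (hX : drawX y = drawX z) (hY : drawY y = drawY z) :
    y = z := by
  have hpos : ∀ {z : Comb (foot S)} {e : Teeth S}, height e z ≠ 0 →
      0 < drawY z ∧ drawY z ≤ pos e.1.1 / 2 := by
    intro z e h
    have h1 := height_pos_iff.2 h
    rw [(draw_of_tooth h).1]
    exact ⟨mul_pos (len_pos _) h1,
      (mul_le_of_le_one_right (len_pos _).le (height_mem e z).2).trans (len_le _)⟩
  by_cases hy : ∀ e, height e y = 0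
  · by_cases hz : ∀ e, height e z = 0
    · refine ext_comb ?_ fun e => by rw [hy, hz]
      have h1 := (draw_of_spine hy).1
      have h2 := (draw_of_spine hz).1
      linarith
    · push Not at hz
      obtain ⟨e, he⟩ := hz
      have h1 := (draw_of_spine hy).2
      have h2 := (hpos he).1
      linarith
  push Not at hy
  obtain ⟨d, hd⟩ := hy
  by_cases hz : ∀ e, height e z = 0
  · have h1 := (draw_of_spine hz).2
    have h2 := (hpos hd).1
    linarith
  push Not at hz
  obtain ⟨e, he⟩ := hz
  obtain ⟨hd0, hd1⟩ := hpos hd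
  obtain ⟨he0, he1⟩ := hpos he
  obtain ⟨hdY, hdX⟩ := draw_of_tooth hd
  obtain ⟨heY, heX⟩ := draw_of_tooth he
  have hdm := mul_le_of_le_one_left hd0.le (slope_le_one d.1)
  have hem := mul_le_of_le_one_left he0.le (slope_le_one e.1)
  have hdp := mul_pos (slope_pos d.1) hd0
  have hep := mul_pos (slope_pos e.1) he0
  have hde : d = e := by
    rcases lt_trichotomy d.1.1 e.1.1 with h | h | h
    · have h1 := pos_add_pos_le h
      have h2 := pos_pos e.1.1
      linarith
    · obtain ⟨⟨n, i⟩, h1⟩ := d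
      obtain ⟨⟨m, j⟩, h2⟩ := e
      obtain rfl : n = m := h
      have : slope (n, i) = slope (n, j) := by
        refine mul_right_cancel₀ hd0.ne' ?_
        rw [hY] at hdX ⊢
        simp only at hdX heX
        linarith
      obtain rfl := slope_injective this
      rfl
    · have h1 := pos_add_pos_le h
      have h2 := pos_pos d.1.1
      linarith
  subst hde
  have hh : height d y = height d z :=
    mul_left_cancel₀ (len_pos d.1).ne' (by rw [← hdY, ← heY, hY])
  rw [eq_tooth_of_height (foot_mem S) hd, eq_tooth_of_height (foot_mem S) he]
  congr

end CombSpace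

namespace RaySpace

open Set Filter OnePoint

/-! ### Rotating a planar set about an axis -/

/-- The stereographic parametrization of the circle, first coordinate. -/
noncomputable def circX (θ : OnePoint ℝ) : ℝ := θ.elim 1 fun t => (t ^ 2 - 1) / (t ^ 2 + 1)

/-- The stereographic parametrization of the circle, second coordinate. -/
noncomputable def circY (θ : OnePoint ℝ) : ℝ := θ.elim 0 fun t => 2 * t / (t ^ 2 + 1)

theorem circ_sq (θ : OnePoint ℝ) : circX θ ^ 2 + circY θ ^ 2 = 1 := by
  induction θ using OnePoint.rec with
  | infty => simp [circX, circY]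
  | coe t =>
    simp only [circX, circY, OnePoint.elim_some]
    have : t ^ 2 + 1 ≠ 0 := by positivity
    field_simp
    ring

theorem tendsto_inv_sq_cocompact :
    Tendsto (fun t : ℝ => (t ^ 2 + 1)⁻¹) (coclosedCompact ℝ) (𝓝 0) := by
  rw [coclosedCompact_eq_cocompact]
  refine tendsto_inv_atTop_zero.comp (tendsto_atTop_add_const_right _ 1 ?_)
  have := (tendsto_pow_atTop (α := ℝ) two_ne_zero).comp (tendsto_norm_cocompact_atTop (E := ℝ))
  refine this.congr fun t => ?_
  simp

theorem continuous_circX : Continuous circX := by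
  rw [OnePoint.continuous_iff]
  simp only [circX, OnePoint.elim_some, OnePoint.elim_infty]
  constructor
  · have := (tendsto_inv_sq_cocompact.const_mul 2).const_sub 1
    simp only [mul_zero, sub_zero] at this
    refine this.congr fun t => ?_
    have : t ^ 2 + 1 ≠ 0 := by positivity
    field_simp
    ring
  · exact Continuous.div (by fun_prop) (by fun_prop) fun t => by positivity

theorem continuous_circY : Continuous circY := by
  rw [OnePoint.continuous_iff]
  simp only [circY, OnePoint.elim_some, OnePoint.elim_infty]
  constructor
  · -- The square of this coordinate is `1 - x ^ 2`, and `x` tends to `1`.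
    have h := ((OnePoint.continuous_iff _).1 continuous_circX).1.pow 2 |>.const_sub 1
    simp only [circX, OnePoint.elim_infty, one_pow, sub_self] at h
    have h2 := h.sqrt
    rw [Real.sqrt_zero] at h2
    refine tendsto_zero_iff_abs_tendsto_zero _ |>.2 (h2.congr fun t => ?_)
    rw [Function.comp, ← Real.sqrt_sq_eq_abs]
    have := circ_sq t
    simp only [circX, circY, OnePoint.elim_some] at this ⊢
    congr 1
    linarith
  · exact Continuous.div (by fun_prop) (by fun_prop) fun t => by positivity

theorem circ_injective {θ η : OnePoint ℝ} (hx : circX θ = circX η) (hy : circY θ = circY η) :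
    θ = η := by
  have h1 : ∀ t : ℝ, circX t ≠ 1 := by
    intro t
    simp only [circX, OnePoint.elim_some]
    intro h
    rw [div_eq_one_iff_eq (by positivity)] at h
    linarith
  have h2 : ∀ t : ℝ, t * (1 - circX t) = circY t := by
    intro t
    simp only [circX, circY, OnePoint.elim_some]
    have : t ^ 2 + 1 ≠ 0 := by positivity
    field_simp
    ring
  induction θ using OnePoint.rec with
  | infty =>
    induction η using OnePoint.rec with
    | infty => rfl
    | coe t => exact (h1 t hx.symm).elim
  | coe s =>
    induction η using OnePoint.rec with
    | infty => exact (h1 s hx).elim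
    | coe t =>
      have : (1 - circX s) ≠ 0 := sub_ne_zero.2 (h1 s).symm
      have : s = t := mul_right_cancel₀ this (by rw [h2, hx, h2, hy])
      rw [this]

/-- A point `(x, y)` of the half-plane `x > 0` is rotated about the axis `x = 0` by an angle that
depends on `θ`. -/
noncomputable def rot (x y : ℝ) (θ : OnePoint ℝ) : EuclideanSpace ℝ (Fin 3) :=
  !₂[x * circX θ, x * circY θ, y]

theorem rot_injective {x x' y y' : ℝ} {θ θ' : OnePoint ℝ} (hx : 0 < x) (hx' : 0 < x')
    (h : rot x y θ = rot x' y' θ') : x = x' ∧ y = y' ∧ θ = θ' := by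
  have h0 : x * circX θ = x' * circX θ' := by simpa [rot] using congrArg (fun v => v 0) h
  have h1 : x * circY θ = x' * circY θ' := by simpa [rot] using congrArg (fun v => v 1) h
  have h2 : y = y' := by simpa [rot] using congrArg (fun v => v 2) h
  have hsq : x ^ 2 = x' ^ 2 := by
    calc x ^ 2 = (x * circX θ) ^ 2 + (x * circY θ) ^ 2 := by
          rw [mul_pow, mul_pow, ← mul_add, circ_sq, mul_one]
      _ = x' ^ 2 := by rw [h0, h1, mul_pow, mul_pow, ← mul_add, circ_sq, mul_one]
  obtain rfl : x = x' := (pow_left_inj₀ hx.le hx'.le two_ne_zero).1 hsq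
  have hne := hx.ne'
  exact ⟨rfl, h2, circ_injective (mul_left_cancel₀ hne h0) (mul_left_cancel₀ hne h1)⟩

/-- If `K` injects continuously into a half-plane by `(X, Y)`, then `W γ`, a subspace of the product
of `K` with a circle, injects continuously into space. -/
theorem exists_injective_W {K : Type} [TopologicalSpace K] (γ : ℝ → K) {X Y : K → ℝ}
    (hX : Continuous X) (hY : Continuous Y) (hpos : ∀ k, 0 < X k)
    (hinj : ∀ k l, X k = X l → Y k = Y l → k = l) :
    ∃ Φ : W γ → EuclideanSpace ℝ (Fin 3), Continuous Φ ∧ Function.Injective Φ := by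
  refine ⟨fun w => rot (X w.1.1) (Y w.1.1) w.1.2, ?_, fun v w h => ?_⟩
  · have h1 := continuous_circX
    have h2 := continuous_circY
    unfold rot
    refine (PiLp.continuous_toLp 2 _).comp (continuous_pi fun i => ?_)
    fin_cases i
    · change Continuous fun w : W γ => X w.1.1 * circX w.1.2
      fun_prop
    · change Continuous fun w : W γ => X w.1.1 * circY w.1.2
      fun_prop
    · change Continuous fun w : W γ => Y w.1.1
      fun_prop
  · obtain ⟨h1, h2, h3⟩ := rot_injective (hpos _) (hpos _) h
    exact Subtype.ext (Prod.ext (hinj _ _ h1 h2) h3)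

end RaySpace

open CombSpace RaySpace

/-- There exist `𝔠` incomparable path-connected compact subspaces of `ℝ³`. -/
theorem incomparable_pathconnected_compacta_in_R3 :
    ∃ (ι : Type) (A : ι → Set (EuclideanSpace ℝ (Fin 3))),
      #ι = 𝔠 ∧
      (∀ i, IsCompact (A i) ∧ IsPathConnected (A i)) ∧
      (∀ i j : ι, i ≠ j → ∀ f : ↥(A i) → ↥(A j), ¬ IsEmbedding f) := by
  have hray : ∀ S : Set ℕ, ∃ γ : ℝ → Comb (foot S), IsRay γ (spine (foot S) 0) := fun S =>
    let ⟨γ, h1, h2, h3⟩ := exists_dense_ray (Comb (foot S)) (spine (foot S) 0)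
    ⟨γ, h1, h2, h3⟩
  choose γ hγ using hray
  have hc : ∀ S, CompactSpace (W (γ S)) := fun S => compactSpace_W (hγ S)
  have hp : ∀ S, PathConnectedSpace (W (γ S)) := fun S => (hγ S).pathConnectedSpace_W
  have hemb : ∀ S,
      ∃ Φ : W (γ S) → EuclideanSpace ℝ (Fin 3), Continuous Φ ∧ Function.Injective Φ :=
    fun S => exists_injective_W (γ S) continuous_drawX continuous_drawY drawX_pos
      fun _ _ => draw_injective
  choose Φ hΦ hΦi using hemb
  refine ⟨Set ℕ, fun S => Set.range (Φ S), by simp, fun S => ⟨isCompact_range (hΦ S),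
    isPathConnected_range (hΦ S)⟩, fun S T hne f hf => hne ?_⟩
  let e : ∀ S, W (γ S) ≃ₜ Set.range (Φ S) := fun S =>
    ((hΦ S).isClosedEmbedding (hΦi S)).isEmbedding.toHomeomorph
  obtain ⟨h⟩ := nonempty_homeomorph_of_injective (hγ S) (hγ T) (pointSep (foot_mem T))
    (f := (e T).symm ∘ f ∘ e S) ((e T).symm.continuous.comp (hf.continuous.comp (e S).continuous))
    ((e T).symm.injective.comp (hf.injective.comp (e S).injective))
  exact (subset_of_homeomorph h).antisymm (subset_of_homeomorph h.symm)
end
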